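/- arXiv:1302.2638 — 2 statements merged into one kernel-verified Lean document; each statement's English description precedes it below -/
import Mathlib

section
/- Let n be a positive integer and let α₁, α₂ be real parameters with α₁ ≥ 0 and α₂ > α₁ + 3n + 1. For G drawn from the quaternion real spherical ensemble of size 2n with parameters (α₁, α₂), and for every complex number z, ⟨det(z·I − G)⟩ = Σ_{j=0}^{n} z^{2(n−j)} · ∏_{i=1}^{j} (α₁ + n + 1 − i)/(α₂ − α₁ − 2n − 1/2 + i). Equivalently, the even-degree skew orthogonal polynomial is Q_{2n}(z) = (Γ(α₁+n+1)/Γ(2n+1/2+α₁−α₂)) · Σ_{j=0}^{n} (−1)^{n−j} (Γ(n+j+1/2+α₁−α₂)/Γ(j+1+α₁)) z^{2j}. -/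
open MeasureTheory Matrix

/-- The `2n × 2n` complex matrix (indexed by `Fin n × Fin 2`) whose `(j,k)`-th `2 × 2`
block is `[[z_{jk}, w_{jk}], [-conj w_{jk}, conj z_{jk}]]`. -/
noncomputable def quatMatrix (n : ℕ) (x : Fin n → Fin n → ℂ × ℂ) :
    Matrix (Fin n × Fin 2) (Fin n × Fin 2) ℂ :=
  Matrix.of fun a b =>
    if a.2 = 0 then
      (if b.2 = 0 then (x a.1 b.1).1 else (x a.1 b.1).2)
    else
      (if b.2 = 0 then -(starRingEnd ℂ) ((x a.1 b.1).2)
        else (starRingEnd ℂ) ((x a.1 b.1).1))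

/-- The (unnormalized) density of the quaternion real spherical ensemble of size `2n`
with parameters `(α₁, α₂)`: `det(G† G)^{α₁} det(I + G† G)^{-α₂}` (both determinants
are real, so we take real parts). -/
noncomputable def quatSphericalWeight (n : ℕ) (α₁ α₂ : ℝ) (x : Fin n → Fin n → ℂ × ℂ) : ℝ :=
  (((quatMatrix n x)ᴴ * quatMatrix n x).det.re) ^ α₁ *
    ((1 + (quatMatrix n x)ᴴ * quatMatrix n x).det.re) ^ (-α₂)

/-- The sum of the squared moduli of the coordinates in `Z`. -/
noncomputable def sqSum {ι : Type*} (Z : Finset ι) (x : ι → ℂ) : ℝ := ∑ i ∈ Z, ‖x i‖ ^ 2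

theorem sqSum_nonneg {ι : Type*} (Z : Finset ι) (x : ι → ℂ) : 0 ≤ sqSum Z x :=
  Finset.sum_nonneg fun _ _ => by positivity

theorem sqSum_mono {ι : Type*} {Y Z : Finset ι} (h : Y ⊆ Z) (x : ι → ℂ) : sqSum Y x ≤ sqSum Z x :=
  Finset.sum_le_sum_of_subset_of_nonneg h fun _ _ _ => by positivity

@[fun_prop]
theorem continuous_sqSum {ι : Type*} (Z : Finset ι) : Continuous (sqSum Z) := by
  unfold sqSum; fun_prop

@[fun_prop]
theorem measurable_sqSum {ι : Type*} [Countable ι] (Z : Finset ι) : Measurable (sqSum Z) :=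
  (continuous_sqSum Z).measurable

section RadialIntegrals

variable {ι : Type*} [Fintype ι] [DecidableEq ι]

/-- Complex-linear change of variables for a Haar measure on `ι → ℂ`. -/
theorem map_mulVec_addHaar (μ : Measure (ι → ℂ)) [μ.IsAddHaarMeasure]
    (L : Matrix ι ι ℂ) (hL : L.det ≠ 0) :
    μ.map (fun v => L *ᵥ v) = ENNReal.ofReal ((‖L.det‖ ^ 2)⁻¹) • μ := by
  have hdet : LinearMap.det ((Matrix.toLin' L).restrictScalars ℝ) = ‖L.det‖ ^ 2 := by
    rw [LinearMap.det_restrictScalars, LinearMap.det_toLin', Algebra.norm_complex_apply,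
      Complex.normSq_eq_norm_sq]
  have h := Measure.map_linearMap_addHaar_eq_smul_addHaar μ
    (f := (Matrix.toLin' L).restrictScalars ℝ) (by rw [hdet]; positivity)
  rw [hdet, abs_of_nonneg (by positivity)] at h
  exact h

theorem measurableEmbedding_mulVec (L : Matrix ι ι ℂ) (hL : L.det ≠ 0) :
    MeasurableEmbedding (fun v => L *ᵥ v) := by
  have hc : Continuous (fun v : ι → ℂ => L *ᵥ v) := by fun_prop
  exact hc.measurableEmbedding (Matrix.mulVec_injective_of_isUnit
    ((Matrix.isUnit_iff_isUnit_det L).2 hL.isUnit))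

theorem lintegral_comp_mulVec (μ : Measure (ι → ℂ)) [μ.IsAddHaarMeasure]
    (L : Matrix ι ι ℂ) (hL : L.det ≠ 0) (f : (ι → ℂ) → ENNReal) :
    ∫⁻ v, f (L *ᵥ v) ∂μ = ENNReal.ofReal ((‖L.det‖ ^ 2)⁻¹) * ∫⁻ v, f v ∂μ := by
  rw [← (measurableEmbedding_mulVec L hL).lintegral_map f, map_mulVec_addHaar μ L hL,
    lintegral_smul_measure, smul_eq_mul]

theorem integral_comp_mulVec {E : Type*} [NormedAddCommGroup E] [NormedSpace ℝ E]
    (μ : Measure (ι → ℂ)) [μ.IsAddHaarMeasure]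
    (L : Matrix ι ι ℂ) (hL : L.det ≠ 0) (f : (ι → ℂ) → E) :
    ∫ v, f (L *ᵥ v) ∂μ = (‖L.det‖ ^ 2)⁻¹ • ∫ v, f v ∂μ := by
  rw [← (measurableEmbedding_mulVec L hL).integral_map f, map_mulVec_addHaar μ L hL,
    integral_smul_measure, ENNReal.toReal_ofReal (by positivity)]

theorem integrable_comp_mulVec {E : Type*} [NormedAddCommGroup E]
    {μ : Measure (ι → ℂ)} [μ.IsAddHaarMeasure]
    (L : Matrix ι ι ℂ) (hL : L.det ≠ 0) {f : (ι → ℂ) → E} (hf : Integrable f μ) :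
    Integrable (fun v => f (L *ᵥ v)) μ := by
  have h := (measurableEmbedding_mulVec L hL).integrable_map_iff (μ := μ) (g := f)
  rw [map_mulVec_addHaar μ L hL] at h
  exact h.1 (hf.smul_measure ENNReal.ofReal_ne_top)

/-- The model weight `(∑_{i ∈ Z} |x_i|²)^a (1 + ∑_i |x_i|²)^{-b}`. -/
noncomputable def radialWeight (Z : Finset ι) (a b : ℝ) (x : ι → ℂ) : ℝ :=
  sqSum Z x ^ a * (1 + sqSum Finset.univ x) ^ (-b)

omit [DecidableEq ι] in
theorem radialWeight_nonneg (Z : Finset ι) (a b : ℝ) (x : ι → ℂ) : 0 ≤ radialWeight Z a b x := by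
  have := sqSum_nonneg Z x
  have := sqSum_nonneg Finset.univ x
  unfold radialWeight; positivity

omit [DecidableEq ι] in
@[fun_prop]
theorem measurable_radialWeight (Z : Finset ι) (a b : ℝ) : Measurable (radialWeight Z a b) := by
  unfold radialWeight; fun_prop

omit [DecidableEq ι] in
theorem radialWeight_le (Z : Finset ι) {a : ℝ} (ha : 0 ≤ a) (b : ℝ) (x : ι → ℂ) :
    radialWeight Z a b x ≤ (1 + sqSum Finset.univ x) ^ (-(b - a)) := by
  have h0 := sqSum_nonneg Z x
  have h1 := sqSum_mono (Finset.subset_univ Z) x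
  have h2 : 0 < 1 + sqSum Finset.univ x := by linarith
  calc radialWeight Z a b x
      ≤ (1 + sqSum Finset.univ x) ^ a * (1 + sqSum Finset.univ x) ^ (-b) := by
        unfold radialWeight
        gcongr
        linarith
    _ = _ := by rw [← Real.rpow_add h2]; congr 1; ring

omit [DecidableEq ι] in
theorem norm_sq_le_sqSum (x : ι → ℂ) : ‖x‖ ^ 2 ≤ sqSum Finset.univ x := by
  have h : ‖x‖ ≤ √(sqSum Finset.univ x) := by
    refine (pi_norm_le_iff_of_nonneg (Real.sqrt_nonneg _)).2 fun i => Real.le_sqrt_of_sq_le ?_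
    exact Finset.single_le_sum (f := fun i => ‖x i‖ ^ 2) (fun _ _ => by positivity)
      (Finset.mem_univ i)
  calc ‖x‖ ^ 2 ≤ √(sqSum Finset.univ x) ^ 2 := by gcongr
    _ = _ := Real.sq_sqrt (sqSum_nonneg _ _)

omit [DecidableEq ι] in
theorem integrable_one_add_sqSum_rpow (μ : Measure (ι → ℂ)) [μ.IsAddHaarMeasure] {b : ℝ}
    (hb : Fintype.card ι < b) :
    Integrable (fun x : ι → ℂ => (1 + sqSum Finset.univ x) ^ (-b)) μ := by
  have hr : (Module.finrank ℝ (ι → ℂ) : ℝ) < 2 * b := by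
    rw [Module.finrank_pi_fintype]
    simp only [Complex.finrank_real_complex, Finset.sum_const, Finset.card_univ, smul_eq_mul]
    push_cast; linarith
  refine (integrable_rpow_neg_one_add_norm_sq (μ := μ) hr).mono'
    (Measurable.aestronglyMeasurable (by fun_prop)) (Filter.Eventually.of_forall fun x => ?_)
  have h1 := sqSum_nonneg Finset.univ x
  rw [Real.norm_of_nonneg (by positivity), show -(2 * b) / 2 = -b by ring]
  refine Real.rpow_le_rpow_of_nonpos (by positivity) ?_ ?_
  · linarith [norm_sq_le_sqSum x]
  · have : (0 : ℝ) ≤ Fintype.card ι := by positivity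
    linarith

omit [DecidableEq ι] in
theorem integrable_radialWeight (μ : Measure (ι → ℂ)) [μ.IsAddHaarMeasure] (Z : Finset ι)
    {a b : ℝ} (ha : 0 ≤ a) (hab : Fintype.card ι < b - a) : Integrable (radialWeight Z a b) μ :=
  (integrable_one_add_sqSum_rpow μ hab).mono' (by fun_prop)
    (Filter.Eventually.of_forall fun x => by
      rw [Real.norm_of_nonneg (radialWeight_nonneg _ _ _ _)]
      exact radialWeight_le Z ha b x)

theorem ae_apply_ne_zero (μ : Measure (ι → ℂ)) [μ.IsAddHaarMeasure] (i : ι) :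
    ∀ᵐ x ∂μ, x i ≠ 0 := by
  have h := Measure.addHaar_submodule μ
    (LinearMap.ker (LinearMap.proj (R := ℝ) (φ := fun _ : ι => ℂ) i)) (by
      intro h
      have : (Pi.single i 1 : ι → ℂ) ∈
          LinearMap.ker (LinearMap.proj (R := ℝ) (φ := fun _ : ι => ℂ) i) := by
        rw [h]; trivial
      simp at this)
  rw [ae_iff]
  convert h using 2
  ext x
  simp

theorem ae_sqSum_pos (μ : Measure (ι → ℂ)) [μ.IsAddHaarMeasure] {Z : Finset ι}
    (hZ : Z.Nonempty) : ∀ᵐ x ∂μ, 0 < sqSum Z x := by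
  obtain ⟨i, hi⟩ := hZ
  filter_upwards [ae_apply_ne_zero μ i] with x hx
  exact Finset.sum_pos' (fun _ _ => by positivity) ⟨i, hi, by positivity⟩

theorem integral_radialWeight_pos (μ : Measure (ι → ℂ)) [μ.IsAddHaarMeasure] {Z : Finset ι}
    (hZ : Z.Nonempty) {a b : ℝ} (ha : 0 ≤ a) (hab : Fintype.card ι < b - a) :
    0 < ∫ x, radialWeight Z a b x ∂μ := by
  rw [integral_pos_iff_support_of_nonneg (fun x => radialWeight_nonneg _ _ _ _)
    (integrable_radialWeight μ Z ha hab)]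
  have h : Function.support (radialWeight Z a b) =ᵐ[μ] Set.univ := by
    rw [Filter.eventuallyEq_univ]
    filter_upwards [ae_sqSum_pos μ hZ] with x hx
    have := sqSum_nonneg Finset.univ x
    have : 0 < radialWeight Z a b x := by unfold radialWeight; positivity
    exact this.ne'
  rw [measure_congr h]
  exact Measure.measure_univ_pos.2 (NeZero.ne μ)

/-- Rescaling the coordinates in `Y ⊇ Z`. -/
theorem lintegral_radialWeight_scale (μ : Measure (ι → ℂ)) [μ.IsAddHaarMeasure]
    {Y Z : Finset ι} (hZY : Z ⊆ Y) (a b : ℝ) {t : ℝ} (ht : 0 < t) :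
    ∫⁻ x, ENNReal.ofReal (sqSum Z x ^ a *
        (1 + t * sqSum Y x + sqSum Yᶜ x) ^ (-b)) ∂μ =
      ENNReal.ofReal (t ^ (-(Y.card + a))) * ∫⁻ x, ENNReal.ofReal (radialWeight Z a b x) ∂μ := by
  set L : Matrix ι ι ℂ := diagonal fun i => if i ∈ Y then (√t : ℂ) else 1 with hLdef
  have hdet : L.det = (√t : ℂ) ^ Y.card := by
    rw [hLdef, det_diagonal, Finset.prod_ite_mem, Finset.univ_inter, Finset.prod_const]
  have hst : 0 < √t := Real.sqrt_pos.2 ht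
  have hL : L.det ≠ 0 := by rw [hdet]; exact pow_ne_zero _ (by exact_mod_cast hst.ne')
  have hnorm : ‖L.det‖ ^ 2 = t ^ Y.card := by
    rw [hdet, norm_pow, Complex.norm_of_nonneg hst.le, ← pow_mul, mul_comm, pow_mul,
      Real.sq_sqrt ht.le]
  have hin : ∀ W : Finset ι, W ⊆ Y → ∀ x, sqSum W (L *ᵥ x) = t * sqSum W x := by
    intro W hW x
    unfold sqSum
    rw [Finset.mul_sum]
    refine Finset.sum_congr rfl fun i hi => ?_
    rw [hLdef, mulVec_diagonal, if_pos (hW hi), norm_mul, mul_pow, Complex.norm_of_nonneg hst.le,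
      Real.sq_sqrt ht.le]
  have hout : ∀ x, sqSum Yᶜ (L *ᵥ x) = sqSum Yᶜ x := by
    intro x
    unfold sqSum
    refine Finset.sum_congr rfl fun i hi => ?_
    rw [hLdef, mulVec_diagonal, if_neg (Finset.mem_compl.1 hi), one_mul]
  have hsplit : ∀ x : ι → ℂ, sqSum Finset.univ x = sqSum Y x + sqSum Yᶜ x := fun x =>
    (Finset.sum_add_sum_compl Y _).symm
  have key := lintegral_comp_mulVec μ L hL (fun x => ENNReal.ofReal (radialWeight Z a b x))
  have hpt : ∀ x, ENNReal.ofReal (radialWeight Z a b (L *ᵥ x)) = ENNReal.ofReal (t ^ a) *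
      ENNReal.ofReal (sqSum Z x ^ a * (1 + t * sqSum Y x + sqSum Yᶜ x) ^ (-b)) := by
    intro x
    rw [← ENNReal.ofReal_mul (by positivity)]
    unfold radialWeight
    rw [hsplit, hin Z hZY, hin Y subset_rfl, hout, Real.mul_rpow ht.le (sqSum_nonneg Z x),
      ← add_assoc, mul_assoc]
  simp_rw [hpt] at key
  rw [lintegral_const_mul _ (by fun_prop), hnorm] at key
  have hta : ENNReal.ofReal (t ^ (-a)) * ENNReal.ofReal (t ^ a) = 1 := by
    rw [← ENNReal.ofReal_mul (by positivity), ← Real.rpow_add ht]; simp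
  calc _ = ENNReal.ofReal (t ^ (-a)) * (ENNReal.ofReal (t ^ a) * ∫⁻ x, ENNReal.ofReal
        (sqSum Z x ^ a * (1 + t * sqSum Y x + sqSum Yᶜ x) ^ (-b)) ∂μ) := by
        rw [← mul_assoc, hta, one_mul]
    _ = _ := by
        rw [key, ← mul_assoc, ← ENNReal.ofReal_mul (by positivity)]
        congr 2
        rw [← Real.rpow_natCast, ← Real.rpow_neg ht.le, ← Real.rpow_add ht]
        congr 1; ring

/-- `∫₁^∞ (A + B t)^{-b-1} dt = (A + B)^{-b} / (b B)`. -/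
theorem lintegral_Ioi_affine_rpow {A B b : ℝ} (hA : 0 ≤ A) (hB : 0 < B) (hb : 0 < b) :
    ∫⁻ t in Set.Ioi (1 : ℝ), ENNReal.ofReal ((A + t * B) ^ (-(b + 1))) =
      ENNReal.ofReal ((A + B) ^ (-b) / (b * B)) := by
  have hderiv : ∀ t ∈ Set.Ici (1 : ℝ),
      HasDerivAt (fun t => -((A + t * B) ^ (-b) / (b * B))) ((A + t * B) ^ (-(b + 1))) t := by
    intro t ht
    have hpos : 0 < A + t * B := by
      have : 0 < t := lt_of_lt_of_le one_pos ht
      positivity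
    have h1 : HasDerivAt (fun t => A + t * B) B t := by
      simpa using ((hasDerivAt_id t).mul_const B).const_add A
    have h2 := ((h1.rpow_const (p := -b) (Or.inl hpos.ne')).div_const (b * B)).neg
    refine h2.congr_deriv ?_
    rw [show -b - 1 = -(b + 1) by ring]
    field_simp
  have hlim : Filter.Tendsto (fun t => -((A + t * B) ^ (-b) / (b * B))) Filter.atTop
      (nhds 0) := by
    have h1 : Filter.Tendsto (fun t : ℝ => A + t * B) Filter.atTop Filter.atTop :=
      Filter.tendsto_atTop_add_const_left _ _ (Filter.tendsto_id.atTop_mul_const hB)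
    have h2 := ((tendsto_rpow_neg_atTop hb).comp h1).div_const (b * B)
    simpa using h2.neg
  have hnn : ∀ t ∈ Set.Ioi (1 : ℝ), 0 ≤ (A + t * B) ^ (-(b + 1)) := by
    intro t ht
    have : 0 < t := lt_trans one_pos ht
    positivity
  have hint := integrableOn_Ioi_deriv_of_nonneg' hderiv hnn hlim
  rw [← ofReal_integral_eq_lintegral_ofReal hint
    ((ae_restrict_iff' measurableSet_Ioi).2 (Filter.Eventually.of_forall hnn)),
    integral_Ioi_of_hasDerivAt_of_nonneg' hderiv hnn hlim]
  congr 1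
  simp

omit [DecidableEq ι] in
theorem lintegral_radialWeight_ne_top (μ : Measure (ι → ℂ)) [μ.IsAddHaarMeasure] (Z : Finset ι)
    {a b : ℝ} (ha : 0 ≤ a) (hab : Fintype.card ι < b - a) :
    ∫⁻ x, ENNReal.ofReal (radialWeight Z a b x) ∂μ =
      ENNReal.ofReal (∫ x, radialWeight Z a b x ∂μ) :=
  (ofReal_integral_eq_lintegral_ofReal (integrable_radialWeight μ Z ha hab)
    (Filter.Eventually.of_forall fun _ => radialWeight_nonneg _ _ _ _)).symm

theorem integral_radialWeight_add_one_both (μ : Measure (ι → ℂ)) [μ.IsAddHaarMeasure]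
    {Z : Finset ι} (hZ : Z.Nonempty) {a b : ℝ} (ha : 0 ≤ a) (hab : Fintype.card ι < b - a) :
    b * ∫ x, radialWeight Z (a + 1) (b + 1) x ∂μ = (Z.card + a) * ∫ x, radialWeight Z a b x ∂μ := by
  have hcard : (0 : ℝ) ≤ Fintype.card ι := by positivity
  have hb : 0 < b := by linarith
  have hk : (0 : ℝ) < Z.card := by exact_mod_cast hZ.card_pos
  have hka : 0 < Z.card + a := by linarith
  have hswap := lintegral_lintegral_swap (μ := volume.restrict (Set.Ioi (1 : ℝ))) (ν := μ)
    (f := fun t x => ENNReal.ofReal (sqSum Z x ^ (a + 1) *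
      (1 + t * sqSum Z x + sqSum Zᶜ x) ^ (-(b + 1)))) (by
        refine Measurable.aemeasurable ?_
        simp only [Function.uncurry_def]
        fun_prop)
  have hleft : ∫⁻ t in Set.Ioi (1 : ℝ), ∫⁻ x, ENNReal.ofReal (sqSum Z x ^ (a + 1) *
      (1 + t * sqSum Z x + sqSum Zᶜ x) ^ (-(b + 1))) ∂μ =
      ENNReal.ofReal (1 / (Z.card + a)) *
        ENNReal.ofReal (∫ x, radialWeight Z (a + 1) (b + 1) x ∂μ) := by
    rw [← lintegral_radialWeight_ne_top μ Z (by linarith) (by linarith)]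
    have h1 : ∀ t ∈ Set.Ioi (1 : ℝ), ∫⁻ x, ENNReal.ofReal (sqSum Z x ^ (a + 1) *
        (1 + t * sqSum Z x + sqSum Zᶜ x) ^ (-(b + 1))) ∂μ =
        ENNReal.ofReal ((0 + t * 1) ^ (-((Z.card + a) + 1))) *
          ∫⁻ x, ENNReal.ofReal (radialWeight Z (a + 1) (b + 1) x) ∂μ := by
      intro t ht
      rw [lintegral_radialWeight_scale μ subset_rfl _ _ (lt_trans one_pos ht)]
      simp [add_assoc]
    rw [setLIntegral_congr_fun measurableSet_Ioi h1, lintegral_mul_const _ (by fun_prop),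
      lintegral_Ioi_affine_rpow le_rfl one_pos hka]
    simp
  have hright : ∫⁻ x, ∫⁻ t in Set.Ioi (1 : ℝ), ENNReal.ofReal (sqSum Z x ^ (a + 1) *
      (1 + t * sqSum Z x + sqSum Zᶜ x) ^ (-(b + 1))) ∂volume ∂μ =
      ENNReal.ofReal (1 / b) * ENNReal.ofReal (∫ x, radialWeight Z a b x ∂μ) := by
    rw [← lintegral_radialWeight_ne_top μ Z ha hab, ← lintegral_const_mul _ (by fun_prop)]
    refine lintegral_congr_ae ?_
    filter_upwards [ae_sqSum_pos μ hZ] with x hx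
    have hc := sqSum_nonneg Zᶜ x
    simp_rw [ENNReal.ofReal_mul (show (0 : ℝ) ≤ sqSum Z x ^ (a + 1) by positivity),
      add_right_comm]
    rw [lintegral_const_mul _ (by fun_prop), lintegral_Ioi_affine_rpow (by positivity) hx hb,
      ← ENNReal.ofReal_mul (by positivity), ← ENNReal.ofReal_mul (by positivity)]
    congr 1
    unfold radialWeight
    rw [show sqSum Finset.univ x = sqSum Z x + sqSum Zᶜ x from
      (Finset.sum_add_sum_compl Z _).symm, Real.rpow_add_one hx.ne',
      show 1 + (sqSum Z x + sqSum Zᶜ x) = 1 + sqSum Zᶜ x + sqSum Z x by ring]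
    field_simp
  rw [hleft, hright, ← ENNReal.ofReal_mul (by positivity), ← ENNReal.ofReal_mul (by positivity),
    ENNReal.ofReal_eq_ofReal_iff
      (mul_nonneg (by positivity) (integral_nonneg (radialWeight_nonneg _ _ _)))
      (mul_nonneg (by positivity) (integral_nonneg (radialWeight_nonneg _ _ _)))] at hswap
  field_simp at hswap
  linarith

theorem integral_radialWeight_add_one_right (μ : Measure (ι → ℂ)) [μ.IsAddHaarMeasure]
    {Z : Finset ι} {a b : ℝ} (ha : 0 ≤ a) (hab : Fintype.card ι < b - a) :
    b * ∫ x, radialWeight Z a (b + 1) x ∂μ =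
      (b - a - Fintype.card ι) * ∫ x, radialWeight Z a b x ∂μ := by
  have hcard : (0 : ℝ) ≤ Fintype.card ι := by positivity
  have hb : 0 < b := by linarith
  have hka : 0 < b - a - Fintype.card ι := by linarith
  have hswap := lintegral_lintegral_swap (μ := volume.restrict (Set.Ioi (1 : ℝ))) (ν := μ)
    (f := fun t x => ENNReal.ofReal (sqSum Z x ^ a *
      (sqSum Finset.univ x + t * 1) ^ (-(b + 1)))) (by
        refine Measurable.aemeasurable ?_
        simp only [Function.uncurry_def]
        fun_prop)
  have hleft : ∫⁻ t in Set.Ioi (1 : ℝ), ∫⁻ x, ENNReal.ofReal (sqSum Z x ^ a *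
      (sqSum Finset.univ x + t * 1) ^ (-(b + 1))) ∂μ =
      ENNReal.ofReal (1 / (b - a - Fintype.card ι)) *
        ENNReal.ofReal (∫ x, radialWeight Z a (b + 1) x ∂μ) := by
    rw [← lintegral_radialWeight_ne_top μ Z (by linarith) (by linarith)]
    have h1 : ∀ t ∈ Set.Ioi (1 : ℝ), ∫⁻ x, ENNReal.ofReal (sqSum Z x ^ a *
        (sqSum Finset.univ x + t * 1) ^ (-(b + 1))) ∂μ =
        ENNReal.ofReal ((0 + t * 1) ^ (-((b - a - Fintype.card ι) + 1))) *
          ∫⁻ x, ENNReal.ofReal (radialWeight Z a (b + 1) x) ∂μ := by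
      intro t ht
      have ht0 : 0 < t := lt_trans one_pos ht
      have hti : 0 < t⁻¹ := by positivity
      have h2 : ∀ x : ι → ℂ, ENNReal.ofReal (sqSum Z x ^ a *
          (sqSum Finset.univ x + t * 1) ^ (-(b + 1))) =
          ENNReal.ofReal (t ^ (-(b + 1))) * ENNReal.ofReal (sqSum Z x ^ a *
            (1 + t⁻¹ * sqSum Finset.univ x + sqSum (Finset.univᶜ) x) ^ (-(b + 1))) := by
        intro x
        have hq := sqSum_nonneg Finset.univ x
        rw [← ENNReal.ofReal_mul (by positivity), mul_left_comm,
          show sqSum (Finset.univᶜ) x = 0 by simp [sqSum],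
          ← Real.mul_rpow ht0.le (by positivity)]
        congr 3
        field_simp
        ring
      simp_rw [h2]
      rw [lintegral_const_mul _ (by fun_prop),
        lintegral_radialWeight_scale μ (Finset.subset_univ Z) _ _ hti, ← mul_assoc,
        ← ENNReal.ofReal_mul (by positivity), Real.inv_rpow ht0.le, ← Real.rpow_neg ht0.le,
        ← Real.rpow_add ht0, Finset.card_univ]
      congr 3
      · ring
      · ring
    rw [setLIntegral_congr_fun measurableSet_Ioi h1, lintegral_mul_const _ (by fun_prop),
      lintegral_Ioi_affine_rpow le_rfl one_pos hka]
    simp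
  have hright : ∫⁻ x, ∫⁻ t in Set.Ioi (1 : ℝ), ENNReal.ofReal (sqSum Z x ^ a *
      (sqSum Finset.univ x + t * 1) ^ (-(b + 1))) ∂volume ∂μ =
      ENNReal.ofReal (1 / b) * ENNReal.ofReal (∫ x, radialWeight Z a b x ∂μ) := by
    rw [← lintegral_radialWeight_ne_top μ Z ha hab, ← lintegral_const_mul _ (by fun_prop)]
    refine lintegral_congr fun x => ?_
    have hc := sqSum_nonneg Finset.univ x
    have hz := sqSum_nonneg Z x
    simp_rw [ENNReal.ofReal_mul (show (0 : ℝ) ≤ sqSum Z x ^ a by positivity)]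
    rw [lintegral_const_mul _ (by fun_prop), lintegral_Ioi_affine_rpow hc one_pos hb,
      ← ENNReal.ofReal_mul (by positivity), ← ENNReal.ofReal_mul (by positivity)]
    congr 1
    unfold radialWeight
    rw [add_comm 1 (sqSum Finset.univ x)]
    field_simp
  rw [hleft, hright, ← ENNReal.ofReal_mul (by positivity), ← ENNReal.ofReal_mul (by positivity),
    ENNReal.ofReal_eq_ofReal_iff
      (mul_nonneg (by positivity) (integral_nonneg (radialWeight_nonneg _ _ _)))
      (mul_nonneg (by positivity) (integral_nonneg (radialWeight_nonneg _ _ _)))] at hswap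
  field_simp at hswap
  linarith

theorem integral_radialWeight_add_one_left (μ : Measure (ι → ℂ)) [μ.IsAddHaarMeasure]
    {Z : Finset ι} (hZ : Z.Nonempty) {a b : ℝ} (ha : 0 ≤ a)
    (hab : Fintype.card ι < b - a - 1) :
    (b - a - 1 - Fintype.card ι) * ∫ x, radialWeight Z (a + 1) b x ∂μ =
      (Z.card + a) * ∫ x, radialWeight Z a b x ∂μ := by
  have h1 := integral_radialWeight_add_one_both μ hZ ha (b := b) (by linarith)
  have h2 := integral_radialWeight_add_one_right μ (Z := Z) (a := a + 1) (b := b) (by linarith)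
    (by linarith)
  rw [← h1, h2]
  ring

end RadialIntegrals

section RadialMoments

variable {ι : Type*} [Fintype ι] [DecidableEq ι]

theorem integral_comp_perm {E : Type*} [NormedAddCommGroup E] [NormedSpace ℝ E]
    (μ : Measure (ι → ℂ)) [μ.IsAddHaarMeasure] (σ : Equiv.Perm ι) (f : (ι → ℂ) → E) :
    ∫ v, f (v ∘ σ) ∂μ = ∫ v, f v ∂μ := by
  have hdet : (σ.permMatrix ℂ).det ≠ 0 := by
    rw [det_permutation]; exact_mod_cast (Equiv.Perm.sign σ).ne_zero
  have hnorm : ‖(σ.permMatrix ℂ).det‖ = 1 := by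
    rw [det_permutation]
    rcases Int.units_eq_one_or (Equiv.Perm.sign σ) with h | h <;> simp [h]
  have h := integral_comp_mulVec μ (σ.permMatrix ℂ) hdet f
  rw [hnorm, one_pow, inv_one, one_smul] at h
  simpa only [permMatrix_mulVec] using h

omit [Fintype ι] [DecidableEq ι] in
theorem sqSum_comp_perm {Y Z : Finset ι} (σ : Equiv.Perm ι) (h : Z.map σ.toEmbedding = Y)
    (x : ι → ℂ) : sqSum Z (x ∘ σ) = sqSum Y x := by
  rw [← h, sqSum, sqSum, Finset.sum_map]
  rfl

omit [DecidableEq ι] in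
theorem radialWeight_comp_perm {Y Z : Finset ι} (σ : Equiv.Perm ι)
    (h : Z.map σ.toEmbedding = Y) (a b : ℝ) (x : ι → ℂ) :
    radialWeight Z a b (x ∘ σ) = radialWeight Y a b x := by
  rw [radialWeight, sqSum_comp_perm σ h, sqSum_comp_perm σ (Y := Finset.univ) (by simp)]
  rfl

theorem integral_radialWeight_congr_card (μ : Measure (ι → ℂ)) [μ.IsAddHaarMeasure]
    {Y Z : Finset ι} (h : Z.card = Y.card) (a b : ℝ) :
    ∫ x, radialWeight Z a b x ∂μ = ∫ x, radialWeight Y a b x ∂μ := by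
  set σ : Equiv.Perm ι := (Finset.equivOfCardEq h).extendSubtype
  have hσ : Z.map σ.toEmbedding = Y := by
    refine Finset.eq_of_subset_of_card_le (fun y hy => ?_) (by rw [Finset.card_map, h])
    obtain ⟨x, hx, rfl⟩ := Finset.mem_map.1 hy
    exact (Finset.equivOfCardEq h).extendSubtype_mem x hx
  rw [← integral_comp_perm μ σ]
  simp_rw [radialWeight_comp_perm σ hσ]

omit [DecidableEq ι] in
theorem sqSum_mul_radialWeight (Z : Finset ι) {a : ℝ} (ha : 0 ≤ a) (b : ℝ) (x : ι → ℂ) :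
    sqSum Z x * radialWeight Z a b x = radialWeight Z (a + 1) b x := by
  unfold radialWeight
  rw [Real.rpow_add_one' (sqSum_nonneg Z x) (by positivity)]
  ring

omit [DecidableEq ι] in
theorem integrable_mul_radialWeight (μ : Measure (ι → ℂ)) [μ.IsAddHaarMeasure]
    {Z : Finset ι} {i k : ι} (hi : i ∈ Z) (hk : k ∈ Z) {a b : ℝ} (ha : 0 ≤ a)
    (hab : Fintype.card ι < b - a - 1) :
    Integrable (fun x => star (x i) * x k * (radialWeight Z a b x : ℂ)) μ := by
  refine (integrable_radialWeight μ Z (a := a + 1) (b := b) (by linarith)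
    (by linarith)).mono' (Measurable.aestronglyMeasurable (by fun_prop))
    (Filter.Eventually.of_forall fun x => ?_)
  have hr := radialWeight_nonneg Z a b x
  rw [← sqSum_mul_radialWeight Z ha, norm_mul, norm_mul, norm_star,
    Complex.norm_of_nonneg hr]
  refine mul_le_mul_of_nonneg_right ?_ hr
  have hi' : ‖x i‖ ^ 2 ≤ sqSum Z x :=
    Finset.single_le_sum (f := fun i => ‖x i‖ ^ 2) (fun _ _ => by positivity) hi
  have hk' : ‖x k‖ ^ 2 ≤ sqSum Z x :=
    Finset.single_le_sum (f := fun i => ‖x i‖ ^ 2) (fun _ _ => by positivity) hk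
  nlinarith [sq_nonneg (‖x i‖ - ‖x k‖)]

theorem integral_offDiag_mul_radialWeight (μ : Measure (ι → ℂ)) [μ.IsAddHaarMeasure]
    (Z : Finset ι) {i k : ι} (hik : i ≠ k) (a b : ℝ) :
    ∫ x, star (x i) * x k * (radialWeight Z a b x : ℂ) ∂μ = 0 := by
  set L : Matrix ι ι ℂ := diagonal fun j => if j = i then -1 else 1 with hL
  have hdet : L.det = -1 := by
    rw [hL, det_diagonal, Finset.prod_ite_eq' Finset.univ i]; simp
  have hsq : ∀ Y : Finset ι, ∀ x, sqSum Y (L *ᵥ x) = sqSum Y x := by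
    intro Y x
    refine Finset.sum_congr rfl fun j _ => ?_
    rw [hL, mulVec_diagonal]
    split_ifs <;> simp
  have h := integral_comp_mulVec μ L (by rw [hdet]; simp)
    (fun x => star (x i) * x k * (radialWeight Z a b x : ℂ))
  have hpt : ∀ x, star ((L *ᵥ x) i) * (L *ᵥ x) k * (radialWeight Z a b (L *ᵥ x) : ℂ) =
      -(star (x i) * x k * (radialWeight Z a b x : ℂ)) := by
    intro x
    rw [radialWeight, hsq, hsq, hL, mulVec_diagonal, mulVec_diagonal, if_pos rfl,
      if_neg hik.symm, radialWeight]
    simp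
  simp_rw [hpt] at h
  rw [integral_neg, hdet] at h
  simp only [norm_neg, norm_one, one_pow, inv_one, one_smul] at h
  exact self_eq_neg.1 h.symm

theorem integral_diag_mul_radialWeight (μ : Measure (ι → ℂ)) [μ.IsAddHaarMeasure]
    {Z : Finset ι} {i : ι} (hi : i ∈ Z) {a b : ℝ} (ha : 0 ≤ a)
    (hab : Fintype.card ι < b - a - 1) :
    ∫ x, star (x i) * x i * (radialWeight Z a b x : ℂ) ∂μ =
      ((∫ x, radialWeight Z (a + 1) b x ∂μ : ℝ) : ℂ) / Z.card := by
  have hswap : ∀ k ∈ Z, ∫ x, star (x k) * x k * (radialWeight Z a b x : ℂ) ∂μ =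
      ∫ x, star (x i) * x i * (radialWeight Z a b x : ℂ) ∂μ := by
    intro k hk
    rw [← integral_comp_perm μ (Equiv.swap i k)]
    have hmap : Z.map (Equiv.swap i k).toEmbedding = Z := by
      refine Finset.eq_of_subset_of_card_le (fun y hy => ?_) (by rw [Finset.card_map])
      obtain ⟨x, hx, rfl⟩ := Finset.mem_map.1 hy
      rw [Equiv.coe_toEmbedding, Equiv.swap_apply_def]
      split_ifs <;> assumption
    simp_rw [radialWeight_comp_perm _ hmap, Function.comp_apply, Equiv.swap_apply_right]
  have hsum : ∑ k ∈ Z, ∫ x, star (x k) * x k * (radialWeight Z a b x : ℂ) ∂μ =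
      ((∫ x, radialWeight Z (a + 1) b x ∂μ : ℝ) : ℂ) := by
    rw [← integral_finsetSum _ fun k hk => integrable_mul_radialWeight μ hk hk ha hab,
      ← integral_complex_ofReal]
    refine integral_congr_ae (Filter.Eventually.of_forall fun x => ?_)
    simp only
    rw [← Finset.sum_mul, ← sqSum_mul_radialWeight Z ha, sqSum]
    push_cast
    congr 1
    refine Finset.sum_congr rfl fun k _ => ?_
    exact Complex.conj_mul' (x k)
  rw [Finset.sum_congr rfl hswap, Finset.sum_const, nsmul_eq_mul] at hsum
  have hZ : (Z.card : ℂ) ≠ 0 := by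
    exact_mod_cast (Finset.card_pos.2 ⟨i, hi⟩).ne'
  rw [← hsum]
  field_simp

omit [DecidableEq ι] in
theorem quadForm_eq_sum {Z : Finset ι} {Q : Matrix ι ι ℂ}
    (hQ : ∀ i k, Q i k ≠ 0 → i ∈ Z ∧ k ∈ Z) (x : ι → ℂ) :
    star x ⬝ᵥ Q *ᵥ x = ∑ i ∈ Z, ∑ k ∈ Z, Q i k * (star (x i) * x k) := by
  simp only [dotProduct, mulVec, Finset.mul_sum]
  rw [← Finset.sum_subset (Finset.subset_univ Z)]
  · refine Finset.sum_congr rfl fun i _ => ?_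
    rw [← Finset.sum_subset (Finset.subset_univ Z)]
    · refine Finset.sum_congr rfl fun k _ => ?_
      rw [Pi.star_apply]; ring
    · intro k _ hk
      have : Q i k = 0 := by by_contra h; exact hk (hQ i k h).2
      simp [this]
  · intro i _ hi
    refine Finset.sum_eq_zero fun k _ => ?_
    have : Q i k = 0 := by by_contra h; exact hi (hQ i k h).1
    simp [this]

/-- The second moments of the model weight along the coordinates in `Z` are isotropic. -/
theorem integral_quadForm_mul_radialWeight (μ : Measure (ι → ℂ)) [μ.IsAddHaarMeasure]
    {Z : Finset ι} {Q : Matrix ι ι ℂ} (hQ : ∀ i k, Q i k ≠ 0 → i ∈ Z ∧ k ∈ Z) {a b : ℝ}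
    (ha : 0 ≤ a) (hab : Fintype.card ι < b - a - 1) :
    ∫ x, star x ⬝ᵥ Q *ᵥ x * (radialWeight Z a b x : ℂ) ∂μ =
      Q.trace / Z.card * ((∫ x, radialWeight Z (a + 1) b x ∂μ : ℝ) : ℂ) := by
  simp_rw [quadForm_eq_sum hQ, Finset.sum_mul, mul_assoc]
  have hint : ∀ i ∈ Z, ∀ k ∈ Z, Integrable
      (fun x => Q i k * (star (x i) * (x k * (radialWeight Z a b x : ℂ)))) μ := by
    intro i hi k hk
    simpa only [mul_assoc] using (integrable_mul_radialWeight μ hi hk ha hab).const_mul (Q i k)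
  rw [integral_finsetSum _ fun i hi => integrable_finsetSum _ (hint i hi)]
  have hrow : ∀ i ∈ Z, ∫ x, ∑ k ∈ Z, Q i k * (star (x i) * (x k * (radialWeight Z a b x : ℂ))) ∂μ
      = Q i i * (((∫ x, radialWeight Z (a + 1) b x ∂μ : ℝ) : ℂ) / Z.card) := by
    intro i hi
    rw [integral_finsetSum _ (hint i hi), Finset.sum_eq_single i]
    · rw [integral_const_mul, ← integral_diag_mul_radialWeight μ hi ha hab]
      simp only [mul_assoc]
    · intro k _ hki
      rw [integral_const_mul]
      have := integral_offDiag_mul_radialWeight μ Z (Ne.symm hki) a b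
      simp only [mul_assoc] at this
      rw [this, mul_zero]
    · exact fun h => absurd hi h
  rw [Finset.sum_congr rfl hrow, ← Finset.sum_mul]
  have htr : Q.trace = ∑ i ∈ Z, Q i i := by
    rw [trace, ← Finset.sum_subset (Finset.subset_univ Z)]
    · rfl
    · intro i _ hi
      by_contra h
      exact hi (hQ i i h).1
  rw [htr]; ring

end RadialMoments

section QuaternionRows

variable {ρ κ : Type*}

/-- Multiplication by the quaternion unit `j` on row vectors; an antilinear map with square `-1`. -/
noncomputable def quatConj (v : κ × Fin 2 → ℂ) : κ × Fin 2 → ℂ :=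
  fun i => if i.2 = 0 then -star (v (i.1, 1)) else star (v (i.1, 0))

theorem quatConj_quatConj (v : κ × Fin 2 → ℂ) : quatConj (quatConj v) = -v := by
  ext ⟨k, s⟩
  fin_cases s <;> simp [quatConj]

theorem quatConj_add (v w : κ × Fin 2 → ℂ) : quatConj (v + w) = quatConj v + quatConj w := by
  ext ⟨k, s⟩
  fin_cases s <;> simp [quatConj, add_comm]

theorem quatConj_smul (t : ℂ) (v : κ × Fin 2 → ℂ) : quatConj (t • v) = star t • quatConj v := by
  ext ⟨k, s⟩
  fin_cases s <;> simp [quatConj]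

theorem quatConj_zero : quatConj (0 : κ × Fin 2 → ℂ) = 0 := by
  ext ⟨k, s⟩
  fin_cases s <;> simp [quatConj]

theorem quatConj_sum {τ : Type*} (s : Finset τ) (f : τ → κ × Fin 2 → ℂ) :
    quatConj (∑ a ∈ s, f a) = ∑ a ∈ s, quatConj (f a) := by
  classical
  induction s using Finset.induction_on with
  | empty => simp [quatConj_zero]
  | insert a s ha ih => rw [Finset.sum_insert ha, Finset.sum_insert ha, quatConj_add, ih]

/-- The complex matrix with rows `X a` and `quatConj (X a)`, that is, the complex representation
of a quaternion matrix. -/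
noncomputable def quatRows (X : ρ → κ × Fin 2 → ℂ) : Matrix (ρ × Fin 2) (κ × Fin 2) ℂ :=
  of fun a => if a.2 = 0 then X a.1 else quatConj (X a.1)

@[simp]
theorem quatRows_apply_zero (X : ρ → κ × Fin 2 → ℂ) (a : ρ) : quatRows X (a, 0) = X a := rfl

@[simp]
theorem quatRows_apply_one (X : ρ → κ × Fin 2 → ℂ) (a : ρ) :
    quatRows X (a, 1) = quatConj (X a) := rfl

variable [Fintype κ]

theorem quatConj_dotProduct_star_quatConj (v w : κ × Fin 2 → ℂ) :
    quatConj v ⬝ᵥ star (quatConj w) = star (v ⬝ᵥ star w) := by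
  simp only [dotProduct, Fintype.sum_prod_type, Fin.sum_univ_two, star_sum]
  refine Finset.sum_congr rfl fun k _ => ?_
  simp [quatConj]
  ring

theorem quatConj_dotProduct_star (v w : κ × Fin 2 → ℂ) :
    quatConj v ⬝ᵥ star w = -(quatConj w ⬝ᵥ star v) := by
  simp only [dotProduct, Fintype.sum_prod_type, Fin.sum_univ_two, ← Finset.sum_neg_distrib]
  refine Finset.sum_congr rfl fun k _ => ?_
  simp [quatConj]
  ring

theorem star_dotProduct_star_comm (v w : κ × Fin 2 → ℂ) :
    star (v ⬝ᵥ star w) = w ⬝ᵥ star v := by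
  rw [← star_dotProduct_star, star_star]

variable [Fintype ρ]

theorem vecMul_gram_quatRows (X : ρ → κ × Fin 2 → ℂ) (v : κ × Fin 2 → ℂ) :
    v ᵥ* ((quatRows X)ᴴ * quatRows X) =
      ∑ a, ((v ⬝ᵥ star (X a)) • X a + (v ⬝ᵥ star (quatConj (X a))) • quatConj (X a)) := by
  rw [← vecMul_vecMul, vecMul_eq_sum, Fintype.sum_prod_type]
  simp only [Fin.sum_univ_two]
  rfl

theorem quatConj_vecMul_gram (X : ρ → κ × Fin 2 → ℂ) (v : κ × Fin 2 → ℂ) :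
    quatConj (v ᵥ* ((quatRows X)ᴴ * quatRows X)) =
      quatConj v ᵥ* ((quatRows X)ᴴ * quatRows X) := by
  rw [vecMul_gram_quatRows, vecMul_gram_quatRows, quatConj_sum]
  refine Finset.sum_congr rfl fun a _ => ?_
  rw [quatConj_add, quatConj_smul, quatConj_smul, quatConj_quatConj,
    quatConj_dotProduct_star_quatConj, quatConj_dotProduct_star v,
    star_dotProduct_star_comm v (quatConj (X a))]
  simp [add_comm]

variable [DecidableEq κ]

theorem quatConj_vecMul_resolvent {H : Matrix (κ × Fin 2) (κ × Fin 2) ℂ}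
    (hH : ∀ v, quatConj (v ᵥ* H) = quatConj v ᵥ* H) {t : ℝ}
    (hdet : IsUnit ((t : ℂ) • 1 + H).det) (v : κ × Fin 2 → ℂ) :
    quatConj (v ᵥ* ((t : ℂ) • 1 + H)⁻¹) = quatConj v ᵥ* ((t : ℂ) • 1 + H)⁻¹ := by
  have hcomm : ∀ w, quatConj (w ᵥ* ((t : ℂ) • 1 + H)) = quatConj w ᵥ* ((t : ℂ) • 1 + H) := by
    intro w
    rw [vecMul_add, vecMul_add, quatConj_add, hH, vecMul_smul, vecMul_smul, vecMul_one, vecMul_one,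
      quatConj_smul]
    simp
  have h := hcomm (v ᵥ* ((t : ℂ) • 1 + H)⁻¹)
  rw [vecMul_vecMul, nonsing_inv_mul _ hdet, vecMul_one] at h
  rw [h, vecMul_vecMul, mul_nonsing_inv _ hdet, vecMul_one]

omit [DecidableEq κ] in
/-- A Hermitian matrix commuting with `quatConj` compresses to a scalar on the span of
`v` and `quatConj v`. -/
theorem quatRows_single_mul_mul (R : Matrix (κ × Fin 2) (κ × Fin 2) ℂ) (hR : R.IsHermitian)
    (hJ : ∀ v, quatConj (v ᵥ* R) = quatConj v ᵥ* R) (v : κ × Fin 2 → ℂ) :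
    quatRows (fun _ : Unit => v) * R * (quatRows (fun _ : Unit => v))ᴴ =
      (v ᵥ* R ⬝ᵥ star v) • (1 : Matrix (Unit × Fin 2) (Unit × Fin 2) ℂ) := by
  have hherm : ∀ u w : κ × Fin 2 → ℂ, u ⬝ᵥ star (w ᵥ* R) = u ᵥ* R ⬝ᵥ star w := by
    intro u w
    rw [star_vecMul, hR.eq, dotProduct_mulVec]
  have hentry : ∀ a b, (quatRows (fun _ : Unit => v) * R * (quatRows (fun _ : Unit => v))ᴴ) a b =
      (quatRows (fun _ : Unit => v) a ᵥ* R) ⬝ᵥ star (quatRows (fun _ : Unit => v) b) := by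
    intro a b; rfl
  have h10 : quatConj v ᵥ* R ⬝ᵥ star v = 0 := by
    have h1 : quatConj v ᵥ* R ⬝ᵥ star v = -(quatConj v ᵥ* R ⬝ᵥ star v) := by
      conv_lhs => rw [← hJ, quatConj_dotProduct_star, hherm]
    exact self_eq_neg.1 h1
  have h01 : v ᵥ* R ⬝ᵥ star (quatConj v) = 0 := by
    rw [← hherm, ← star_dotProduct_star_comm, h10, star_zero]
  have h11 : quatConj v ᵥ* R ⬝ᵥ star (quatConj v) = v ᵥ* R ⬝ᵥ star v := by
    rw [← hJ, quatConj_dotProduct_star_quatConj, star_dotProduct_star_comm, hherm]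
  ext ⟨a, s⟩ ⟨b, r⟩
  rw [hentry]
  fin_cases s <;> fin_cases r <;> simp [h10, h01, h11]

end QuaternionRows

section Diagonalization

variable {ι : Type*} [Fintype ι] [DecidableEq ι]

open scoped ComplexOrder in
theorem exists_unitary_diagonalization_gram {τ : Type*} [Fintype τ] (N : Matrix τ ι ℂ) :
    ∃ (U : Matrix ι ι ℂ) (d : ι → ℝ), Uᴴ * U = 1 ∧ (∀ i, 0 ≤ d i) ∧
      Nᴴ * N = U * diagonal (fun i => (d i : ℂ)) * Uᴴ := by
  have hH := posSemidef_conjTranspose_mul_self N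
  refine ⟨hH.1.eigenvectorUnitary, hH.1.eigenvalues, ?_, hH.eigenvalues_nonneg, ?_⟩
  · exact Unitary.coe_star_mul_self hH.1.eigenvectorUnitary
  · conv_lhs => rw [hH.1.spectral_theorem, Unitary.conjStarAlgAut_apply]
    rfl

variable {U : Matrix ι ι ℂ} {d : ι → ℝ}

theorem smul_one_add_unitary_conj (hU : Uᴴ * U = 1) (t : ℝ) :
    (t : ℂ) • 1 + U * diagonal (fun i => (d i : ℂ)) * Uᴴ =
      U * diagonal (fun i => ((t + d i : ℝ) : ℂ)) * Uᴴ := by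
  have h1 : (t : ℂ) • (1 : Matrix ι ι ℂ) = U * ((t : ℂ) • 1) * Uᴴ := by
    rw [mul_smul_comm, smul_mul_assoc, mul_one, mul_eq_one_comm.1 hU]
  rw [h1, ← add_mul, ← mul_add]
  congr 2
  rw [smul_one_eq_diagonal, diagonal_add]
  simp

theorem det_unitary_conj (hU : Uᴴ * U = 1) :
    (U * diagonal (fun i => (d i : ℂ)) * Uᴴ).det = ((∏ i, d i : ℝ) : ℂ) := by
  rw [det_mul_comm, ← mul_assoc, hU, one_mul, det_diagonal]
  push_cast
  rfl

theorem inv_unitary_conj (hU : Uᴴ * U = 1) (hd : ∀ i, d i ≠ 0) :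
    (U * diagonal (fun i => (d i : ℂ)) * Uᴴ)⁻¹ =
      U * diagonal (fun i => ((d i)⁻¹ : ℂ)) * Uᴴ := by
  refine inv_eq_right_inv ?_
  have hdiag : diagonal (fun i => (d i : ℂ)) * diagonal (fun i => ((d i)⁻¹ : ℂ)) = 1 := by
    rw [diagonal_mul_diagonal, ← diagonal_one]
    congr 1
    ext i
    exact mul_inv_cancel₀ (by exact_mod_cast hd i)
  calc _ = U * (diagonal (fun i => (d i : ℂ)) * (Uᴴ * U) *
        diagonal (fun i => ((d i)⁻¹ : ℂ))) * Uᴴ := by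
        simp only [mul_assoc]
    _ = 1 := by rw [hU, mul_one, hdiag, mul_one, mul_eq_one_comm.1 hU]

theorem vecMul_unitary_conj_dotProduct (v : ι → ℂ) :
    v ᵥ* (U * diagonal (fun i => (d i : ℂ)) * Uᴴ) ⬝ᵥ star v =
      ((∑ i, d i * ‖(Uᵀ *ᵥ v) i‖ ^ 2 : ℝ) : ℂ) := by
  rw [← vecMul_vecMul, ← vecMul_vecMul, ← dotProduct_mulVec, ← star_vecMul, mulVec_transpose]
  simp only [dotProduct, vecMul_diagonal, Pi.star_apply]
  push_cast
  refine Finset.sum_congr rfl fun i _ => ?_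
  rw [mul_comm ((v ᵥ* U) i), mul_assoc]
  congr 1
  exact Complex.mul_conj' _

theorem isHermitian_unitary_conj :
    (U * diagonal (fun i => (d i : ℂ)) * Uᴴ).IsHermitian := by
  rw [IsHermitian, conjTranspose_mul, conjTranspose_mul, conjTranspose_conjTranspose,
    diagonal_conjTranspose, mul_assoc]
  congr 3
  ext i
  simp

end Diagonalization

section RankUpdate

variable {κ : Type*} [Fintype κ] [DecidableEq κ]

theorem det_smul_one_add_add_gram_single {H : Matrix (κ × Fin 2) (κ × Fin 2) ℂ}
    (hJ : ∀ v, quatConj (v ᵥ* H) = quatConj v ᵥ* H)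
    {U : Matrix (κ × Fin 2) (κ × Fin 2) ℂ} {d : κ × Fin 2 → ℝ} (hU : Uᴴ * U = 1)
    (hd : ∀ i, 0 ≤ d i) (hH : H = U * diagonal (fun i => (d i : ℂ)) * Uᴴ) {t : ℝ} (ht : 0 < t)
    (v : κ × Fin 2 → ℂ) :
    ((t : ℂ) • 1 + (H + (quatRows fun _ : Unit => v)ᴴ * quatRows fun _ : Unit => v)).det =
      ((t : ℂ) • 1 + H).det *
        ((1 + ∑ i, (t + d i)⁻¹ * ‖(Uᵀ *ᵥ v) i‖ ^ 2 : ℝ) : ℂ) ^ 2 := by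
  have hpos : ∀ i, t + d i ≠ 0 := fun i => by have := hd i; positivity
  have hA : (t : ℂ) • 1 + H = U * diagonal (fun i => ((t + d i : ℝ) : ℂ)) * Uᴴ := by
    rw [hH, smul_one_add_unitary_conj hU]
  have hunit : IsUnit ((t : ℂ) • 1 + H).det := by
    rw [hA, det_unitary_conj hU]
    exact (Complex.ofReal_ne_zero.2 (Finset.prod_ne_zero_iff.2 fun i _ => hpos i)).isUnit
  have hinv : ((t : ℂ) • 1 + H)⁻¹ =
      U * diagonal (fun i => (((t + d i)⁻¹ : ℝ) : ℂ)) * Uᴴ := by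
    rw [hA, inv_unitary_conj hU hpos]
    simp
  rw [← add_assoc, det_add_mul _ _ hunit, quatRows_single_mul_mul _ (by
      rw [hinv]; exact isHermitian_unitary_conj) (quatConj_vecMul_resolvent hJ hunit), hinv,
    vecMul_unitary_conj_dotProduct]
  congr 1
  set q : ℝ := ∑ i, (t + d i)⁻¹ * ‖(Uᵀ *ᵥ v) i‖ ^ 2
  rw [show (1 : Matrix (Unit × Fin 2) (Unit × Fin 2) ℂ) + (q : ℂ) • 1 = ((1 + q : ℝ) : ℂ) • 1 by
    rw [Complex.ofReal_add, add_smul, Complex.ofReal_one, one_smul], det_smul, det_one]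
  simp

end RankUpdate

section GramDeterminants

variable {κ : Type*} [Fintype κ] [DecidableEq κ] {m : ℕ}

/-- `det (N N†)` for the quaternion matrix `N` with rows `X`. -/
noncomputable def gramDet (X : Fin m → κ × Fin 2 → ℂ) : ℝ :=
  (quatRows X * (quatRows X)ᴴ).det.re

/-- `det (1 + N† N)` for the quaternion matrix `N` with rows `X`. -/
noncomputable def oneAddGramDet (X : Fin m → κ × Fin 2 → ℂ) : ℝ :=
  (1 + (quatRows X)ᴴ * quatRows X).det.re

omit [DecidableEq κ] [Fintype κ] in
theorem gram_quatRows_cons (c : κ × Fin 2 → ℂ) (X : Fin m → κ × Fin 2 → ℂ) :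
    (quatRows (Fin.cons c X : Fin (m + 1) → κ × Fin 2 → ℂ))ᴴ *
        quatRows (Fin.cons c X : Fin (m + 1) → κ × Fin 2 → ℂ) =
      (quatRows X)ᴴ * quatRows X +
        (quatRows fun _ : Unit => c)ᴴ * quatRows fun _ : Unit => c := by
  ext i k
  simp [mul_apply, Fintype.sum_prod_type, Fin.sum_univ_succ (n := m), add_comm]

omit [DecidableEq κ] in
open scoped ComplexOrder in
theorem gramDet_nonneg (X : Fin m → κ × Fin 2 → ℂ) : 0 ≤ gramDet X :=
  (Complex.le_def.1 (posSemidef_self_mul_conjTranspose (quatRows X)).det_nonneg).1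

omit [DecidableEq κ] in
open scoped ComplexOrder in
theorem ofReal_gramDet (X : Fin m → κ × Fin 2 → ℂ) :
    (gramDet X : ℂ) = (quatRows X * (quatRows X)ᴴ).det := by
  have h := (Complex.le_def.1 (posSemidef_self_mul_conjTranspose (quatRows X)).det_nonneg).2
  exact Complex.ext rfl (by simpa using h)

section Spectral

variable {X : Fin m → κ × Fin 2 → ℂ} {U : Matrix (κ × Fin 2) (κ × Fin 2) ℂ}
  {d : κ × Fin 2 → ℝ}

theorem ofReal_oneAddGramDet_eq_prod (hU : Uᴴ * U = 1)
    (hX : (quatRows X)ᴴ * quatRows X = U * diagonal (fun i => (d i : ℂ)) * Uᴴ) :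
    (1 + (quatRows X)ᴴ * quatRows X).det = ((∏ i, (1 + d i) : ℝ) : ℂ) := by
  have h := smul_one_add_unitary_conj (d := d) hU 1
  rw [Complex.ofReal_one, one_smul] at h
  rw [hX, h, det_unitary_conj hU]

theorem oneAddGramDet_eq_prod (hU : Uᴴ * U = 1)
    (hX : (quatRows X)ᴴ * quatRows X = U * diagonal (fun i => (d i : ℂ)) * Uᴴ) :
    oneAddGramDet X = ∏ i, (1 + d i) := by
  rw [oneAddGramDet, ofReal_oneAddGramDet_eq_prod hU hX, Complex.ofReal_re]

theorem oneAddGramDet_cons (hU : Uᴴ * U = 1) (hd : ∀ i, 0 ≤ d i)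
    (hX : (quatRows X)ᴴ * quatRows X = U * diagonal (fun i => (d i : ℂ)) * Uᴴ)
    (c : κ × Fin 2 → ℂ) :
    oneAddGramDet (Fin.cons c X : Fin (m + 1) → κ × Fin 2 → ℂ) =
      oneAddGramDet X * (1 + ∑ i, (1 + d i)⁻¹ * ‖(Uᵀ *ᵥ c) i‖ ^ 2) ^ 2 := by
  have h := det_smul_one_add_add_gram_single (quatConj_vecMul_gram X) hU hd hX one_pos c
  rw [Complex.ofReal_one, one_smul, ofReal_oneAddGramDet_eq_prod hU hX,
    ← oneAddGramDet_eq_prod hU hX, ← gram_quatRows_cons] at h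
  rw [oneAddGramDet, h]
  norm_cast

omit [DecidableEq κ] in
theorem det_smul_one_add_mul_conjTranspose {τ σ : Type*} [Fintype τ] [Fintype σ] [DecidableEq τ]
    [DecidableEq σ] (N : Matrix τ σ ℂ) {t : ℂ} (ht : t ≠ 0) :
    t ^ Fintype.card σ * (t • 1 + N * Nᴴ).det = t ^ Fintype.card τ * (t • 1 + Nᴴ * N).det := by
  have h1 : t • (1 : Matrix τ τ ℂ) + N * Nᴴ = t • (1 + (t⁻¹ • N) * Nᴴ) := by
    rw [smul_add, Matrix.smul_mul, smul_smul, mul_inv_cancel₀ ht, one_smul]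
  have h2 : t • (1 : Matrix σ σ ℂ) + Nᴴ * N = t • (1 + Nᴴ * (t⁻¹ • N)) := by
    rw [smul_add, Matrix.mul_smul, smul_smul, mul_inv_cancel₀ ht, one_smul]
  rw [h1, h2, det_smul, det_smul, det_one_add_mul_comm]
  ring

omit [DecidableEq κ] in
theorem tendsto_scaled_resolvent (y : κ × Fin 2 → ℂ) :
    Filter.Tendsto (fun t : ℝ => t * (1 + ∑ i, (t + d i)⁻¹ * ‖y i‖ ^ 2))
      (nhdsWithin 0 (Set.Ioi 0)) (nhds (sqSum (Finset.univ.filter fun i => d i = 0) y)) := by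
  have hid : Filter.Tendsto (fun t : ℝ => t) (nhdsWithin 0 (Set.Ioi 0)) (nhds 0) :=
    Filter.tendsto_id.mono_left nhdsWithin_le_nhds
  have hterm : ∀ i ∈ Finset.univ, Filter.Tendsto (fun t : ℝ => t * ((t + d i)⁻¹ * ‖y i‖ ^ 2))
      (nhdsWithin 0 (Set.Ioi 0)) (nhds (if d i = 0 then ‖y i‖ ^ 2 else 0)) := by
    intro i _
    split_ifs with h
    · refine Filter.Tendsto.congr' ?_ tendsto_const_nhds
      filter_upwards [self_mem_nhdsWithin] with t ht
      have ht' : t ≠ 0 := ne_of_gt ht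
      rw [h, add_zero]
      field_simp
    · have h1 : Filter.Tendsto (fun t : ℝ => t * ((t + d i)⁻¹ * ‖y i‖ ^ 2))
          (nhdsWithin 0 (Set.Ioi 0)) (nhds (0 * ((0 + d i)⁻¹ * ‖y i‖ ^ 2))) :=
        hid.mul (((hid.add_const (d i)).inv₀ (by simpa using h)).mul_const _)
      simpa using h1
  have := hid.add (tendsto_finsetSum _ hterm)
  simp only [mul_add, mul_one, Finset.mul_sum]
  rw [sqSum, Finset.sum_filter]
  simpa using this

theorem gramDet_cons (hU : Uᴴ * U = 1) (hd : ∀ i, 0 ≤ d i)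
    (hX : (quatRows X)ᴴ * quatRows X = U * diagonal (fun i => (d i : ℂ)) * Uᴴ)
    (c : κ × Fin 2 → ℂ) :
    gramDet (Fin.cons c X : Fin (m + 1) → κ × Fin 2 → ℂ) =
      gramDet X * sqSum (Finset.univ.filter fun i => d i = 0) (Uᵀ *ᵥ c) ^ 2 := by
  have hcont : ∀ {k : ℕ} (Y : Fin k → κ × Fin 2 → ℂ), Filter.Tendsto
      (fun t : ℝ => ((t : ℂ) • 1 + quatRows Y * (quatRows Y)ᴴ).det)
      (nhdsWithin 0 (Set.Ioi 0)) (nhds (gramDet Y : ℂ)) := by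
    intro k Y
    have h : Continuous fun t : ℝ => ((t : ℂ) • 1 + quatRows Y * (quatRows Y)ᴴ).det := by
      fun_prop
    have h0 := h.tendsto 0
    simp only [Complex.ofReal_zero, zero_smul, zero_add] at h0
    rw [ofReal_gramDet]
    exact h0.mono_left nhdsWithin_le_nhds
  have hlim := (hcont X).mul ((Complex.continuous_ofReal.tendsto _).comp
    ((tendsto_scaled_resolvent (d := d) (Uᵀ *ᵥ c)).pow 2))
  have heq := tendsto_nhds_unique_of_eventuallyEq (hcont (Fin.cons c X)) hlim (by
    filter_upwards [self_mem_nhdsWithin] with t ht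
    have ht' : (t : ℂ) ≠ 0 := Complex.ofReal_ne_zero.2 (ne_of_gt ht)
    have h1 := det_smul_one_add_mul_conjTranspose (quatRows X) ht'
    have h2 := det_smul_one_add_mul_conjTranspose
      (quatRows (Fin.cons c X : Fin (m + 1) → κ × Fin 2 → ℂ)) ht'
    rw [gram_quatRows_cons, det_smul_one_add_add_gram_single (quatConj_vecMul_gram X) hU hd hX ht,
      show Fintype.card (Fin (m + 1) × Fin 2) = Fintype.card (Fin m × Fin 2) + 2 by
        simp; ring] at h2
    refine mul_left_cancel₀ (pow_ne_zero (Fintype.card (κ × Fin 2)) ht') ?_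
    rw [h2, Function.comp_apply, ← mul_assoc, ← mul_assoc, h1, pow_add]
    push_cast
    ring)
  exact_mod_cast heq

open scoped ComplexOrder in
theorem card_zero_eigenvalues (hU : Uᴴ * U = 1)
    (hX : (quatRows X)ᴴ * quatRows X = U * diagonal (fun i => (d i : ℂ)) * Uᴴ)
    (hne : gramDet X ≠ 0) :
    (Finset.univ.filter fun i => d i = 0).card + 2 * m = 2 * Fintype.card κ := by
  have hUu : IsUnit U.det := isUnit_det_of_left_inverse hU
  have hUu' : IsUnit Uᴴ.det := isUnit_det_of_right_inverse hU
  have hrank : (diagonal fun i => (d i : ℂ)).rank = 2 * m := by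
    have h1 : ((quatRows X)ᴴ * quatRows X).rank = (diagonal fun i => (d i : ℂ)).rank := by
      rw [hX, rank_mul_eq_left_of_isUnit_det _ _ hUu', rank_mul_eq_right_of_isUnit_det _ _ hUu]
    rw [← h1, rank_conjTranspose_mul_self, ← rank_self_mul_conjTranspose, rank_of_isUnit]
    · simp [mul_comm]
    · rw [isUnit_iff_isUnit_det, ← ofReal_gramDet]
      exact (Complex.ofReal_ne_zero.2 hne).isUnit
  rw [rank_diagonal, Fintype.card_subtype] at hrank
  have hsplit := Finset.card_filter_add_card_filter_not (s := Finset.univ) (fun i => d i = 0)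
  simp only [ne_eq, Complex.ofReal_eq_zero] at hrank
  rw [hrank, Finset.card_univ, Fintype.card_prod, Fintype.card_fin] at hsplit
  omega

end Spectral

end GramDeterminants

section Whitening

variable {κ : Type*} [Fintype κ] [DecidableEq κ] {m : ℕ}

/-- The weight `det (N N†)^a det (1 + N† N)^{-b}` for the quaternion matrix `N` with rows `X`. -/
noncomputable def gramWeight (a b : ℝ) (X : Fin m → κ × Fin 2 → ℂ) : ℝ :=
  gramDet X ^ a * oneAddGramDet X ^ (-b)

theorem one_le_oneAddGramDet (X : Fin m → κ × Fin 2 → ℂ) : 1 ≤ oneAddGramDet X := by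
  obtain ⟨U, d, hU, hd, hX⟩ := exists_unitary_diagonalization_gram (quatRows X)
  rw [oneAddGramDet_eq_prod hU hX]
  exact Finset.one_le_prod fun i _ => by linarith [hd i]

theorem oneAddGramDet_pos (X : Fin m → κ × Fin 2 → ℂ) : 0 < oneAddGramDet X :=
  one_pos.trans_le (one_le_oneAddGramDet X)

theorem gramWeight_nonneg (a b : ℝ) (X : Fin m → κ × Fin 2 → ℂ) : 0 ≤ gramWeight a b X := by
  have := gramDet_nonneg X
  have := oneAddGramDet_pos X
  unfold gramWeight
  positivity

theorem gramWeight_mul_oneAddGramDet (a b : ℝ) (X : Fin m → κ × Fin 2 → ℂ) :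
    gramWeight a b X * oneAddGramDet X = gramWeight a (b - 1) X := by
  rw [gramWeight, gramWeight, mul_assoc, ← Real.rpow_add_one (oneAddGramDet_pos X).ne']
  congr 2
  ring

/-- A linear change of variables for the last row of a quaternion matrix that reduces its
conditional weight given the other rows to the model weight. -/
theorem exists_whitening (X : Fin m → κ × Fin 2 → ℂ) :
    ∃ (L : Matrix (κ × Fin 2) (κ × Fin 2) ℂ) (Z : Finset (κ × Fin 2)),
      L.det ≠ 0 ∧ (‖L.det‖ ^ 2)⁻¹ = oneAddGramDet X ∧
      (gramDet X ≠ 0 → Z.card + 2 * m = 2 * Fintype.card κ) ∧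
      (∀ a b c, gramWeight a b (Fin.cons c X : Fin (m + 1) → κ × Fin 2 → ℂ) =
        gramWeight a b X * radialWeight Z (2 * a) (2 * b) (L *ᵥ c)) ∧
      ∀ B : (κ × Fin 2 → ℂ) →ₗ[ℂ] (κ × Fin 2 → ℂ) →ₗ[ℂ] ℂ,
        (∀ u w, B (u ᵥ* ((quatRows X)ᴴ * quatRows X)) w = 0) →
        (∀ u w, B w (u ᵥ* ((quatRows X)ᴴ * quatRows X)) = 0) →
        ∃ Q : Matrix (κ × Fin 2) (κ × Fin 2) ℂ, (∀ i k, Q i k ≠ 0 → i ∈ Z ∧ k ∈ Z) ∧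
          Q.trace = ∑ i, B (Pi.single i 1) (quatConj (Pi.single i 1)) ∧
          ∀ c, B c (quatConj c) = star (L *ᵥ c) ⬝ᵥ Q *ᵥ (L *ᵥ c) := by
  obtain ⟨U, d, hU, hd, hX⟩ := exists_unitary_diagonalization_gram (quatRows X)
  have hUU : U * Uᴴ = 1 := mul_eq_one_comm.1 hU
  have hd1 : ∀ i, 0 < 1 + d i := fun i => by linarith [hd i]
  have hs : ∀ i, 0 < √(1 + d i) := fun i => Real.sqrt_pos.2 (hd1 i)
  set L : Matrix (κ × Fin 2) (κ × Fin 2) ℂ :=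
    diagonal (fun i => (((√(1 + d i))⁻¹ : ℝ) : ℂ)) * Uᵀ with hL
  set Z := Finset.univ.filter fun i => d i = 0 with hZ
  have hLc : ∀ c i, (L *ᵥ c) i = (((√(1 + d i))⁻¹ : ℝ) : ℂ) * (Uᵀ *ᵥ c) i := by
    intro c i
    rw [hL, ← mulVec_mulVec, mulVec_diagonal]
  have hLn : ∀ c i, ‖(L *ᵥ c) i‖ ^ 2 = (1 + d i)⁻¹ * ‖(Uᵀ *ᵥ c) i‖ ^ 2 := by
    intro c i
    rw [hLc, norm_mul, mul_pow, Complex.norm_of_nonneg (inv_nonneg.2 (hs i).le), inv_pow,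
      Real.sq_sqrt (hd1 i).le]
  have hdetn : ‖L.det‖ ^ 2 = (oneAddGramDet X)⁻¹ := by
    have hUn : ‖U.det‖ ^ 2 = 1 := by
      have h := congrArg det hU
      rw [det_mul, det_conjTranspose, det_one] at h
      have h2 : ((‖U.det‖ ^ 2 : ℝ) : ℂ) = 1 := by
        rw [← h]; push_cast; exact (Complex.conj_mul' _).symm
      exact_mod_cast h2
    rw [hL, det_mul, det_transpose, det_diagonal, norm_mul, mul_pow, hUn, mul_one,
      oneAddGramDet_eq_prod hU hX, norm_prod, ← Finset.prod_pow, ← Finset.prod_inv_distrib]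
    refine Finset.prod_congr rfl fun i _ => ?_
    rw [Complex.norm_of_nonneg (inv_nonneg.2 (hs i).le), inv_pow, Real.sq_sqrt (hd1 i).le]
  have hdet0 : L.det ≠ 0 := by
    intro h
    rw [h, norm_zero] at hdetn
    have := inv_pos.2 (oneAddGramDet_pos X)
    rw [← hdetn] at this
    norm_num at this
  refine ⟨L, Z, hdet0, by rw [hdetn, inv_inv], card_zero_eigenvalues hU hX, ?_, ?_⟩
  · intro a b c
    have h1 : ∑ i, (1 + d i)⁻¹ * ‖(Uᵀ *ᵥ c) i‖ ^ 2 = sqSum Finset.univ (L *ᵥ c) :=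
      Finset.sum_congr rfl fun i _ => (hLn c i).symm
    have h2 : sqSum Z (Uᵀ *ᵥ c) = sqSum Z (L *ᵥ c) := by
      refine Finset.sum_congr rfl fun i hi => ?_
      rw [hLn, (Finset.mem_filter.1 hi).2]
      simp
    have h3 := sqSum_nonneg Z (L *ᵥ c)
    have h4 := sqSum_nonneg Finset.univ (L *ᵥ c)
    rw [gramWeight, gramDet_cons hU hd hX, oneAddGramDet_cons hU hd hX, h1, h2,
      Real.mul_rpow (gramDet_nonneg X) (by positivity),
      Real.mul_rpow (oneAddGramDet_pos X).le (by positivity), ← Real.rpow_natCast,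
      ← Real.rpow_natCast, ← Real.rpow_mul h3, ← Real.rpow_mul (by positivity), gramWeight,
      radialWeight]
    push_cast
    rw [mul_neg]
    ring
  · intro B hB1 hB2
    set r : κ × Fin 2 → κ × Fin 2 → ℂ := fun i => Uᴴ i with hr
    have heig : ∀ i, r i ᵥ* ((quatRows X)ᴴ * quatRows X) = (d i : ℂ) • r i := by
      intro i
      have h1 : Uᴴ * ((quatRows X)ᴴ * quatRows X) = diagonal (fun i => (d i : ℂ)) * Uᴴ := by
        rw [hX, mul_assoc, ← mul_assoc Uᴴ, hU, one_mul]
      have h2 : r i ᵥ* ((quatRows X)ᴴ * quatRows X) = (Uᴴ * ((quatRows X)ᴴ * quatRows X)) i := rfl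
      rw [h2, h1]
      ext j
      rw [diagonal_mul]
      rfl
    have hz1 : ∀ i w, d i ≠ 0 → B (r i) w = 0 := by
      intro i w hi
      have h := hB1 (r i) w
      rw [heig, map_smul, LinearMap.smul_apply, smul_eq_mul] at h
      exact (mul_eq_zero.1 h).resolve_left (Complex.ofReal_ne_zero.2 hi)
    have hz2 : ∀ i w, d i ≠ 0 → B w (quatConj (r i)) = 0 := by
      intro i w hi
      have h := hB2 (quatConj (r i)) w
      rw [← quatConj_vecMul_gram, heig, quatConj_smul, map_smul, smul_eq_mul] at h
      exact (mul_eq_zero.1 h).resolve_left (by simpa using hi)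
    have hexp : ∀ c, c = ∑ i, ((√(1 + d i) : ℝ) : ℂ) • (L *ᵥ c) i • r i := by
      intro c
      have h1 : c = (Uᵀ *ᵥ c) ᵥ* Uᴴ := by
        rw [mulVec_transpose, vecMul_vecMul, hUU, vecMul_one]
      conv_lhs => rw [h1, vecMul_eq_sum]
      refine Finset.sum_congr rfl fun i _ => ?_
      rw [hLc, smul_smul, ← mul_assoc, ← Complex.ofReal_mul, mul_inv_cancel₀ (hs i).ne',
        Complex.ofReal_one, one_mul]
    refine ⟨of fun i k => ((√(1 + d i) : ℝ) : ℂ) * ((√(1 + d k) : ℝ) : ℂ) *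
      B (r k) (quatConj (r i)), ?_, ?_, ?_⟩
    · intro i k hik
      rw [of_apply] at hik
      refine ⟨?_, ?_⟩
      · by_contra hi
        exact hik (by rw [hz2 i _ (by simpa [hZ] using hi), mul_zero])
      · by_contra hk
        exact hik (by rw [hz1 k _ (by simpa [hZ] using hk), mul_zero])
    · have h1 : ∀ i, ((√(1 + d i) : ℝ) : ℂ) * ((√(1 + d i) : ℝ) : ℂ) *
          B (r i) (quatConj (r i)) = B (r i) (quatConj (r i)) := by
        intro i
        by_cases hi : d i = 0
        · simp [hi]
        · rw [hz1 i _ hi, mul_zero]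
      have h2 : ∀ i, B (r i) (quatConj (r i)) = ∑ k, ∑ l, U l i * Uᴴ i k *
          B (Pi.single k 1) (quatConj (Pi.single l 1)) := by
        intro i
        have h3 : r i = ∑ k, Uᴴ i k • (Pi.single k 1 : κ × Fin 2 → ℂ) := pi_eq_sum_univ' _
        conv_lhs => rw [h3]
        rw [quatConj_sum, LinearMap.map_sum₂]
        refine Finset.sum_congr rfl fun k _ => ?_
        rw [map_sum]
        refine Finset.sum_congr rfl fun l _ => ?_
        rw [quatConj_smul, map_smul, map_smul, LinearMap.smul_apply, conjTranspose_apply,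
          conjTranspose_apply, star_star, smul_eq_mul, smul_eq_mul, mul_assoc]
      simp only [trace, diag_apply, of_apply, h1]
      simp_rw [h2]
      rw [Finset.sum_comm]
      refine Finset.sum_congr rfl fun k _ => ?_
      rw [Finset.sum_comm]
      simp_rw [← Finset.sum_mul]
      rw [Finset.sum_eq_single k]
      · rw [← mul_apply, hUU, one_apply_eq, one_mul]
      · intro l _ hl
        rw [← mul_apply, hUU, one_apply_ne hl, zero_mul]
      · simp
    · intro c
      conv_lhs => rw [hexp c]
      rw [quatConj_sum, LinearMap.map_sum₂]
      generalize L *ᵥ c = y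
      simp only [dotProduct, mulVec, Finset.mul_sum, map_sum, of_apply]
      rw [Finset.sum_comm]
      refine Finset.sum_congr rfl fun i _ => Finset.sum_congr rfl fun k _ => ?_
      simp only [quatConj_smul, map_smul, LinearMap.smul_apply, smul_eq_mul, Pi.star_apply]
      rw [show star (((√(1 + d i) : ℝ) : ℂ)) = ((√(1 + d i) : ℝ) : ℂ) from Complex.conj_ofReal _]
      ring

end Whitening

section RowIntegral

variable {κ : Type*} [Fintype κ] [DecidableEq κ] {m : ℕ}
  (μ : Measure (κ × Fin 2 → ℂ)) [μ.IsAddHaarMeasure]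

theorem gramWeight_eq_zero {a b : ℝ} (ha : a ≠ 0) {X : Fin m → κ × Fin 2 → ℂ}
    (hX : gramDet X = 0) : gramWeight a b X = 0 := by
  rw [gramWeight, hX, Real.zero_rpow ha, zero_mul]

theorem integrable_gramWeight_cons {a b : ℝ} (ha : 0 ≤ a) (hab : Fintype.card κ + a < b)
    (X : Fin m → κ × Fin 2 → ℂ) :
    Integrable (fun c => gramWeight a b (Fin.cons c X : Fin (m + 1) → κ × Fin 2 → ℂ)) μ := by
  obtain ⟨L, Z, hL, -, -, hw, -⟩ := exists_whitening X
  simp_rw [hw]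
  refine (integrable_comp_mulVec L hL (integrable_radialWeight μ Z (by positivity) ?_)).const_mul _
  simp only [Fintype.card_prod, Fintype.card_fin]
  push_cast
  linarith

/-- Integrating out one row of the weight. -/
theorem integral_gramWeight_cons {a : ℝ} (ha : 0 ≤ a) (b : ℝ)
    (X : Fin m → κ × Fin 2 → ℂ) {Z : Finset (κ × Fin 2)}
    (hZ : Z.card + 2 * m = 2 * Fintype.card κ) :
    ∫ c, gramWeight a b (Fin.cons c X : Fin (m + 1) → κ × Fin 2 → ℂ) ∂μ =
      (∫ x, radialWeight Z (2 * a) (2 * b) x ∂μ) * gramWeight a (b - 1) X := by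
  obtain ⟨L, Y, hL, hdet, hcard, hw, -⟩ := exists_whitening X
  have hYZ : gramWeight a b X * ∫ x, radialWeight Y (2 * a) (2 * b) x ∂μ =
      gramWeight a b X * ∫ x, radialWeight Z (2 * a) (2 * b) x ∂μ := by
    by_cases hX : gramDet X = 0
    · rcases ha.eq_or_lt with rfl | ha
      · simp [radialWeight]
      · rw [gramWeight_eq_zero ha.ne' hX, zero_mul, zero_mul]
    · rw [integral_radialWeight_congr_card μ
        (show Y.card = Z.card by have := hcard hX; omega)]
  simp_rw [hw]
  rw [integral_const_mul, integral_comp_mulVec μ L hL, hdet, smul_eq_mul, mul_left_comm, hYZ,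
    ← gramWeight_mul_oneAddGramDet]
  ring

/-- Integrating out one row of the weight against a quadratic function of that row which only
depends on its component orthogonal to the other rows. -/
theorem integral_bilin_mul_gramWeight_cons {a b : ℝ} (ha : 0 ≤ a)
    (hab : Fintype.card κ + a + 1 / 2 < b)
    (X : Fin m → κ × Fin 2 → ℂ) {Z : Finset (κ × Fin 2)}
    (hZ : Z.card + 2 * m = 2 * Fintype.card κ)
    (B : (κ × Fin 2 → ℂ) →ₗ[ℂ] (κ × Fin 2 → ℂ) →ₗ[ℂ] ℂ)
    (hB1 : ∀ u w, B (u ᵥ* ((quatRows X)ᴴ * quatRows X)) w = 0)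
    (hB2 : ∀ u w, B w (u ᵥ* ((quatRows X)ᴴ * quatRows X)) = 0)
    (hB0 : gramDet X = 0 → B = 0) :
    ∫ c, B c (quatConj c) *
        (gramWeight a b (Fin.cons c X : Fin (m + 1) → κ × Fin 2 → ℂ) : ℂ) ∂μ =
      (∑ i, B (Pi.single i 1) (quatConj (Pi.single i 1))) / Z.card *
        ((∫ x, radialWeight Z (2 * a + 1) (2 * b) x ∂μ : ℝ) : ℂ) * (gramWeight a (b - 1) X : ℂ) := by
  by_cases hX : gramDet X = 0
  · simp [hB0 hX]
  obtain ⟨L, Y, hL, hdet, hcard, hw, hQ⟩ := exists_whitening X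
  obtain ⟨Q, hQY, htr, hQ⟩ := hQ B hB1 hB2
  have hYZ : Y.card = Z.card := by have := hcard hX; omega
  have hint : ∀ c, B c (quatConj c) *
      (gramWeight a b (Fin.cons c X : Fin (m + 1) → κ × Fin 2 → ℂ) : ℂ) =
      (gramWeight a b X : ℂ) * (star (L *ᵥ c) ⬝ᵥ Q *ᵥ (L *ᵥ c) *
        (radialWeight Y (2 * a) (2 * b) (L *ᵥ c) : ℂ)) := by
    intro c
    rw [hQ, hw]
    push_cast
    ring
  simp_rw [hint]
  rw [integral_const_mul, integral_comp_mulVec μ L hL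
      (fun x => star x ⬝ᵥ Q *ᵥ x * (radialWeight Y (2 * a) (2 * b) x : ℂ)),
    integral_quadForm_mul_radialWeight μ hQY (by positivity) (by
      simp only [Fintype.card_prod, Fintype.card_fin]
      push_cast
      linarith), htr, hdet, hYZ, integral_radialWeight_congr_card μ hYZ,
    ← gramWeight_mul_oneAddGramDet, Complex.real_smul]
  push_cast
  ring

end RowIntegral

section QuaternionMinors

variable {κ : Type*} {m : ℕ}

/-- The minor of a quaternion matrix on all rows and the columns selected by `e`. -/
noncomputable def quatMinor (e : Fin m → κ) (X : Fin m → κ × Fin 2 → ℂ) : ℂ :=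
  ((quatRows X).submatrix id (Prod.map e id)).det

/-- The minor of a quaternion matrix with the two rows of its first quaternion row replaced
by `u` and `w`. -/
noncomputable def minorMatrix (e : Fin (m + 1) → κ) (X : Fin m → κ × Fin 2 → ℂ)
    (u w : κ × Fin 2 → ℂ) : Matrix (Fin (m + 1) × Fin 2) (Fin (m + 1) × Fin 2) ℂ :=
  ((((quatRows (Fin.cons 0 X : Fin (m + 1) → κ × Fin 2 → ℂ)).submatrix id
    (Prod.map e id)).updateRow (0, 0) (u ∘ Prod.map e id)).updateRow (0, 1) (w ∘ Prod.map e id))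

theorem minorMatrix_zero_zero (e : Fin (m + 1) → κ) (X : Fin m → κ × Fin 2 → ℂ)
    (u w : κ × Fin 2 → ℂ) : minorMatrix e X u w (0, 0) = u ∘ Prod.map e id := by
  rw [minorMatrix, updateRow_ne (by simp), updateRow_self]

theorem minorMatrix_zero_one (e : Fin (m + 1) → κ) (X : Fin m → κ × Fin 2 → ℂ)
    (u w : κ × Fin 2 → ℂ) : minorMatrix e X u w (0, 1) = w ∘ Prod.map e id := by
  rw [minorMatrix, updateRow_self]

theorem minorMatrix_succ (e : Fin (m + 1) → κ) (X : Fin m → κ × Fin 2 → ℂ)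
    (u w : κ × Fin 2 → ℂ) (a : Fin m) (s : Fin 2) :
    minorMatrix e X u w (a.succ, s) = quatRows X (a, s) ∘ Prod.map e id := by
  rw [minorMatrix, updateRow_ne (by simp), updateRow_ne (by simp)]
  ext j
  fin_cases s <;> simp

/-- The determinant of `minorMatrix` as a bilinear form. -/
noncomputable def minorForm (e : Fin (m + 1) → κ) (X : Fin m → κ × Fin 2 → ℂ) :
    (κ × Fin 2 → ℂ) →ₗ[ℂ] (κ × Fin 2 → ℂ) →ₗ[ℂ] ℂ :=
  LinearMap.mk₂ ℂ (fun u w => (minorMatrix e X u w).det)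
    (fun u u' w => by
      unfold minorMatrix
      simp only [updateRow_comm _ (show ((0 : Fin (m + 1)), (0 : Fin 2)) ≠ (0, 1) by simp)]
      exact det_updateRow_add _ _ _ _)
    (fun t u w => by
      unfold minorMatrix
      simp only [updateRow_comm _ (show ((0 : Fin (m + 1)), (0 : Fin 2)) ≠ (0, 1) by simp)]
      exact det_updateRow_smul _ _ _ _)
    (fun u w w' => det_updateRow_add _ _ _ _)
    (fun t u w => det_updateRow_smul _ _ _ _)

theorem minorForm_apply (e : Fin (m + 1) → κ) (X : Fin m → κ × Fin 2 → ℂ)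
    (u w : κ × Fin 2 → ℂ) : minorForm e X u w = (minorMatrix e X u w).det := rfl

theorem quatMinor_cons (e : Fin (m + 1) → κ) (X : Fin m → κ × Fin 2 → ℂ) (c : κ × Fin 2 → ℂ) :
    quatMinor e (Fin.cons c X : Fin (m + 1) → κ × Fin 2 → ℂ) = minorForm e X c (quatConj c) := by
  rw [minorForm_apply, quatMinor]
  congr 1
  ext ⟨a, s⟩ j
  refine Fin.cases ?_ (fun a => ?_) a
  · fin_cases s
    · exact (congrFun (minorMatrix_zero_zero e X c (quatConj c)) j).symm
    · exact (congrFun (minorMatrix_zero_one e X c (quatConj c)) j).symm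
  · rw [minorMatrix_succ]
    fin_cases s <;> simp

theorem minorForm_self (e : Fin (m + 1) → κ) (X : Fin m → κ × Fin 2 → ℂ) (u : κ × Fin 2 → ℂ) :
    minorForm e X u u = 0 := by
  rw [minorForm_apply]
  refine det_zero_of_row_eq (i := (0, 0)) (j := (0, 1)) (by simp) ?_
  rw [minorMatrix_zero_zero, minorMatrix_zero_one]

theorem minorForm_swap (e : Fin (m + 1) → κ) (X : Fin m → κ × Fin 2 → ℂ)
    (u w : κ × Fin 2 → ℂ) : minorForm e X w u = -minorForm e X u w := by
  have h := minorForm_self e X (u + w)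
  simp only [map_add, LinearMap.add_apply, minorForm_self, zero_add, add_zero] at h
  exact eq_neg_of_add_eq_zero_left h

theorem minorForm_row_left (e : Fin (m + 1) → κ) (X : Fin m → κ × Fin 2 → ℂ)
    (p : Fin m × Fin 2) (w : κ × Fin 2 → ℂ) : minorForm e X (quatRows X p) w = 0 := by
  rw [minorForm_apply]
  refine det_zero_of_row_eq (i := (0, 0)) (j := (p.1.succ, p.2))
    (fun h => Fin.succ_ne_zero _ (congrArg Prod.fst h).symm) ?_
  rw [minorMatrix_zero_zero, minorMatrix_succ]

variable [Fintype κ]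

theorem minorForm_gram_left (e : Fin (m + 1) → κ) (X : Fin m → κ × Fin 2 → ℂ)
    (u w : κ × Fin 2 → ℂ) :
    minorForm e X (u ᵥ* ((quatRows X)ᴴ * quatRows X)) w = 0 := by
  rw [← vecMul_vecMul, vecMul_eq_sum, LinearMap.map_sum₂]
  refine Finset.sum_eq_zero fun p _ => ?_
  rw [map_smul, LinearMap.smul_apply, minorForm_row_left, smul_zero]

theorem minorForm_gram_right (e : Fin (m + 1) → κ) (X : Fin m → κ × Fin 2 → ℂ)
    (u w : κ × Fin 2 → ℂ) :
    minorForm e X w (u ᵥ* ((quatRows X)ᴴ * quatRows X)) = 0 := by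
  rw [minorForm_swap, minorForm_gram_left, neg_zero]

open scoped ComplexOrder in
theorem exists_vecMul_quatRows_eq_zero {X : Fin m → κ × Fin 2 → ℂ} (hX : gramDet X = 0) :
    ∃ y : Fin m × Fin 2 → ℂ, y ≠ 0 ∧ y ᵥ* quatRows X = 0 := by
  obtain ⟨y, hy, h⟩ := exists_vecMul_eq_zero_iff.2
    (show (quatRows X * (quatRows X)ᴴ).det = 0 by rw [← ofReal_gramDet, hX, Complex.ofReal_zero])
  exact ⟨y, hy, (vecMul_self_mul_conjTranspose_eq_zero _ _).1 h⟩

theorem minorForm_eq_zero {X : Fin m → κ × Fin 2 → ℂ} (hX : gramDet X = 0)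
    (e : Fin (m + 1) → κ) : minorForm e X = 0 := by
  obtain ⟨y, hy, h⟩ := exists_vecMul_quatRows_eq_zero hX
  refine LinearMap.ext₂ fun u w => ?_
  rw [minorForm_apply]
  refine exists_vecMul_eq_zero_iff.1
    ⟨fun p => Fin.cases 0 (fun a => y (a, p.2)) p.1, fun h0 => hy ?_, ?_⟩
  · ext ⟨a, s⟩
    exact congrFun h0 (a.succ, s)
  · ext j
    have h1 := congrFun h (Prod.map e id j)
    simp only [vecMul, dotProduct, Fintype.sum_prod_type, Fin.sum_univ_succ (n := m),
      minorMatrix_succ, Fin.cases_zero, Fin.cases_succ, zero_mul, Finset.sum_const_zero,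
      zero_add] at h1 ⊢
    exact h1

end QuaternionMinors

section MinorTrace

variable {κ : Type*} {m : ℕ}

theorem sign_prodCongrLeft_const_fin_two {α : Type*} [DecidableEq α] [Fintype α]
    (τ : Equiv.Perm α) :
    Equiv.Perm.sign (Equiv.prodCongrLeft (fun _ : Fin 2 => τ)) = 1 := by
  rw [Equiv.Perm.sign_prodCongrLeft, Finset.prod_const, Finset.card_fin, Int.units_sq]

theorem minorForm_comp_perm (e : Fin (m + 1) → κ) (τ : Equiv.Perm (Fin (m + 1)))
    (X : Fin m → κ × Fin 2 → ℂ) (u w : κ × Fin 2 → ℂ) :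
    minorForm (e ∘ τ) X u w = minorForm e X u w := by
  have h : minorMatrix (e ∘ τ) X u w =
      (minorMatrix e X u w).submatrix id (Equiv.prodCongrLeft (fun _ : Fin 2 => τ)) := by
    ext ⟨a, s⟩ j
    refine Fin.cases ?_ (fun a => ?_) a
    · fin_cases s
      · exact (congrFun (minorMatrix_zero_zero _ X u w) j).trans
          (congrFun (minorMatrix_zero_zero e X u w) (τ j.1, j.2)).symm
      · exact (congrFun (minorMatrix_zero_one _ X u w) j).trans
          (congrFun (minorMatrix_zero_one e X u w) (τ j.1, j.2)).symm
    · exact (congrFun (minorMatrix_succ _ X u w a s) j).trans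
          (congrFun (minorMatrix_succ e X u w a s) (τ j.1, j.2)).symm
  rw [minorForm_apply, minorForm_apply, h, det_permute', sign_prodCongrLeft_const_fin_two]
  simp

variable [DecidableEq κ]

theorem minorForm_single_zero {e : Fin (m + 1) → κ} (he : Function.Injective e)
    (X : Fin m → κ × Fin 2 → ℂ) :
    minorForm e X (Pi.single (e 0, 0) 1) (Pi.single (e 0, 1) 1) = quatMinor (e ∘ Fin.succ) X := by
  let E : Fin 2 ⊕ (Fin m × Fin 2) ≃ Fin (m + 1) × Fin 2 :=
    { toFun := Sum.elim (fun s => (0, s)) (fun p => (p.1.succ, p.2))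
      invFun := fun p => Fin.cases (Sum.inl p.2) (fun a => Sum.inr (a, p.2)) p.1
      left_inv := by rintro (s | p) <;> simp
      right_inv := by
        rintro ⟨a, s⟩
        refine Fin.cases ?_ (fun a => ?_) a <;> simp }
  set M := minorMatrix e X (Pi.single (e 0, 0) 1) (Pi.single (e 0, 1) 1) with hM
  have h0 : M (0, 0) = Pi.single (0, 0) 1 := by
    rw [hM, minorMatrix_zero_zero]
    ext ⟨b, t⟩
    simp [Pi.single_apply, he.eq_iff]
  have h1 : M (0, 1) = Pi.single (0, 1) 1 := by
    rw [hM, minorMatrix_zero_one]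
    ext ⟨b, t⟩
    simp [Pi.single_apply, he.eq_iff]
  have hblocks : M.submatrix E E = fromBlocks 1 0
      (of fun p s => quatRows X p (e 0, s))
      ((quatRows X).submatrix id (Prod.map (e ∘ Fin.succ) id)) := by
    ext (s | p) (t | q)
    · fin_cases s <;> fin_cases t <;> simp [E, h0, h1]
    · fin_cases s <;> simp [E, h0, h1]
    · simp [E, hM, minorMatrix_succ]
    · simp only [E, hM, submatrix_apply, Equiv.coe_fn_mk, Sum.elim_inr, minorMatrix_succ]
      rfl
  rw [minorForm_apply, ← hM, ← det_submatrix_equiv_self E, hblocks, det_fromBlocks_zero₁₂,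
    det_one, one_mul, quatMinor]

theorem minorForm_single {e : Fin (m + 1) → κ} (he : Function.Injective e)
    (X : Fin m → κ × Fin 2 → ℂ) (j : Fin (m + 1)) :
    minorForm e X (Pi.single (e j, 0) 1) (Pi.single (e j, 1) 1) =
      quatMinor (e ∘ j.succAbove) X := by
  have h := minorForm_single_zero (he.comp j.cycleRange.symm.injective) X
  rw [minorForm_comp_perm] at h
  simp only [Function.comp_apply, Fin.cycleRange_symm_zero] at h
  rw [h]
  congr 1
  ext a
  simp [Fin.cycleRange_symm_succ]

theorem minorForm_single_eq_zero {e : Fin (m + 1) → κ} {k : κ} (hk : k ∉ Set.range e)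
    (X : Fin m → κ × Fin 2 → ℂ) (w : κ × Fin 2 → ℂ) :
    minorForm e X (Pi.single (k, 0) 1) w = 0 := by
  rw [minorForm_apply]
  refine det_eq_zero_of_row_eq_zero (0, 0) fun j => ?_
  rw [minorMatrix_zero_zero, Function.comp_apply, Pi.single_eq_of_ne]
  exact fun h => hk ⟨j.1, congrArg Prod.fst h⟩

theorem quatConj_single_zero (k : κ) :
    quatConj (Pi.single (k, 0) 1) = Pi.single (k, 1) 1 := by
  ext ⟨l, t⟩
  fin_cases t <;> simp [quatConj, Pi.single_apply, apply_ite]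

theorem quatConj_single_one (k : κ) :
    quatConj (Pi.single (k, 1) 1) = -Pi.single (k, 0) 1 := by
  rw [← quatConj_single_zero, quatConj_quatConj]

theorem minorForm_trace [Fintype κ] {e : Fin (m + 1) → κ} (he : Function.Injective e)
    (X : Fin m → κ × Fin 2 → ℂ) :
    ∑ i, minorForm e X (Pi.single i 1) (quatConj (Pi.single i 1)) =
      2 * ∑ j : Fin (m + 1), quatMinor (e ∘ j.succAbove) X := by
  simp only [Fintype.sum_prod_type, Fin.sum_univ_two, quatConj_single_zero, quatConj_single_one,
    map_neg]
  simp only [minorForm_swap e X (Pi.single (_, 0) 1) (Pi.single (_, 1) 1), neg_neg, ← two_mul]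
  rw [← Finset.mul_sum]
  congr 1
  refine (Fintype.sum_of_injective e he _ _ (fun k hk => minorForm_single_eq_zero hk X _)
    fun j => (minorForm_single he X j).symm).symm

end MinorTrace

section MinorRowIntegral

variable {κ : Type*} [Fintype κ] [DecidableEq κ] {m : ℕ} (μ : Measure (κ × Fin 2 → ℂ))
  [μ.IsAddHaarMeasure]

/-- Integrating out one row of the weight against a quaternion minor. -/
theorem integral_quatMinor_mul_gramWeight_cons {a b : ℝ} (ha : 0 ≤ a)
    (hab : Fintype.card κ + a + 1 / 2 < b) {e : Fin (m + 1) → κ} (he : Function.Injective e)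
    (X : Fin m → κ × Fin 2 → ℂ) {Z : Finset (κ × Fin 2)}
    (hZ : Z.card + 2 * m = 2 * Fintype.card κ) :
    ∫ c, quatMinor e (Fin.cons c X : Fin (m + 1) → κ × Fin 2 → ℂ) *
        (gramWeight a b (Fin.cons c X : Fin (m + 1) → κ × Fin 2 → ℂ) : ℂ) ∂μ =
      ((a + (Fintype.card κ - m : ℝ)) / ((Fintype.card κ - m : ℝ) *
        (b - a - 1 / 2 - Fintype.card κ)) * ∫ x, radialWeight Z (2 * a) (2 * b) x ∂μ : ℝ) *
        ((∑ j : Fin (m + 1), quatMinor (e ∘ j.succAbove) X) * (gramWeight a (b - 1) X : ℂ)) := by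
  have hm : m + 1 ≤ Fintype.card κ := by simpa using Fintype.card_le_of_injective e he
  have hm' : (0 : ℝ) < Fintype.card κ - m := by
    have : ((m + 1 : ℕ) : ℝ) ≤ Fintype.card κ := by exact_mod_cast hm
    push_cast at this
    linarith
  have hZr : (Z.card : ℝ) = 2 * (Fintype.card κ - m) := by
    have : (Z.card : ℝ) + 2 * m = 2 * Fintype.card κ := by exact_mod_cast hZ
    linarith
  have hZne : Z.Nonempty := by
    rw [← Finset.card_pos]
    omega
  have hd : 0 < b - a - 1 / 2 - Fintype.card κ := by linarith
  simp_rw [quatMinor_cons]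
  rw [integral_bilin_mul_gramWeight_cons μ ha hab X hZ (minorForm e X) (minorForm_gram_left e X)
    (minorForm_gram_right e X) (fun h => minorForm_eq_zero h e), minorForm_trace he]
  have hrec := integral_radialWeight_add_one_left μ hZne (a := 2 * a) (b := 2 * b)
    (by positivity) (by
      simp only [Fintype.card_prod, Fintype.card_fin]
      push_cast
      linarith)
  simp only [Fintype.card_prod, Fintype.card_fin] at hrec
  push_cast at hrec
  rw [hZr] at hrec
  have key : (∫ x, radialWeight Z (2 * a + 1) (2 * b) x ∂μ) =
      (a + (Fintype.card κ - m : ℝ)) / (b - a - 1 / 2 - Fintype.card κ) *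
        ∫ x, radialWeight Z (2 * a) (2 * b) x ∂μ := by
    rw [div_mul_eq_mul_div, eq_div_iff hd.ne']
    linarith
  have hZc : (Z.card : ℂ) = ((2 * (Fintype.card κ - m) : ℝ) : ℂ) := by exact_mod_cast hZr
  rw [key, hZc]
  have h1 : ((Fintype.card κ - m : ℝ) : ℂ) ≠ 0 := by exact_mod_cast hm'.ne'
  have h2 : ((b - a - 1 / 2 - Fintype.card κ : ℝ) : ℂ) ≠ 0 := by exact_mod_cast hd.ne'
  push_cast at h1 h2 ⊢
  field_simp

end MinorRowIntegral

section Bounds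

variable {κ : Type*} [Fintype κ] [DecidableEq κ] {m : ℕ}

omit [Fintype κ] [DecidableEq κ] in
theorem continuous_quatConj : Continuous (quatConj : (κ × Fin 2 → ℂ) → κ × Fin 2 → ℂ) := by
  refine continuous_pi fun ⟨k, s⟩ => ?_
  fin_cases s
  · exact (continuous_apply (k, (1 : Fin 2))).star.neg
  · exact (continuous_apply (k, (0 : Fin 2))).star

omit [Fintype κ] [DecidableEq κ] in
theorem continuous_quatRows {ρ : Type*} :
    Continuous (quatRows : (ρ → κ × Fin 2 → ℂ) → Matrix (ρ × Fin 2) (κ × Fin 2) ℂ) := by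
  refine continuous_pi fun ⟨a, s⟩ => ?_
  fin_cases s
  · exact continuous_apply a
  · exact continuous_quatConj.comp (continuous_apply a)

omit [DecidableEq κ] in
theorem continuous_gramDet : Continuous (gramDet : (Fin m → κ × Fin 2 → ℂ) → ℝ) :=
  Complex.continuous_re.comp
    (continuous_quatRows.matrix_mul continuous_quatRows.matrix_conjTranspose).matrix_det

theorem continuous_oneAddGramDet : Continuous (oneAddGramDet : (Fin m → κ × Fin 2 → ℂ) → ℝ) :=
  Complex.continuous_re.comp (continuous_const.add
    (continuous_quatRows.matrix_conjTranspose.matrix_mul continuous_quatRows)).matrix_det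

theorem measurable_gramWeight (a b : ℝ) :
    Measurable (gramWeight a b : (Fin m → κ × Fin 2 → ℂ) → ℝ) :=
  (continuous_gramDet.measurable.pow_const a).mul
    (continuous_oneAddGramDet.measurable.pow_const (-b))

omit [DecidableEq κ] [Fintype κ] in
theorem quatRows_comp_perm (σ : Equiv.Perm (Fin m)) (X : Fin m → κ × Fin 2 → ℂ) :
    quatRows (X ∘ σ) = (quatRows X).submatrix (Equiv.prodCongrLeft fun _ : Fin 2 => σ) id := by
  ext ⟨a, s⟩ j
  fin_cases s <;> rfl

theorem gramWeight_comp_perm (a b : ℝ) (σ : Equiv.Perm (Fin m)) (X : Fin m → κ × Fin 2 → ℂ) :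
    gramWeight a b (X ∘ σ) = gramWeight a b X := by
  have h1 : gramDet (X ∘ σ) = gramDet X := by
    rw [gramDet, quatRows_comp_perm, conjTranspose_submatrix, ← submatrix_mul _ _ _ _ _
      Function.bijective_id, det_submatrix_equiv_self, gramDet]
  have h2 : oneAddGramDet (X ∘ σ) = oneAddGramDet X := by
    rw [oneAddGramDet, quatRows_comp_perm, conjTranspose_submatrix, submatrix_mul_equiv,
      submatrix_id_id, oneAddGramDet]
  rw [gramWeight, gramWeight, h1, h2]

theorem gramWeight_insertNth (a b : ℝ) (i : Fin (m + 1)) (c : κ × Fin 2 → ℂ)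
    (X : Fin m → κ × Fin 2 → ℂ) :
    gramWeight a b (i.insertNth c X : Fin (m + 1) → κ × Fin 2 → ℂ) =
      gramWeight a b (Fin.cons c X : Fin (m + 1) → κ × Fin 2 → ℂ) := by
  rw [← gramWeight_comp_perm a b i.cycleRange (Fin.cons c X : Fin (m + 1) → κ × Fin 2 → ℂ),
    Fin.cons_comp_cycleRange]

theorem norm_quatRows_sq_le (X : Fin m → κ × Fin 2 → ℂ) (p : Fin m × Fin 2) (q : κ × Fin 2) :
    ‖quatRows X p q‖ ^ 2 ≤ oneAddGramDet X := by
  obtain ⟨U, d, hU, hd, hX⟩ := exists_unitary_diagonalization_gram (quatRows X)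
  have htr : ∑ q, ∑ p, ‖quatRows X p q‖ ^ 2 = ∑ i, d i := by
    have h := congrArg trace hX
    rw [trace_mul_cycle, hU, one_mul, trace_diagonal] at h
    simp only [trace, diag_apply, mul_apply, conjTranspose_apply, RCLike.star_def,
      Complex.conj_mul'] at h
    exact_mod_cast h
  have hle : ∀ s : Finset (κ × Fin 2), 1 + ∑ i ∈ s, d i ≤ ∏ i ∈ s, (1 + d i) := by
    intro s
    induction s using Finset.induction_on with
    | empty => simp
    | insert i s hi ih =>
      rw [Finset.sum_insert hi, Finset.prod_insert hi]
      nlinarith [hd i, Finset.sum_nonneg (s := s) fun i _ => hd i]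
  calc ‖quatRows X p q‖ ^ 2 ≤ ∑ p, ‖quatRows X p q‖ ^ 2 :=
        Finset.single_le_sum (f := fun p => ‖quatRows X p q‖ ^ 2) (fun _ _ => by positivity)
          (Finset.mem_univ p)
    _ ≤ ∑ q, ∑ p, ‖quatRows X p q‖ ^ 2 :=
        Finset.single_le_sum (f := fun q => ∑ p, ‖quatRows X p q‖ ^ 2)
          (fun _ _ => by positivity) (Finset.mem_univ q)
    _ ≤ oneAddGramDet X := by
        rw [htr, oneAddGramDet_eq_prod hU hX]
        linarith [hle Finset.univ]

/-- Minors of a quaternion matrix are controlled by the determinant `det (1 + N† N)`. -/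
theorem norm_det_submatrix_quatRows_le {τ : Type*} [Fintype τ] [DecidableEq τ] {k : ℕ}
    (hk : Fintype.card τ ≤ 2 * k) (f : τ → Fin m × Fin 2) (g : τ → κ × Fin 2)
    (X : Fin m → κ × Fin 2 → ℂ) :
    ‖((quatRows X).submatrix f g).det‖ ≤ (Fintype.card τ).factorial * oneAddGramDet X ^ k := by
  have hS := one_le_oneAddGramDet X
  have h := det_le (A := (quatRows X).submatrix f g) (abv := NormedField.toAbsoluteValue ℂ)
    (x := √(oneAddGramDet X)) fun i j => Real.le_sqrt_of_sq_le (norm_quatRows_sq_le X _ _)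
  rw [nsmul_eq_mul] at h
  refine h.trans (mul_le_mul_of_nonneg_left ?_ (by positivity))
  calc √(oneAddGramDet X) ^ Fintype.card τ ≤ √(oneAddGramDet X) ^ (2 * k) :=
        pow_le_pow_right₀ (Real.one_le_sqrt.2 hS) hk
    _ = oneAddGramDet X ^ k := by rw [pow_mul, Real.sq_sqrt (by linarith)]

theorem gramWeight_mul_oneAddGramDet_pow (a b : ℝ) (k : ℕ) (X : Fin m → κ × Fin 2 → ℂ) :
    gramWeight a b X * oneAddGramDet X ^ k = gramWeight a (b - k) X := by
  rw [gramWeight, gramWeight, mul_assoc, ← Real.rpow_natCast,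
    ← Real.rpow_add (oneAddGramDet_pos X)]
  congr 2
  ring

end Bounds

section Peeling

variable {κ : Type*} [Fintype κ] [DecidableEq κ] {m : ℕ}
  (μ : Measure (κ × Fin 2 → ℂ)) [μ.IsAddHaarMeasure]

omit [DecidableEq κ] in
theorem integral_pi_eq_integral_prod {E : Type*} [NormedAddCommGroup E] [NormedSpace ℝ E]
    (i : Fin (m + 1)) (F : (Fin (m + 1) → κ × Fin 2 → ℂ) → E) :
    ∫ X, F X ∂(Measure.pi fun _ => μ) =
      ∫ p, F (i.insertNth p.1 p.2) ∂(μ.prod (Measure.pi fun _ : Fin m => μ)) :=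
  ((measurePreserving_piFinSuccAbove (fun _ => μ) i).symm.integral_comp
    (MeasurableEquiv.measurableEmbedding _) F).symm

omit [DecidableEq κ] in
theorem integrable_pi_iff_integrable_prod {E : Type*} [NormedAddCommGroup E]
    (i : Fin (m + 1)) (F : (Fin (m + 1) → κ × Fin 2 → ℂ) → E) :
    Integrable F (Measure.pi fun _ => μ) ↔
      Integrable (fun p => F (i.insertNth p.1 p.2)) (μ.prod (Measure.pi fun _ : Fin m => μ)) :=
  ((measurePreserving_piFinSuccAbove (fun _ => μ) i).symm.integrable_comp_emb
    (MeasurableEquiv.measurableEmbedding _)).symm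

theorem integrable_peel {a b : ℝ} (ha : 0 ≤ a) (hab : Fintype.card κ + a < b)
    {Z : Finset (κ × Fin 2)} (hZ : Z.card + 2 * m = 2 * Fintype.card κ) (i : Fin (m + 1))
    {φ : (Fin m → κ × Fin 2 → ℂ) → ℂ} (hφ : Continuous φ)
    (hint : Integrable (fun X => φ X * (gramWeight a (b - 1) X : ℂ)) (Measure.pi fun _ => μ)) :
    Integrable (fun X : Fin (m + 1) → κ × Fin 2 → ℂ =>
      φ (fun k => X (i.succAbove k)) * (gramWeight a b X : ℂ)) (Measure.pi fun _ => μ) := by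
  rw [integrable_pi_iff_integrable_prod μ i]
  simp only [Fin.insertNth_apply_succAbove, gramWeight_insertNth]
  refine (integrable_prod_iff' ?_).2 ⟨Filter.Eventually.of_forall fun X => ?_, ?_⟩
  · refine Measurable.aestronglyMeasurable ?_
    refine (hφ.measurable.comp measurable_snd).mul (Complex.measurable_ofReal.comp
      ((measurable_gramWeight a b).comp ?_))
    exact Continuous.measurable (by fun_prop)
  · exact ((integrable_gramWeight_cons μ ha hab X).ofReal (𝕜 := ℂ)).const_mul (φ X)
  · refine (hint.norm.const_mul (∫ x, radialWeight Z (2 * a) (2 * b) x ∂μ)).congr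
      (Filter.Eventually.of_forall fun X => ?_)
    simp only [norm_mul, Complex.norm_real, Real.norm_of_nonneg (gramWeight_nonneg _ _ _)]
    rw [integral_const_mul, integral_gramWeight_cons μ ha b X hZ]
    ring

theorem integral_peel {a b : ℝ} (ha : 0 ≤ a) (hab : Fintype.card κ + a < b)
    {Z : Finset (κ × Fin 2)} (hZ : Z.card + 2 * m = 2 * Fintype.card κ) (i : Fin (m + 1))
    {φ : (Fin m → κ × Fin 2 → ℂ) → ℂ} (hφ : Continuous φ)
    (hint : Integrable (fun X => φ X * (gramWeight a (b - 1) X : ℂ)) (Measure.pi fun _ => μ)) :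
    ∫ X : Fin (m + 1) → κ × Fin 2 → ℂ,
        φ (fun k => X (i.succAbove k)) * (gramWeight a b X : ℂ) ∂(Measure.pi fun _ => μ) =
      ((∫ x, radialWeight Z (2 * a) (2 * b) x ∂μ : ℝ) : ℂ) *
        ∫ X, φ X * (gramWeight a (b - 1) X : ℂ) ∂(Measure.pi fun _ => μ) := by
  have h := (integrable_pi_iff_integrable_prod μ i _).1 (integrable_peel μ ha hab hZ i hφ hint)
  rw [integral_pi_eq_integral_prod μ i]
  simp only [Fin.insertNth_apply_succAbove, gramWeight_insertNth] at h ⊢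
  rw [integral_prod_symm _ h, ← integral_const_mul]
  refine integral_congr_ae (Filter.Eventually.of_forall fun X => ?_)
  simp only
  rw [integral_const_mul, integral_complex_ofReal, integral_gramWeight_cons μ ha b X hZ]
  push_cast
  ring

end Peeling

section MinorIntegrals

variable {κ : Type*} [Fintype κ] [DecidableEq κ]
  (μ : Measure (κ × Fin 2 → ℂ)) [μ.IsAddHaarMeasure]

omit [DecidableEq κ] in
theorem exists_finset_card {m : ℕ} (hm : m ≤ Fintype.card κ) :
    ∃ Z : Finset (κ × Fin 2), Z.card + 2 * m = 2 * Fintype.card κ := by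
  obtain ⟨Z, -, hZ⟩ := Finset.exists_subset_card_eq
    (s := (Finset.univ : Finset (κ × Fin 2))) (n := 2 * Fintype.card κ - 2 * m) (by
      simp only [Finset.card_univ, Fintype.card_prod, Fintype.card_fin]
      omega)
  exact ⟨Z, by omega⟩

theorem integrable_gramWeight {a : ℝ} (ha : 0 ≤ a) {m : ℕ} (hm : m ≤ Fintype.card κ) {b : ℝ}
    (hb : Fintype.card κ + a + m < b + 1) :
    Integrable (fun X : Fin m → κ × Fin 2 → ℂ => (gramWeight a b X : ℂ))
      (Measure.pi fun _ => μ) := by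
  induction m generalizing b with
  | zero =>
    rw [Measure.pi_of_empty]
    exact Integrable.of_finite
  | succ m ih =>
    push_cast at hb
    obtain ⟨Z, hZ⟩ := exists_finset_card (κ := κ) (m := m) (by omega)
    simpa using integrable_peel μ ha (b := b) (by linarith [(m.cast_nonneg : (0 : ℝ) ≤ m)]) hZ 0
      (φ := fun _ => 1) continuous_const (by simpa using ih (b := b - 1) (by omega) (by linarith))

theorem integrable_mul_gramWeight {a : ℝ} (ha : 0 ≤ a) {m k : ℕ} (hm : m ≤ Fintype.card κ) {b : ℝ}
    (hb : Fintype.card κ + a + m + k < b + 1) {φ : (Fin m → κ × Fin 2 → ℂ) → ℂ}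
    (hφ : Continuous φ) {C : ℝ} (hC : ∀ X, ‖φ X‖ ≤ C * oneAddGramDet X ^ k) :
    Integrable (fun X => φ X * (gramWeight a b X : ℂ)) (Measure.pi fun _ => μ) := by
  refine ((integrable_gramWeight μ ha hm (b := b - k) (by linarith)).norm.const_mul C).mono'
    (hφ.measurable.mul
      (Complex.measurable_ofReal.comp (measurable_gramWeight a b))).aestronglyMeasurable
    (Filter.Eventually.of_forall fun X => ?_)
  rw [norm_mul, Complex.norm_real, Complex.norm_real, Real.norm_of_nonneg (gramWeight_nonneg _ _ _),
    Real.norm_of_nonneg (gramWeight_nonneg _ _ _), ← gramWeight_mul_oneAddGramDet_pow]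
  calc ‖φ X‖ * gramWeight a b X ≤ C * oneAddGramDet X ^ k * gramWeight a b X :=
        mul_le_mul_of_nonneg_right (hC X) (gramWeight_nonneg _ _ _)
    _ = C * (gramWeight a b X * oneAddGramDet X ^ k) := by ring

omit [Fintype κ] [DecidableEq κ] in
theorem continuous_quatMinor {m : ℕ} (e : Fin m → κ) : Continuous (quatMinor e) :=
  (continuous_quatRows.matrix_submatrix _ _).matrix_det

theorem integrable_quatMinor_mul_gramWeight {a : ℝ} (ha : 0 ≤ a) {m : ℕ}
    (hm : m ≤ Fintype.card κ) {b : ℝ} (hb : Fintype.card κ + a + m + m < b + 1) (e : Fin m → κ) :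
    Integrable (fun X : Fin m → κ × Fin 2 → ℂ => quatMinor e X * (gramWeight a b X : ℂ))
      (Measure.pi fun _ => μ) :=
  integrable_mul_gramWeight μ ha hm hb (continuous_quatMinor e)
    (norm_det_submatrix_quatRows_le (by simp [mul_comm]) id (Prod.map e id))

/-- The average of a quaternion minor on all rows of a rectangular quaternion matrix. -/
theorem integral_quatMinor_mul_gramWeight {a B : ℝ} (ha : 0 ≤ a)
    (hB : 2 * Fintype.card κ + a < B) {m : ℕ} {e : Fin m → κ} (he : Function.Injective e) :
    ∫ X : Fin m → κ × Fin 2 → ℂ, quatMinor e X * (gramWeight a (B + m) X : ℂ)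
        ∂(Measure.pi fun _ => μ) =
      ((∏ i ∈ Finset.range m, ((i + 1) / (Fintype.card κ - i) *
          ((a + Fintype.card κ + 1 - (i + 1)) / (B - a - Fintype.card κ - 1 / 2 + (i + 1)))) : ℝ) :
          ℂ) *
        ∫ X : Fin m → κ × Fin 2 → ℂ, (gramWeight a (B + m) X : ℂ) ∂(Measure.pi fun _ => μ) := by
  induction m with
  | zero => simp [quatMinor]
  | succ m ih =>
    have hm : m + 1 ≤ Fintype.card κ := by simpa using Fintype.card_le_of_injective e he
    have hmr : (m : ℝ) + 1 ≤ Fintype.card κ := by exact_mod_cast hm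
    have hm0 : (0 : ℝ) ≤ m := m.cast_nonneg
    obtain ⟨Z, hZ⟩ := exists_finset_card (κ := κ) (m := m) (by omega)
    set b : ℝ := B + (m + 1 : ℕ) with hbdef
    have hb : b = B + m + 1 := by rw [hbdef]; push_cast; ring
    have hb1 : b - 1 = B + m := by rw [hb]; ring
    have hJ := integral_peel μ ha (b := b) (by linarith) hZ 0 (φ := fun _ => 1) continuous_const
      (by simpa using integrable_gramWeight μ ha (b := b - 1) (m := m) (by omega) (by linarith))
    simp only [one_mul] at hJ
    have hI := (integrable_pi_iff_integrable_prod μ 0 _).1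
      (integrable_quatMinor_mul_gramWeight μ ha hm (b := b) (by push_cast; linarith) e)
    rw [integral_pi_eq_integral_prod μ 0, integral_prod_symm _ hI, hJ]
    simp only [Fin.insertNth_zero']
    have hrow : ∀ X : Fin m → κ × Fin 2 → ℂ, _ := fun X =>
      integral_quatMinor_mul_gramWeight_cons μ ha (b := b) (by linarith) he X hZ
    simp_rw [hrow, Finset.sum_mul]
    have hIH : ∀ j : Fin (m + 1), _ := fun j =>
      ih (e := e ∘ j.succAbove) (he.comp (Fin.succAbove_right_injective))
    rw [integral_const_mul, integral_finsetSum _ fun j _ =>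
      integrable_quatMinor_mul_gramWeight μ ha (by omega) (by linarith) _, hb1]
    simp_rw [hIH]
    rw [Finset.sum_const, Finset.card_fin, Finset.prod_range_succ, nsmul_eq_mul, ← hb1]
    have hd : B - a - Fintype.card κ - 1 / 2 + (m + 1) = b - a - 1 / 2 - Fintype.card κ := by
      rw [hb]; ring
    rw [hd]
    push_cast
    simp only [div_eq_mul_inv, mul_inv]
    ring

omit [Fintype κ] [DecidableEq κ] in
theorem piCongrLeft_symm_eq_comp {m : ℕ} (σ : Equiv.Perm (Fin m)) :
    ⇑(MeasurableEquiv.piCongrLeft (fun _ : Fin m => κ × Fin 2 → ℂ) σ.symm) = fun X => X ∘ σ := by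
  ext1 X
  ext1 i
  obtain ⟨i, rfl⟩ := σ.symm.surjective i
  simp [MeasurableEquiv.piCongrLeft_apply_apply]

theorem integral_comp_perm_mul_gramWeight (a b : ℝ) {m : ℕ} (σ : Equiv.Perm (Fin m))
    (φ : (Fin m → κ × Fin 2 → ℂ) → ℂ) :
    ∫ X, φ (X ∘ σ) * (gramWeight a b X : ℂ) ∂(Measure.pi fun _ => μ) =
      ∫ X, φ X * (gramWeight a b X : ℂ) ∂(Measure.pi fun _ => μ) := by
  have h := (measurePreserving_piCongrLeft (fun _ : Fin m => μ) σ.symm).integral_comp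
    (MeasurableEquiv.measurableEmbedding _) fun X => φ X * (gramWeight a b X : ℂ)
  simp_rw [piCongrLeft_symm_eq_comp, gramWeight_comp_perm] at h
  exact h

theorem integrable_comp_perm_mul_gramWeight (a b : ℝ) {m : ℕ} (σ : Equiv.Perm (Fin m))
    {φ : (Fin m → κ × Fin 2 → ℂ) → ℂ}
    (hφ : Integrable (fun X => φ X * (gramWeight a b X : ℂ)) (Measure.pi fun _ => μ)) :
    Integrable (fun X => φ (X ∘ σ) * (gramWeight a b X : ℂ)) (Measure.pi fun _ => μ) := by
  have h := ((measurePreserving_piCongrLeft (fun _ : Fin m => μ) σ.symm).integrable_comp_emb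
    (MeasurableEquiv.measurableEmbedding _)).2 hφ
  simp_rw [piCongrLeft_symm_eq_comp] at h
  refine h.congr (Filter.Eventually.of_forall fun X => ?_)
  simp only [Function.comp_apply, gramWeight_comp_perm]

/-- Any set of rows of a quaternion matrix distributed according to the weight is again
distributed according to a weight of the same form. -/
theorem exists_marginal {a B : ℝ} (ha : 0 ≤ a) (hB : Fintype.card κ + a < B) {m j : ℕ}
    (hm : m ≤ Fintype.card κ) {r : Fin j → Fin m} (hr : Function.Injective r) :
    ∃ c : ℂ, ∀ φ : (Fin j → κ × Fin 2 → ℂ) → ℂ, Continuous φ →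
      Integrable (fun X => φ X * (gramWeight a (B + j) X : ℂ)) (Measure.pi fun _ => μ) →
      Integrable (fun X : Fin m → κ × Fin 2 → ℂ => φ (X ∘ r) * (gramWeight a (B + m) X : ℂ))
          (Measure.pi fun _ => μ) ∧
        ∫ X : Fin m → κ × Fin 2 → ℂ, φ (X ∘ r) * (gramWeight a (B + m) X : ℂ)
            ∂(Measure.pi fun _ => μ) =
          c * ∫ X, φ X * (gramWeight a (B + j) X : ℂ) ∂(Measure.pi fun _ => μ) := by
  induction m with
  | zero =>
    obtain rfl : j = 0 := by simpa using Fintype.card_le_of_injective r hr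
    obtain rfl : r = id := Subsingleton.elim _ _
    exact ⟨1, fun φ _ hint => ⟨hint, by simp⟩⟩
  | succ m ih =>
    by_cases hsurj : Function.Surjective r
    · obtain rfl : j = m + 1 := by
        simpa using Fintype.card_congr (Equiv.ofBijective r ⟨hr, hsurj⟩)
      refine ⟨1, fun φ _ hint => ?_⟩
      have h1 := integrable_comp_perm_mul_gramWeight μ a (B + (m + 1 : ℕ))
        (Equiv.ofBijective r ⟨hr, hsurj⟩) hint
      have h2 := integral_comp_perm_mul_gramWeight μ a (B + (m + 1 : ℕ))
        (Equiv.ofBijective r ⟨hr, hsurj⟩) φ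
      exact ⟨h1, by rw [one_mul]; exact h2⟩
    · obtain ⟨i, hi⟩ := not_forall.1 hsurj
      have hi' : ∀ k, ∃ l, i.succAbove l = r k := fun k =>
        Fin.exists_succAbove_eq fun h => hi ⟨k, h⟩
      choose r' hr' using hi'
      have hr'inj : Function.Injective r' := fun k l h => hr (by rw [← hr', ← hr', h])
      obtain ⟨c, hc⟩ := ih (by omega) hr'inj
      obtain ⟨Z, hZ⟩ := exists_finset_card (κ := κ) (m := m) (by omega)
      have hb1 : B + (m + 1 : ℕ) - 1 = B + m := by push_cast; ring
      have hb : Fintype.card κ + a < B + (m + 1 : ℕ) := by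
        have : (0 : ℝ) ≤ (m + 1 : ℕ) := Nat.cast_nonneg _
        linarith
      refine ⟨((∫ x, radialWeight Z (2 * a) (2 * (B + (m + 1 : ℕ))) x ∂μ : ℝ) : ℂ) * c,
        fun φ hφ hint => ?_⟩
      obtain ⟨h1, h2⟩ := hc φ hφ hint
      rw [← hb1] at h1 h2
      have hcont : Continuous fun X : Fin m → κ × Fin 2 → ℂ => φ (X ∘ r') :=
        hφ.comp (continuous_pi fun k => continuous_apply (r' k))
      have h3 := integrable_peel μ ha hb hZ i hcont h1
      have h4 := integral_peel μ ha hb hZ i hcont h1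
      simp only [Function.comp_def, hr'] at h2 h3 h4 ⊢
      exact ⟨h3, by rw [h4, h2, mul_assoc]⟩

/-- The average of a quaternion minor of a quaternion matrix. -/
theorem integral_quatMinor_comp_mul_gramWeight {a B : ℝ} (ha : 0 ≤ a)
    (hB : 2 * Fintype.card κ + a < B) {m j : ℕ} (hm : m ≤ Fintype.card κ) {r : Fin j → Fin m}
    (hr : Function.Injective r) {e : Fin j → κ} (he : Function.Injective e) :
    ∫ X : Fin m → κ × Fin 2 → ℂ, quatMinor e (X ∘ r) * (gramWeight a (B + m) X : ℂ)
        ∂(Measure.pi fun _ => μ) =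
      ((∏ i ∈ Finset.range j, ((i + 1) / (Fintype.card κ - i) *
          ((a + Fintype.card κ + 1 - (i + 1)) / (B - a - Fintype.card κ - 1 / 2 + (i + 1)))) : ℝ) :
          ℂ) *
        ∫ X : Fin m → κ × Fin 2 → ℂ, (gramWeight a (B + m) X : ℂ) ∂(Measure.pi fun _ => μ) := by
  have hj : j ≤ Fintype.card κ := by simpa using Fintype.card_le_of_injective e he
  have hjr : (j : ℝ) ≤ Fintype.card κ := by exact_mod_cast hj
  obtain ⟨c, hc⟩ := exists_marginal μ ha (B := B) (by linarith [(j.cast_nonneg : (0 : ℝ) ≤ j)])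
    hm hr
  have h1 := (hc (fun _ => 1) continuous_const (by
    simpa using integrable_gramWeight μ ha hj (b := B + j) (by
      linarith [(j.cast_nonneg : (0 : ℝ) ≤ j)]))).2
  have h2 := (hc (quatMinor e) (continuous_quatMinor e)
    (integrable_quatMinor_mul_gramWeight μ ha hj (by linarith) e)).2
  simp only [one_mul] at h1
  rw [h2, integral_quatMinor_mul_gramWeight μ ha hB he, h1]
  ring

end MinorIntegrals

section PrincipalMinors

/-- Expansion of the characteristic polynomial in principal minors. -/
theorem det_smul_one_sub_eq_sum_minors {ι : Type*} [Fintype ι] [DecidableEq ι]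
    (M : Matrix ι ι ℂ) (z : ℂ) :
    (z • (1 : Matrix ι ι ℂ) - M).det = ∑ s : Finset ι, z ^ (Fintype.card ι - s.card) *
      ((-1) ^ s.card * (M.submatrix (Subtype.val : s → ι) (Subtype.val : s → ι)).det) := by
  have h := eval_charpoly M z
  rw [scalar_apply, ← smul_one_eq_diagonal] at h
  rw [← h, Polynomial.eval_eq_sum_range, charpoly_natDegree_eq_dim, ← Finset.sum_range_reflect,
    ← Finset.powerset_univ, Finset.sum_powerset, Finset.card_univ]
  refine Finset.sum_congr rfl fun k hk => ?_
  have hk' : k ≤ Fintype.card ι := Nat.lt_succ_iff.1 (Finset.mem_range.1 hk)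
  rw [Nat.add_sub_cancel, charpoly_coeff_eq_sum_minors M k hk', mul_comm, Finset.mul_sum,
    Finset.mul_sum]
  refine Finset.sum_congr rfl fun s hs => ?_
  rw [(Finset.mem_powersetCard.1 hs).2]

variable {κ : Type*} {m : ℕ}

theorem quatRows_smul (t : Fin m → ℂ) (X : Fin m → κ × Fin 2 → ℂ) :
    quatRows (fun i => t i • X i) =
      diagonal (fun p : Fin m × Fin 2 => if p.2 = 0 then t p.1 else star (t p.1)) *
        quatRows X := by
  ext ⟨a, s⟩ j
  fin_cases s <;> simp [diagonal_mul, quatConj_smul]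

variable [Fintype κ] [DecidableEq κ]

theorem gramWeight_smul (a b : ℝ) {t : Fin m → ℂ} (ht : ∀ i, star (t i) * t i = 1)
    (X : Fin m → κ × Fin 2 → ℂ) :
    gramWeight a b (fun i => t i • X i) = gramWeight a b X := by
  set D : Matrix (Fin m × Fin 2) (Fin m × Fin 2) ℂ :=
    diagonal (fun p => if p.2 = 0 then t p.1 else star (t p.1)) with hD
  have hDD : Dᴴ * D = 1 := by
    rw [hD, diagonal_conjTranspose, diagonal_mul_diagonal, ← diagonal_one]
    congr 1
    ext ⟨i, s⟩
    fin_cases s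
    · simpa using ht i
    · simpa [mul_comm] using ht i
  have h1 : gramDet (fun i => t i • X i) = gramDet X := by
    rw [gramDet, quatRows_smul, ← hD, conjTranspose_mul, ← Matrix.mul_assoc,
      Matrix.mul_assoc D, det_mul, det_mul, mul_right_comm, ← det_mul, det_mul_comm, hDD, det_one,
      one_mul, gramDet]
  have h2 : oneAddGramDet (fun i => t i • X i) = oneAddGramDet X := by
    rw [oneAddGramDet, quatRows_smul, ← hD, conjTranspose_mul, Matrix.mul_assoc,
      ← Matrix.mul_assoc Dᴴ, hDD, Matrix.one_mul, oneAddGramDet]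
  rw [gramWeight, gramWeight, h1, h2]

variable (μ : Measure (κ × Fin 2 → ℂ)) [μ.IsAddHaarMeasure]

theorem integral_eq_zero_of_smul_row (a : Fin m) {ζ : ℂ} (hζ : ζ ≠ 1)
    {F : (Fin m → κ × Fin 2 → ℂ) → ℂ} (hF : Integrable F (Measure.pi fun _ => μ))
    (h : ∀ X, F (fun i => Pi.mulSingle (M := fun _ => ℂ) a Complex.I i • X i) = ζ * F X) :
    ∫ X, F X ∂(Measure.pi fun _ => μ) = 0 := by
  obtain _ | m := m
  · exact a.elim0
  have hint := (integrable_pi_iff_integrable_prod μ a F).1 hF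
  rw [integral_pi_eq_integral_prod μ a, integral_prod_symm _ hint]
  refine integral_eq_zero_of_ae (Filter.Eventually.of_forall fun X => ?_)
  have h1 := integral_comp_mulVec μ (Complex.I • (1 : Matrix (κ × Fin 2) (κ × Fin 2) ℂ))
    (by simp) fun c => F (a.insertNth c X)
  have h2 : ∀ c, F (a.insertNth (Complex.I • c) X) = ζ * F (a.insertNth c X) := by
    intro c
    rw [← h]
    congr 1
    rw [Fin.insertNth_eq_iff]
    refine ⟨by simp, ?_⟩
    ext1 k
    simp [Fin.removeNth]
  simp only [det_smul, det_one, mul_one, norm_pow, Complex.norm_I, one_pow, inv_one, one_smul,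
    smul_mulVec, one_mulVec, h2] at h1
  rw [integral_const_mul] at h1
  simp only [Pi.zero_apply]
  have h3 : (ζ - 1) * ∫ c, F (a.insertNth c X) ∂μ = 0 := by rw [sub_mul, h1, one_mul, sub_self]
  exact (mul_eq_zero.1 h3).resolve_left (sub_ne_zero.2 hζ)

end PrincipalMinors

theorem choose_mul_prod_range {n j : ℕ} (hj : j ≤ n) :
    (n.choose j : ℝ) * ∏ i ∈ Finset.range j, (((i : ℝ) + 1) / (n - i)) = 1 := by
  induction j with
  | zero => simp
  | succ j ih =>
    have h1 : (n.choose (j + 1) : ℝ) * (j + 1) = n.choose j * (n - j) := by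
      rw [← Nat.cast_sub (by omega)]
      exact_mod_cast Nat.choose_succ_right_eq n j
    have h2 : (0 : ℝ) < n - j := by
      rw [sub_pos]
      exact_mod_cast hj
    rw [Finset.prod_range_succ, mul_left_comm, ← mul_div_assoc, h1, mul_div_assoc,
      div_self h2.ne', mul_one, mul_comm]
    exact ih (by omega)

section SquareMinors

variable {n : ℕ} (μ : Measure (Fin n × Fin 2 → ℂ)) [μ.IsAddHaarMeasure]

/-- The principal minor of a quaternion matrix with index set `s`. -/
noncomputable def principalMinor (s : Finset (Fin n × Fin 2)) (X : Fin n → Fin n × Fin 2 → ℂ) : ℂ :=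
  ((quatRows X).submatrix (Subtype.val : s → Fin n × Fin 2)
    (Subtype.val : s → Fin n × Fin 2)).det

theorem integrable_principalMinor_mul_gramWeight {a b : ℝ} (ha : 0 ≤ a) (hb : a + 3 * n < b + 1)
    (s : Finset (Fin n × Fin 2)) :
    Integrable (fun X => principalMinor s X * (gramWeight a b X : ℂ)) (Measure.pi fun _ => μ) := by
  refine integrable_mul_gramWeight μ ha (k := n) (by simp)
    (by simp only [Fintype.card_fin]; linarith)
    (continuous_quatRows.matrix_submatrix _ _).matrix_det
    (norm_det_submatrix_quatRows_le ?_ _ _)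
  rw [Fintype.card_coe]
  simpa [mul_comm] using s.card_le_univ

theorem principalMinor_smul (t : Fin n → ℂ) (s : Finset (Fin n × Fin 2))
    (X : Fin n → Fin n × Fin 2 → ℂ) :
    principalMinor s (fun i => t i • X i) =
      (∏ p ∈ s, if p.2 = 0 then t p.1 else star (t p.1)) * principalMinor s X := by
  have h : (quatRows (fun i => t i • X i)).submatrix (Subtype.val : s → Fin n × Fin 2)
      (Subtype.val : s → Fin n × Fin 2) =
      diagonal (fun p : s => if p.1.2 = 0 then t p.1.1 else star (t p.1.1)) *
        (quatRows X).submatrix (Subtype.val : s → Fin n × Fin 2)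
          (Subtype.val : s → Fin n × Fin 2) := by
    ext p q
    simp [quatRows_smul, diagonal_mul]
  rw [principalMinor, h, det_mul, det_diagonal, principalMinor]
  congr 1
  exact Finset.prod_coe_sort s fun p => if p.2 = 0 then t p.1 else star (t p.1)

theorem integral_principalMinor_eq_zero {a b : ℝ} (ha : 0 ≤ a) (hb : a + 3 * n < b + 1)
    {s : Finset (Fin n × Fin 2)}
    (hs : s ∉ Set.range fun T : Finset (Fin n) => T ×ˢ (Finset.univ : Finset (Fin 2))) :
    ∫ X, principalMinor s X * (gramWeight a b X : ℂ) ∂(Measure.pi fun _ => μ) = 0 := by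
  obtain ⟨k, u, hu, hv⟩ : ∃ (k : Fin n) (u : Fin 2), (k, u) ∈ s ∧ (k, 1 - u) ∉ s := by
    by_contra! hcon
    refine hs ⟨s.image Prod.fst, ?_⟩
    ext ⟨k, u⟩
    simp only [Finset.mem_product, Finset.mem_image, Prod.exists, exists_and_right,
      exists_eq_right, Finset.mem_univ, and_true]
    refine ⟨?_, fun h => ⟨u, h⟩⟩
    rintro ⟨v, hv⟩
    have h1 := hcon k v hv
    fin_cases u <;> fin_cases v <;> simp_all
  set ζ : ℂ := if u = 0 then Complex.I else -Complex.I with hζ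
  have hζ1 : ζ ≠ 1 := by
    rw [hζ]
    split_ifs <;> simp [Complex.ext_iff]
  refine integral_eq_zero_of_smul_row μ k hζ1
    (integrable_principalMinor_mul_gramWeight μ ha hb s) fun X => ?_
  have hprod : (∏ p ∈ s, if p.2 = 0 then Pi.mulSingle (M := fun _ => ℂ) k Complex.I p.1
      else star (Pi.mulSingle (M := fun _ => ℂ) k Complex.I p.1)) = ζ := by
    rw [Finset.prod_eq_single_of_mem (k, u) hu]
    · simp [hζ]
    · rintro ⟨l, v⟩ hlv hne
      have hl : l ≠ k := by
        rintro rfl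
        have : v = 1 - u := by
          have hdec : ∀ u v : Fin 2, v ≠ u → v = 1 - u := by decide
          exact hdec u v fun h => hne (by rw [h])
        exact hv (this ▸ hlv)
      simp [hl]
  rw [principalMinor_smul, hprod, gramWeight_smul _ _ _ X, mul_assoc]
  intro i
  by_cases hi : i = k
  · subst hi
    simp
  · simp [hi]

theorem principalMinor_product (T : Finset (Fin n)) (X : Fin n → Fin n × Fin 2 → ℂ) :
    principalMinor (T ×ˢ Finset.univ) X =
      quatMinor (T.orderEmbOfFin rfl) (X ∘ T.orderEmbOfFin rfl) := by
  set e := T.orderEmbOfFin rfl with he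
  let E : Fin T.card × Fin 2 ≃ (T ×ˢ (Finset.univ : Finset (Fin 2)) : Finset (Fin n × Fin 2)) :=
    Equiv.ofBijective (fun p => ⟨(e p.1, p.2), by simp [he]⟩) (by
      constructor
      · rintro ⟨i, s⟩ ⟨j, t⟩ h
        simpa using h
      · rintro ⟨⟨k, s⟩, hk⟩
        have hk' : k ∈ Set.range e := by
          rw [he, Finset.range_orderEmbOfFin]
          exact (Finset.mem_product.1 hk).1
        obtain ⟨i, rfl⟩ := hk'
        exact ⟨(i, s), rfl⟩)
  rw [principalMinor, ← det_submatrix_equiv_self E, quatMinor]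
  congr 1

/-- The average characteristic polynomial, before normalization. -/
theorem integral_det_smul_one_sub_mul_gramWeight {a b : ℝ} (ha : 0 ≤ a) (hb : a + 3 * n < b)
    (z : ℂ) :
    ∫ X, (gramWeight a b X : ℂ) *
        (z • (1 : Matrix (Fin n × Fin 2) (Fin n × Fin 2) ℂ) - quatRows X).det
        ∂(Measure.pi fun _ => μ) =
      (∑ j ∈ Finset.range (n + 1), z ^ (2 * (n - j)) * ∏ i ∈ Finset.range j,
        (((a + n + 1 - (i + 1)) / (b - a - 2 * n - 1 / 2 + (i + 1)) : ℝ) : ℂ)) *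
      ∫ X : Fin n → Fin n × Fin 2 → ℂ, (gramWeight a b X : ℂ) ∂(Measure.pi fun _ => μ) := by
  have hexp : ∀ X : Fin n → Fin n × Fin 2 → ℂ, (gramWeight a b X : ℂ) *
      (z • (1 : Matrix (Fin n × Fin 2) (Fin n × Fin 2) ℂ) - quatRows X).det =
      ∑ s : Finset (Fin n × Fin 2), (z ^ (2 * n - s.card) * (-1) ^ s.card) *
        (principalMinor s X * (gramWeight a b X : ℂ)) := by
    intro X
    rw [det_smul_one_sub_eq_sum_minors, Finset.mul_sum]
    refine Finset.sum_congr rfl fun s _ => ?_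
    rw [principalMinor, Fintype.card_prod, Fintype.card_fin, Fintype.card_fin, mul_comm n 2]
    ring
  simp_rw [hexp]
  rw [integral_finsetSum _ fun s _ =>
    (integrable_principalMinor_mul_gramWeight μ ha (by linarith) s).const_mul _]
  simp_rw [integral_const_mul]
  have hinj : Function.Injective
      fun T : Finset (Fin n) => T ×ˢ (Finset.univ : Finset (Fin 2)) := by
    intro S T h
    ext k
    simpa using congrArg (fun s => (k, (0 : Fin 2)) ∈ s) h
  have hterm : ∀ T : Finset (Fin n), (z ^ (2 * n - (T ×ˢ (Finset.univ : Finset (Fin 2))).card) *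
      (-1) ^ (T ×ˢ (Finset.univ : Finset (Fin 2))).card) *
        ∫ X, principalMinor (T ×ˢ Finset.univ) X * (gramWeight a b X : ℂ)
          ∂(Measure.pi fun _ => μ) =
      z ^ (2 * (n - T.card)) * (((∏ i ∈ Finset.range T.card, ((i + 1) / (n - i) *
          ((a + n + 1 - (i + 1)) / (b - a - 2 * n - 1 / 2 + (i + 1)))) : ℝ) : ℂ) *
        ∫ X : Fin n → Fin n × Fin 2 → ℂ, (gramWeight a b X : ℂ) ∂(Measure.pi fun _ => μ)) := by
    intro T
    simp_rw [principalMinor_product]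
    have h := integral_quatMinor_comp_mul_gramWeight μ ha (B := b - n) (by
      simp only [Fintype.card_fin]
      linarith) (m := n) (by simp) (T.orderEmbOfFin rfl).injective (T.orderEmbOfFin rfl).injective
    simp only [sub_add_cancel, Fintype.card_fin] at h
    rw [h, Finset.card_product, Finset.card_univ, Fintype.card_fin, pow_mul' (-1 : ℂ),
      neg_one_sq, one_pow, mul_one, show 2 * n - T.card * 2 = 2 * (n - T.card) by omega,
      show b - n - a - n - 1 / 2 = b - a - 2 * n - 1 / 2 by ring]
  rw [← Fintype.sum_of_injective _ hinj _ _ (fun s hs => by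
    rw [integral_principalMinor_eq_zero μ ha (by linarith) hs, mul_zero]) fun T => (hterm T).symm,
    Finset.sum_mul, ← Finset.powerset_univ, Finset.sum_powerset_apply_card (fun j =>
      z ^ (2 * (n - j)) * (((∏ i ∈ Finset.range j, ((i + 1) / (n - i) *
          ((a + n + 1 - (i + 1)) / (b - a - 2 * n - 1 / 2 + (i + 1)))) : ℝ) : ℂ) *
        ∫ X : Fin n → Fin n × Fin 2 → ℂ, (gramWeight a b X : ℂ) ∂(Measure.pi fun _ => μ))),
    Finset.card_univ, Fintype.card_fin]
  refine Finset.sum_congr rfl fun j hj => ?_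
  have hj' : j ≤ n := Nat.lt_succ_iff.1 (Finset.mem_range.1 hj)
  rw [Finset.prod_mul_distrib, nsmul_eq_mul, Complex.ofReal_mul, ← Complex.ofReal_natCast]
  have hc : ((n.choose j : ℝ) : ℂ) *
      ((∏ i ∈ Finset.range j, (((i : ℝ) + 1) / (n - i)) : ℝ) : ℂ) = 1 := by
    rw [← Complex.ofReal_mul, choose_mul_prod_range hj', Complex.ofReal_one]
  rw [← Complex.ofReal_prod]
  linear_combination (z ^ (2 * (n - j)) * ((∏ i ∈ Finset.range j,
    ((a + n + 1 - (i + 1)) / (b - a - 2 * n - 1 / 2 + (i + 1))) : ℝ) : ℂ) *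
    ∫ X : Fin n → Fin n × Fin 2 → ℂ, (gramWeight a b X : ℂ) ∂(Measure.pi fun _ => μ)) * hc

end SquareMinors

section Normalization

variable {κ : Type*} [Fintype κ] [DecidableEq κ]
  (μ : Measure (κ × Fin 2 → ℂ)) [μ.IsAddHaarMeasure]

theorem integral_gramWeight_ne_zero {a : ℝ} (ha : 0 ≤ a) {m : ℕ} (hm : m ≤ Fintype.card κ)
    {b : ℝ} (hb : Fintype.card κ + a + m < b + 1) :
    ∫ X : Fin m → κ × Fin 2 → ℂ, (gramWeight a b X : ℂ) ∂(Measure.pi fun _ => μ) ≠ 0 := by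
  induction m generalizing b with
  | zero =>
    rw [Measure.pi_of_empty, integral_dirac]
    have h : ∀ X : Fin 0 → κ × Fin 2 → ℂ, quatRows X = 0 := fun X => by
      ext ⟨i, _⟩
      exact i.elim0
    simp [gramWeight, gramDet, oneAddGramDet, h]
  | succ m ih =>
    push_cast at hb
    have hm0 : (0 : ℝ) ≤ m := m.cast_nonneg
    obtain ⟨Z, hZ⟩ := exists_finset_card (κ := κ) (m := m) (by omega)
    have h := integral_peel μ ha (b := b) (by linarith) hZ 0 (φ := fun _ => 1) continuous_const
      (by simpa using integrable_gramWeight μ ha (b := b - 1) (m := m) (by omega) (by linarith))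
    simp only [one_mul] at h
    rw [h]
    refine mul_ne_zero (Complex.ofReal_ne_zero.2 (integral_radialWeight_pos μ ?_ ?_ ?_).ne')
      (ih (by omega) (by linarith))
    · rw [← Finset.card_pos]
      omega
    · positivity
    · simp only [Fintype.card_prod, Fintype.card_fin]
      push_cast
      linarith

end Normalization

section Coordinates

/-- The first complex row of a row of quaternions. -/
noncomputable def rowEquiv (n : ℕ) : (Fin n → ℂ × ℂ) ≃L[ℝ] (Fin n × Fin 2 → ℂ) :=
  LinearEquiv.toContinuousLinearEquiv
    { toFun := fun c p => if p.2 = 0 then (c p.1).1 else (c p.1).2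
      invFun := fun v k => (v (k, 0), v (k, 1))
      map_add' := fun c d => by
        ext ⟨k, s⟩
        fin_cases s <;> simp
      map_smul' := fun t c => by
        ext ⟨k, s⟩
        fin_cases s <;> simp
      left_inv := fun c => by simp
      right_inv := fun v => by
        ext ⟨k, s⟩
        fin_cases s <;> simp }

theorem rowEquiv_apply (n : ℕ) (c : Fin n → ℂ × ℂ) (p : Fin n × Fin 2) :
    rowEquiv n c p = if p.2 = 0 then (c p.1).1 else (c p.1).2 := rfl

theorem quatMatrix_eq_quatRows (n : ℕ) (x : Fin n → Fin n → ℂ × ℂ) :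
    quatMatrix n x = quatRows fun i => rowEquiv n (x i) := by
  ext ⟨i, s⟩ ⟨k, t⟩
  fin_cases s <;> fin_cases t <;> simp [quatMatrix, quatConj, rowEquiv_apply]

theorem quatSphericalWeight_eq_gramWeight (n : ℕ) (α₁ α₂ : ℝ) (x : Fin n → Fin n → ℂ × ℂ) :
    quatSphericalWeight n α₁ α₂ x = gramWeight α₁ α₂ fun i => rowEquiv n (x i) := by
  rw [quatSphericalWeight, quatMatrix_eq_quatRows, det_mul_comm, gramWeight, gramDet,
    oneAddGramDet]

instance isAddHaarMeasure_volume_prod :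
    (volume : Measure (ℂ × ℂ)).IsAddHaarMeasure :=
  Measure.prod.instIsAddHaarMeasure volume volume

instance isAddHaarMeasure_map_rowEquiv (n : ℕ) :
    (Measure.map (rowEquiv n) volume).IsAddHaarMeasure := by
  have : (volume : Measure (Fin n → ℂ × ℂ)).IsAddHaarMeasure :=
    Measure.pi.isAddHaarMeasure fun _ => volume
  exact (rowEquiv n).isAddHaarMeasure_map volume

theorem integral_comp_rowEquiv (n : ℕ) (F : (Fin n → Fin n × Fin 2 → ℂ) → ℂ) :
    ∫ x : Fin n → Fin n → ℂ × ℂ, F (fun i => rowEquiv n (x i)) =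
      ∫ X, F X ∂(Measure.pi fun _ => Measure.map (rowEquiv n) volume) := by
  have h : MeasurePreserving (rowEquiv n).toHomeomorph.toMeasurableEquiv volume
      (Measure.map (rowEquiv n) volume) :=
    ⟨(rowEquiv n).toHomeomorph.toMeasurableEquiv.measurable, rfl⟩
  exact (measurePreserving_pi (fun _ : Fin n => volume) _ fun _ => h).integral_comp
    (MeasurableEquiv.piCongrRight fun _ =>
      (rowEquiv n).toHomeomorph.toMeasurableEquiv).measurableEmbedding F

end Coordinates

/-- The even-degree skew orthogonal polynomial for the quaternion real spherical
ensemble: `⟨det (z I - G)⟩ = ∑_{j=0}^{n} z^{2(n-j)} ∏_{i=1}^{j}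
(α₁ + n + 1 - i)/(α₂ - α₁ - 2n - 1/2 + i)`. -/
theorem quatSpherical_even_skew_orthogonal_poly (n : ℕ) (hn : 0 < n)
    (α₁ α₂ : ℝ) (hα₁ : 0 ≤ α₁) (hα₂ : α₁ + 3 * n + 1 < α₂) (z : ℂ) :
    (∫ x : Fin n → Fin n → ℂ × ℂ,
        (quatSphericalWeight n α₁ α₂ x : ℂ) *
          (z • (1 : Matrix (Fin n × Fin 2) (Fin n × Fin 2) ℂ) - quatMatrix n x).det) /
      ((∫ x : Fin n → Fin n → ℂ × ℂ, quatSphericalWeight n α₁ α₂ x : ℝ) : ℂ)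
      = ∑ j ∈ Finset.range (n + 1), z ^ (2 * (n - j)) *
          ∏ i ∈ Finset.range j,
            (((α₁ + n + 1 - (i + 1)) / (α₂ - α₁ - 2 * n - 1 / 2 + (i + 1)) : ℝ) : ℂ) := by
  simp_rw [quatSphericalWeight_eq_gramWeight, quatMatrix_eq_quatRows]
  rw [← integral_complex_ofReal,
    integral_comp_rowEquiv n fun X => (gramWeight α₁ α₂ X : ℂ) *
      (z • (1 : Matrix (Fin n × Fin 2) (Fin n × Fin 2) ℂ) - quatRows X).det,
    integral_comp_rowEquiv n fun X => (gramWeight α₁ α₂ X : ℂ),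
    integral_det_smul_one_sub_mul_gramWeight _ hα₁ (by linarith) z, mul_div_assoc, div_self,
    mul_one]
  refine integral_gramWeight_ne_zero _ hα₁ (by simp) ?_
  rw [Fintype.card_fin]
  linarith [(n.cast_nonneg : (0 : ℝ) ≤ n)]
end

section
/- Let n be a positive integer and let α₁, α₂ be real parameters with α₁ ≥ 0 and α₂ > α₁ + 3n + 1. For G drawn from the quaternion real spherical ensemble of size 2n with parameters (α₁, α₂), and for every complex number z, z·⟨det(z·I − G)⟩ + ⟨det(z·I − G)·Tr(G)⟩ = z^{2n+1}; that is, the odd-degree skew orthogonal polynomial for the quaternion real spherical ensemble is the monomial Q_{2n+1}(z) = z^{2n+1}. -/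
open MeasureTheory Matrix

section Determinants

open scoped ComplexOrder MatrixOrder

lemma det_re_pos {ι : Type*} [Fintype ι] [DecidableEq ι] {S : Matrix ι ι ℂ} (hS : S.PosDef) :
    0 < S.det.re :=
  (Complex.lt_def.1 hS.det_pos).1

/-- Matrix determinant lemma for a rank-one update of a positive definite matrix. -/
lemma det_re_add_vecMulVec {ι : Type*} [Fintype ι] [DecidableEq ι] {S : Matrix ι ι ℂ}
    (hS : S.PosDef) (v : ι → ℂ) :
    (S + vecMulVec (star v) v).det.re =
      S.det.re * (1 + (star (star v) ⬝ᵥ (S⁻¹ *ᵥ star v)).re) := by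
  have h := det_add_replicateCol_mul_replicateRow (ι := Unit)
    ((isUnit_iff_isUnit_det S).1 hS.isUnit) (star v) v
  rw [← vecMulVec_eq] at h
  have h2 : (replicateRow Unit v * S⁻¹ * replicateCol Unit (star v)) =
      replicateRow Unit (fun _ : Unit => v ⬝ᵥ (S⁻¹ *ᵥ star v)) := by
    rw [Matrix.mul_assoc]
    ext i j
    simp [Matrix.mul_apply, dotProduct, mulVec]
  have him : (S.det).im = 0 := ((Complex.lt_def.1 hS.det_pos).2).symm
  rw [h, h2, star_star, Complex.mul_re, him, zero_mul, sub_zero]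
  simp

lemma quadForm_re_nonneg {ι : Type*} [Fintype ι] {M : Matrix ι ι ℂ} (hM : M.PosSemidef)
    (v : ι → ℂ) : 0 ≤ (star v ⬝ᵥ (M *ᵥ v)).re :=
  (Complex.le_def.1 (hM.dotProduct_mulVec_nonneg v)).1

lemma conjTranspose_mul_self_eq_sum {ι κ : Type*} [Fintype κ] (B : Matrix κ ι ℂ) :
    Bᴴ * B = ∑ a, vecMulVec (star (B a)) (B a) := by
  ext i j
  simp [Matrix.mul_apply, Matrix.sum_apply, vecMulVec_apply]

lemma posSemidef_sum_vecMulVec {ι κ : Type*} [Fintype ι] (v : κ → ι → ℂ) (s : Finset κ) :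
    (∑ a ∈ s, vecMulVec (star (v a)) (v a)).PosSemidef :=
  posSemidef_sum _ fun a _ => posSemidef_vecMulVec_star_self (v a)

lemma det_re_le_det_re_add_of_posDef {ι : Type*} [Fintype ι] [DecidableEq ι]
    {S P : Matrix ι ι ℂ} (hS : S.PosDef) (hP : P.PosSemidef) :
    S.det.re ≤ (S + P).det.re := by
  obtain ⟨B, rfl⟩ := CStarAlgebra.nonneg_iff_eq_star_mul_self.mp hP.nonneg
  rw [star_eq_conjTranspose, conjTranspose_mul_self_eq_sum]
  induction (Finset.univ : Finset ι) using Finset.induction_on with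
  | empty => simp
  | insert a s ha ih =>
    rw [Finset.sum_insert ha, add_comm (vecMulVec _ _), ← add_assoc]
    have hT := hS.add_posSemidef (posSemidef_sum_vecMulVec B s)
    refine ih.trans ?_
    rw [det_re_add_vecMulVec hT]
    nlinarith [det_re_pos hT, quadForm_re_nonneg hT.inv.posSemidef (star (B a))]

/-- The determinant is monotone on positive semidefinite matrices. -/
lemma det_re_le_det_re_add {ι : Type*} [Fintype ι] [DecidableEq ι]
    {S P : Matrix ι ι ℂ} (hS : S.PosSemidef) (hP : P.PosSemidef) :
    S.det.re ≤ (S + P).det.re := by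
  by_cases h : S.det = 0
  · rw [h]
    exact (Complex.le_def.1 (hS.add hP).det_nonneg).1
  · exact det_re_le_det_re_add_of_posDef (hS.posDef_iff_det_ne_zero.2 h) hP

lemma posDef_one_add {ι : Type*} [Fintype ι] [DecidableEq ι] {P : Matrix ι ι ℂ}
    (hP : P.PosSemidef) : (1 + P).PosDef :=
  Matrix.PosDef.one.add_posSemidef hP

lemma one_le_det_re_one_add {ι : Type*} [Fintype ι] [DecidableEq ι] {P : Matrix ι ι ℂ}
    (hP : P.PosSemidef) : 1 ≤ (1 + P).det.re := by
  simpa using det_re_le_det_re_add_of_posDef Matrix.PosDef.one hP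

end Determinants

section RowIntegrals

open scoped ComplexOrder MatrixOrder ENNReal

/-- Gaussian-type change of variables: the integral of a power of `1 + v M v†` is bounded by
`(det M)⁻¹` times the integral for `M = 1`. -/
lemma lintegral_quadForm_rpow_le {ι E : Type*} [Fintype ι] [DecidableEq ι]
    [NormedAddCommGroup E] [NormedSpace ℂ E] [FiniteDimensional ℝ E] [MeasureSpace E]
    [BorelSpace E] [(volume : Measure E).IsAddHaarMeasure]
    (e : E ≃ₗ[ℂ] (ι → ℂ)) (he : ∀ v, ‖v‖ ^ 2 ≤ ∑ a, ‖e v a‖ ^ 2)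
    {t : ℝ} (ht : 0 ≤ t) {M : Matrix ι ι ℂ} (hM : M.PosDef) :
    ∫⁻ v : E, ENNReal.ofReal
        ((1 + (star (star (e v)) ⬝ᵥ (M *ᵥ star (e v))).re) ^ (-t)) ≤
      ENNReal.ofReal (M.det.re)⁻¹ * ∫⁻ v : E, ENNReal.ofReal ((1 + ‖v‖ ^ 2) ^ (-t)) := by
  obtain ⟨B, rfl⟩ := CStarAlgebra.nonneg_iff_eq_star_mul_self.mp hM.posSemidef.nonneg
  set B' : Matrix ι ι ℂ := B.map (starRingEnd ℂ) with hB'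
  have hdet : B'.det = starRingEnd ℂ B.det := by
    rw [hB', RingHom.map_det]; rfl
  have hre : (star B * B).det.re = Complex.normSq B'.det := by
    rw [det_mul, star_eq_conjTranspose, det_conjTranspose, hdet, Complex.normSq_conj,
      mul_comm, Complex.star_def, Complex.mul_conj, Complex.ofReal_re]
  let L : E →ₗ[ℂ] E := e.symm.toLinearMap ∘ₗ Matrix.toLin' B' ∘ₗ e.toLinearMap
  have hLdet : LinearMap.det (L.restrictScalars ℝ) = (star B * B).det.re := by
    rw [LinearMap.det_restrictScalars, Algebra.norm_complex_apply, hre]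
    congr 1
    have := LinearMap.det_conj (Matrix.toLin' B') e.symm
    rw [LinearMap.det_toLin'] at this
    rw [← this]
    rfl
  have hpos := det_re_pos hM
  have hmap := Measure.map_linearMap_addHaar_eq_smul_addHaar (volume : Measure E)
    (f := L.restrictScalars ℝ) (by rw [hLdet]; exact hpos.ne')
  have hLmeas : Measurable (L.restrictScalars ℝ) :=
    (LinearMap.continuous_of_finiteDimensional _).measurable
  have hg : Measurable fun v : E => ENNReal.ofReal ((1 + ‖v‖ ^ 2) ^ (-t)) := by fun_prop
  have hL : ∀ v, e (L v) = B' *ᵥ e v := fun v => by simp [L]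
  have hq : ∀ v, (star (star (e v)) ⬝ᵥ ((star B * B) *ᵥ star (e v))).re =
      ∑ a, ‖e (L v) a‖ ^ 2 := fun v => by
    have h1 : B *ᵥ star (e v) = star (B' *ᵥ e v) := by
      ext a
      simp [mulVec, dotProduct, hB']
    rw [← mulVec_mulVec, dotProduct_mulVec, star_eq_conjTranspose, vecMul_conjTranspose, star_star,
      h1, hL]
    simp [dotProduct, Complex.mul_conj', ← Complex.ofReal_pow]
  calc
    _ ≤ ∫⁻ v : E, ENNReal.ofReal ((1 + ‖L.restrictScalars ℝ v‖ ^ 2) ^ (-t)) := by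
        refine lintegral_mono fun v => ENNReal.ofReal_le_ofReal ?_
        rw [hq]
        exact Real.rpow_le_rpow_of_nonpos (by positivity)
          (by simpa using he (L v)) (by linarith)
    _ = ∫⁻ v, ENNReal.ofReal ((1 + ‖v‖ ^ 2) ^ (-t)) ∂(volume.map (L.restrictScalars ℝ)) :=
        (lintegral_map hg hLmeas).symm
    _ = _ := by
        rw [hmap, lintegral_smul_measure, hLdet, abs_of_pos (inv_pos.2 hpos), smul_eq_mul]

/-- Convergence of `∫ det (1 + B† B) ^ (-t)` over rectangular complex matrices with `k` rows. -/
lemma lintegral_det_rpow_lt_top {ι E : Type*} [Fintype ι] [DecidableEq ι]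
    [NormedAddCommGroup E] [NormedSpace ℂ E] [FiniteDimensional ℝ E] [MeasureSpace E]
    [BorelSpace E] [(volume : Measure E).IsAddHaarMeasure]
    (e : E ≃ₗ[ℂ] (ι → ℂ)) (he : ∀ v, ‖v‖ ^ 2 ≤ ∑ a, ‖e v a‖ ^ 2) (k : ℕ)
    {t : ℝ} (ht : (Fintype.card ι : ℝ) + k < t + 1) :
    ∫⁻ x : Fin k → E, ENNReal.ofReal
      ((1 + ∑ j, vecMulVec (star (e (x j))) (e (x j))).det.re ^ (-t)) < ∞ := by
  have hec : Continuous e :=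
    LinearMap.continuous_of_finiteDimensional (e.toLinearMap.restrictScalars ℝ)
  have hcont : ∀ k : ℕ, Continuous fun x : Fin k → E =>
      (1 + ∑ j, vecMulVec (star (e (x j))) (e (x j))).det.re := fun k => by
    refine Complex.continuous_re.comp (Continuous.matrix_det ?_)
    refine continuous_const.add (continuous_finsetSum _ fun j _ => ?_)
    exact Continuous.matrix_vecMulVec (by fun_prop) (by fun_prop)
  have hmeas : ∀ (k : ℕ) (s : ℝ), Measurable fun x : Fin k → E => ENNReal.ofReal
      ((1 + ∑ j, vecMulVec (star (e (x j))) (e (x j))).det.re ^ s) := fun k s =>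
    ((hcont k).measurable.pow_const s).ennreal_ofReal
  induction k generalizing t with
  | zero => simp [lintegral_unique]
  | succ k ih =>
    push_cast at ht
    have hcard : (0 : ℝ) ≤ Fintype.card ι := Nat.cast_nonneg _
    have hk : (0 : ℝ) ≤ k := Nat.cast_nonneg _
    have hfin : ∫⁻ v : E, ENNReal.ofReal ((1 + ‖v‖ ^ 2) ^ (-t)) < ∞ := by
      have hrank : (Module.finrank ℝ E : ℝ) < 2 * t := by
        have h1 : Module.finrank ℂ E = Fintype.card ι := by
          rw [e.finrank_eq, Module.finrank_fintype_fun_eq_card]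
        rw [finrank_real_of_complex, h1]
        push_cast
        linarith
      have := (integrable_rpow_neg_one_add_norm_sq (μ := (volume : Measure E)) hrank)
      have := this.lintegral_lt_top
      simpa [neg_div] using this
    have hstep : ∀ x : Fin k → E, ∫⁻ v : E, ENNReal.ofReal
        ((1 + (vecMulVec (star (e v)) (e v) +
          ∑ j, vecMulVec (star (e (x j))) (e (x j)))).det.re ^ (-t)) ≤
        ENNReal.ofReal ((1 + ∑ j, vecMulVec (star (e (x j))) (e (x j))).det.re ^ (-(t - 1))) *
          ∫⁻ v : E, ENNReal.ofReal ((1 + ‖v‖ ^ 2) ^ (-t)) := fun x => by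
      set S := 1 + ∑ j, vecMulVec (star (e (x j))) (e (x j)) with hSdef
      have hS : S.PosDef := posDef_one_add (posSemidef_sum_vecMulVec (fun j => e (x j)) _)
      have hpos := det_re_pos hS
      have hdet : ∀ v, ENNReal.ofReal ((1 + (vecMulVec (star (e v)) (e v) +
          ∑ j, vecMulVec (star (e (x j))) (e (x j)))).det.re ^ (-t)) =
          ENNReal.ofReal (S.det.re ^ (-t)) * ENNReal.ofReal
            ((1 + (star (star (e v)) ⬝ᵥ (S⁻¹ *ᵥ star (e v))).re) ^ (-t)) := fun v => by
        have hq := quadForm_re_nonneg hS.inv.posSemidef (star (e v))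
        rw [add_comm (vecMulVec _ _), ← add_assoc, ← hSdef, det_re_add_vecMulVec hS,
          Real.mul_rpow hpos.le (by linarith), ENNReal.ofReal_mul (by positivity)]
      have hinv : (S⁻¹.det.re)⁻¹ = S.det.re := by
        have him : S.det = (S.det.re : ℂ) :=
          Complex.ext rfl (Complex.lt_def.1 hS.det_pos).2.symm
        rw [det_nonsing_inv, Ring.inverse_eq_inv', him, ← Complex.ofReal_inv, Complex.ofReal_re,
          Complex.ofReal_re, inv_inv]
      simp_rw [hdet]
      rw [lintegral_const_mul' _ _ ENNReal.ofReal_ne_top]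
      calc
        _ ≤ ENNReal.ofReal (S.det.re ^ (-t)) * (ENNReal.ofReal (S⁻¹.det.re)⁻¹ * _) :=
          mul_le_mul_right (lintegral_quadForm_rpow_le e he (by linarith) hS.inv) _
        _ = _ := by
          rw [hinv, ← mul_assoc, ← ENNReal.ofReal_mul (by positivity)]
          congr 2
          rw [neg_sub, sub_eq_add_neg, add_comm, Real.rpow_add hpos, Real.rpow_one]
    have hmp := (volume_preserving_piFinSuccAbove (fun _ : Fin (k + 1) => E) 0).symm
    have hprod := lintegral_prod_symm (μ := (volume : Measure E))
      (ν := (volume : Measure (Fin k → E))) _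
      ((hmeas (k + 1) (-t)).comp hmp.measurable).aemeasurable
    simp only [Function.comp_def] at hprod
    rw [← hmp.lintegral_comp (hmeas (k + 1) (-t)), Measure.volume_eq_prod, hprod]
    have hsum : ∀ (v : E) (x : Fin k → E), ∑ j, vecMulVec
        (star (e ((MeasurableEquiv.piFinSuccAbove (fun _ : Fin (k + 1) => E) 0).symm (v, x) j)))
        (e ((MeasurableEquiv.piFinSuccAbove (fun _ : Fin (k + 1) => E) 0).symm (v, x) j)) =
        vecMulVec (star (e v)) (e v) + ∑ j, vecMulVec (star (e (x j))) (e (x j)) := fun v x => by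
      rw [Fin.sum_univ_succ]
      simp [MeasurableEquiv.piFinSuccAbove, Fin.insertNthEquiv]
    simp_rw [hsum]
    refine (lintegral_mono hstep).trans_lt ?_
    rw [lintegral_mul_const _ (hmeas k _)]
    exact ENNReal.mul_lt_top (ih (by linarith)) hfin

end RowIntegrals
section RowSelection

variable {ι : Type*} [DecidableEq ι]

/-- The matrix whose rows indexed by `S` are those of `G`, and whose other rows are those of the
identity; its determinant is the principal minor of `G` on `S`. -/
def rowSel (S : Finset ι) (G : Matrix ι ι ℂ) : Matrix ι ι ℂ :=
  Matrix.of fun a => if a ∈ S then G a else (1 : Matrix ι ι ℂ) a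

lemma rowSel_apply (S : Finset ι) (G : Matrix ι ι ℂ) (a b : ι) :
    rowSel S G a b = if a ∈ S then G a b else (1 : Matrix ι ι ℂ) a b := by
  unfold rowSel
  by_cases h : a ∈ S <;> simp [h]

variable [Fintype ι]

open scoped ComplexOrder MatrixOrder

lemma norm_det_rowSel_sq_le (S : Finset ι) (G : Matrix ι ι ℂ) :
    ‖(rowSel S G).det‖ ^ 2 ≤ (1 + Gᴴ * G).det.re := by
  have hsplit : 1 + Gᴴ * G =
      (rowSel S G)ᴴ * rowSel S G + (rowSel Sᶜ G)ᴴ * rowSel Sᶜ G := by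
    have h1 : (1 : Matrix ι ι ℂ) = 1ᴴ * 1 := by simp
    rw [h1]
    ext a b
    simp only [Matrix.add_apply, Matrix.mul_apply, conjTranspose_apply, ← Finset.sum_add_distrib]
    refine Finset.sum_congr rfl fun c _ => ?_
    simp only [rowSel_apply, Finset.mem_compl]
    by_cases h : c ∈ S <;> simp [h, add_comm]
  have h : ‖(rowSel S G).det‖ ^ 2 = ((rowSel S G)ᴴ * rowSel S G).det.re := by
    rw [det_mul, det_conjTranspose, Complex.star_def, Complex.conj_mul', ← Complex.ofReal_pow,
      Complex.ofReal_re]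
  rw [h, hsplit]
  exact det_re_le_det_re_add (posSemidef_conjTranspose_mul_self _)
    (posSemidef_conjTranspose_mul_self _)

lemma norm_apply_sq_le (G : Matrix ι ι ℂ) (a b : ι) :
    ‖G a b‖ ^ 2 ≤ (1 + Gᴴ * G).det.re := by
  have h1 := det_re_add_vecMulVec (Matrix.PosDef.one (n := ι) (R := ℂ)) (G a)
  have h2 : (star (star (G a)) ⬝ᵥ ((1 : Matrix ι ι ℂ)⁻¹ *ᵥ star (G a))).re =
      ∑ c, ‖G a c‖ ^ 2 := by
    simp [dotProduct, Complex.mul_conj', ← Complex.ofReal_pow]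
  rw [h2, det_one, Complex.one_re, one_mul] at h1
  have h3 := Finset.single_le_sum (f := fun c => ‖G a c‖ ^ 2) (fun c _ => by positivity)
    (Finset.mem_univ b)
  have h4 : (1 + vecMulVec (star (G a)) (G a)).det.re ≤ (1 + Gᴴ * G).det.re := by
    rw [conjTranspose_mul_self_eq_sum, ← Finset.add_sum_erase _ _ (Finset.mem_univ a), ← add_assoc]
    exact det_re_le_det_re_add (posDef_one_add (posSemidef_vecMulVec_star_self (G a))).posSemidef
      (posSemidef_sum_vecMulVec G _)
  have h5 : ‖G a b‖ ^ 2 ≤ ∑ c, ‖G a c‖ ^ 2 := h3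
  linarith

end RowSelection

section Ensemble

open scoped ComplexOrder MatrixOrder ENNReal

/-- A row of `n` quaternions viewed as a complex vector of length `2n`. -/
def quatRowEquiv (n : ℕ) : (Fin n → ℂ × ℂ) ≃ₗ[ℂ] (Fin n × Fin 2 → ℂ) where
  toFun v a := if a.2 = 0 then (v a.1).1 else (v a.1).2
  invFun u i := (u (i, 0), u (i, 1))
  map_add' u v := by
    ext a
    by_cases h : a.2 = 0 <;> simp [h]
  map_smul' c v := by
    ext a
    by_cases h : a.2 = 0 <;> simp [h]
  left_inv v := by
    ext i <;> simp
  right_inv u := by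
    ext ⟨i, s⟩
    fin_cases s <;> simp

lemma quatRowEquiv_apply (n : ℕ) (v : Fin n → ℂ × ℂ) (a : Fin n × Fin 2) :
    quatRowEquiv n v a = if a.2 = 0 then (v a.1).1 else (v a.1).2 := rfl

lemma norm_sq_le_sum_quatRowEquiv (n : ℕ) (v : Fin n → ℂ × ℂ) :
    ‖v‖ ^ 2 ≤ ∑ a, ‖quatRowEquiv n v a‖ ^ 2 := by
  have hnn : 0 ≤ ∑ a, ‖quatRowEquiv n v a‖ ^ 2 := Finset.sum_nonneg fun a _ => by positivity
  have hle : ∀ a, ‖quatRowEquiv n v a‖ ≤ √(∑ a, ‖quatRowEquiv n v a‖ ^ 2) := fun a =>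
    Real.le_sqrt_of_sq_le (Finset.single_le_sum (f := fun a => ‖quatRowEquiv n v a‖ ^ 2)
      (fun c _ => by positivity) (Finset.mem_univ a))
  rw [← Real.le_sqrt (norm_nonneg _) hnn, pi_norm_le_iff_of_nonneg (Real.sqrt_nonneg _)]
  intro i
  refine max_le ?_ ?_
  · simpa [quatRowEquiv_apply] using hle (i, 0)
  · simpa [quatRowEquiv_apply] using hle (i, 1)

lemma quatMatrix_row_zero (n : ℕ) (x : Fin n → Fin n → ℂ × ℂ) (j : Fin n) :
    quatMatrix n x (j, 0) = quatRowEquiv n (x j) := by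
  ext a
  simp [quatMatrix, quatRowEquiv_apply]

lemma continuous_quatMatrix (n : ℕ) : Continuous (quatMatrix n) := by
  refine continuous_matrix fun a b => ?_
  unfold quatMatrix
  simp only [of_apply]
  split_ifs <;> fun_prop

lemma one_le_det_re_one_add_quat (n : ℕ) (x : Fin n → Fin n → ℂ × ℂ) :
    1 ≤ (1 + (quatMatrix n x)ᴴ * quatMatrix n x).det.re :=
  one_le_det_re_one_add (posSemidef_conjTranspose_mul_self _)

lemma det_re_gram_nonneg (n : ℕ) (x : Fin n → Fin n → ℂ × ℂ) :
    0 ≤ ((quatMatrix n x)ᴴ * quatMatrix n x).det.re :=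
  (Complex.le_def.1 (posSemidef_conjTranspose_mul_self (quatMatrix n x)).det_nonneg).1

lemma continuous_det_re_gram (n : ℕ) : Continuous fun x : Fin n → Fin n → ℂ × ℂ =>
    ((quatMatrix n x)ᴴ * quatMatrix n x).det.re :=
  Complex.continuous_re.comp (Continuous.matrix_det
    ((continuous_quatMatrix n).matrix_conjTranspose.matrix_mul (continuous_quatMatrix n)))

lemma continuous_det_re_one_add_gram (n : ℕ) : Continuous fun x : Fin n → Fin n → ℂ × ℂ =>
    (1 + (quatMatrix n x)ᴴ * quatMatrix n x).det.re :=
  Complex.continuous_re.comp (Continuous.matrix_det (continuous_const.add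
    ((continuous_quatMatrix n).matrix_conjTranspose.matrix_mul (continuous_quatMatrix n))))

instance isAddHaarMeasure_volume_quat : (volume : Measure (ℂ × ℂ)).IsAddHaarMeasure :=
  inferInstanceAs ((volume : Measure ℂ).prod (volume : Measure ℂ)).IsAddHaarMeasure

lemma isAddHaarMeasure_volume_fin_arrow {E : Type*} [NormedAddCommGroup E] [MeasureSpace E]
    [BorelSpace E] [SecondCountableTopology E] [SigmaFinite (volume : Measure E)]
    [(volume : Measure E).IsAddHaarMeasure] (n : ℕ) :
    (volume : Measure (Fin n → E)).IsAddHaarMeasure :=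
  inferInstance

instance isAddHaarMeasure_volume_quatRow (n : ℕ) :
    (volume : Measure (Fin n → ℂ × ℂ)).IsAddHaarMeasure :=
  isAddHaarMeasure_volume_fin_arrow n

instance isAddHaarMeasure_volume_quatMatrix (n : ℕ) :
    (volume : Measure (Fin n → Fin n → ℂ × ℂ)).IsAddHaarMeasure :=
  isAddHaarMeasure_volume_fin_arrow n

lemma integrable_det_rpow (n : ℕ) {t : ℝ} (ht : 3 * (n : ℝ) < t + 1) (ht0 : 0 ≤ t) :
    Integrable fun x : Fin n → Fin n → ℂ × ℂ =>
      (1 + (quatMatrix n x)ᴴ * quatMatrix n x).det.re ^ (-t) := by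
  have hnn : ∀ x : Fin n → Fin n → ℂ × ℂ,
      0 ≤ (1 + (quatMatrix n x)ᴴ * quatMatrix n x).det.re ^ (-t) := fun x =>
    Real.rpow_nonneg (zero_le_one.trans (one_le_det_re_one_add_quat n x)) _
  refine ⟨((continuous_det_re_one_add_gram n).measurable.pow_const _).aestronglyMeasurable, ?_⟩
  rw [hasFiniteIntegral_iff_ofReal (Filter.Eventually.of_forall hnn)]
  have hcard : (Fintype.card (Fin n × Fin 2) : ℝ) + n < t + 1 := by
    simp only [Fintype.card_prod, Fintype.card_fin]
    push_cast
    linarith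
  refine (lintegral_mono fun x => ENNReal.ofReal_le_ofReal ?_).trans_lt
    (lintegral_det_rpow_lt_top (quatRowEquiv n) (norm_sq_le_sum_quatRowEquiv n) n hcard)
  have hS : (1 + ∑ j, vecMulVec (star (quatRowEquiv n (x j))) (quatRowEquiv n (x j))).PosDef :=
    posDef_one_add (posSemidef_sum_vecMulVec (fun j => quatRowEquiv n (x j)) _)
  refine Real.rpow_le_rpow_of_nonpos (det_re_pos hS) ?_ (by linarith)
  rw [conjTranspose_mul_self_eq_sum, Fintype.sum_prod_type]
  simp only [Fin.sum_univ_two, Finset.sum_add_distrib, quatMatrix_row_zero]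
  rw [← add_assoc]
  exact det_re_le_det_re_add hS.posSemidef
    (posSemidef_sum_vecMulVec (fun j => quatMatrix n x (j, 1)) _)

lemma continuous_quatSphericalWeight (n : ℕ) (α₁ α₂ : ℝ) (hα₁ : 0 ≤ α₁) :
    Continuous (quatSphericalWeight n α₁ α₂) :=
  ((continuous_det_re_gram n).rpow_const fun _ => Or.inr hα₁).mul
    ((continuous_det_re_one_add_gram n).rpow_const fun x =>
      Or.inl (zero_lt_one.trans_le (one_le_det_re_one_add_quat n x)).ne')

lemma quatSphericalWeight_nonneg (n : ℕ) (α₁ α₂ : ℝ) (x : Fin n → Fin n → ℂ × ℂ) :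
    0 ≤ quatSphericalWeight n α₁ α₂ x :=
  mul_nonneg (Real.rpow_nonneg (det_re_gram_nonneg n x) _)
    (Real.rpow_nonneg (zero_le_one.trans (one_le_det_re_one_add_quat n x)) _)

lemma quatSphericalWeight_le (n : ℕ) (α₁ α₂ : ℝ) (hα₁ : 0 ≤ α₁) (x : Fin n → Fin n → ℂ × ℂ) :
    quatSphericalWeight n α₁ α₂ x ≤
      (1 + (quatMatrix n x)ᴴ * quatMatrix n x).det.re ^ (-(α₂ - α₁)) := by
  have hpos := zero_lt_one.trans_le (one_le_det_re_one_add_quat n x)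
  have hle : ((quatMatrix n x)ᴴ * quatMatrix n x).det.re ≤
      (1 + (quatMatrix n x)ᴴ * quatMatrix n x).det.re := by
    rw [add_comm]
    exact det_re_le_det_re_add (posSemidef_conjTranspose_mul_self _) Matrix.PosSemidef.one
  have h := Real.rpow_le_rpow (det_re_gram_nonneg n x) hle hα₁
  rw [neg_sub, sub_eq_add_neg, Real.rpow_add hpos]
  exact mul_le_mul_of_nonneg_right h (Real.rpow_nonneg hpos.le _)

/-- Observables bounded by `det (1 + G† G)` are integrable. -/
lemma integrable_weight_mul (n : ℕ) (α₁ α₂ : ℝ) (hα₁ : 0 ≤ α₁) (hα₂ : α₁ + 3 * n + 1 < α₂)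
    {F : Matrix (Fin n × Fin 2) (Fin n × Fin 2) ℂ → ℂ} (hF : Continuous F)
    (hb : ∀ G, ‖F G‖ ≤ (1 + Gᴴ * G).det.re) :
    Integrable fun x => (quatSphericalWeight n α₁ α₂ x : ℂ) * F (quatMatrix n x) := by
  have hn : (0 : ℝ) ≤ n := Nat.cast_nonneg n
  refine (integrable_det_rpow n (t := α₂ - α₁ - 1) (by linarith) (by linarith)).mono'
    (Continuous.aestronglyMeasurable ?_) (Filter.Eventually.of_forall fun x => ?_)
  · exact (Complex.continuous_ofReal.comp (continuous_quatSphericalWeight n α₁ α₂ hα₁)).mul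
      (hF.comp (continuous_quatMatrix n))
  · have hpos := zero_lt_one.trans_le (one_le_det_re_one_add_quat n x)
    rw [norm_mul, Complex.norm_real, Real.norm_of_nonneg (quatSphericalWeight_nonneg n α₁ α₂ x)]
    refine (mul_le_mul (quatSphericalWeight_le n α₁ α₂ hα₁ x) (hb _) (norm_nonneg _)
      (Real.rpow_nonneg hpos.le _)).trans_eq ?_
    rw [← Real.rpow_add_one hpos.ne']
    congr 1
    ring

lemma continuous_rowSel {ι : Type*} [DecidableEq ι] (S : Finset ι) :
    Continuous (rowSel S) := by
  refine continuous_matrix fun a b => ?_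
  simp only [rowSel_apply]
  split_ifs <;> fun_prop

lemma integrable_minor (n : ℕ) (α₁ α₂ : ℝ) (hα₁ : 0 ≤ α₁) (hα₂ : α₁ + 3 * n + 1 < α₂)
    (S : Finset (Fin n × Fin 2)) :
    Integrable fun x => (quatSphericalWeight n α₁ α₂ x : ℂ) *
      (rowSel S (quatMatrix n x)).det := by
  refine integrable_weight_mul n α₁ α₂ hα₁ hα₂ (F := fun G => (rowSel S G).det)
    (continuous_rowSel S).matrix_det fun G => ?_
  have h1 := norm_det_rowSel_sq_le S G
  have h2 := one_le_det_re_one_add (posSemidef_conjTranspose_mul_self G)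
  nlinarith [norm_nonneg (rowSel S G).det]

lemma integrable_minor_mul_apply (n : ℕ) (α₁ α₂ : ℝ) (hα₁ : 0 ≤ α₁)
    (hα₂ : α₁ + 3 * n + 1 < α₂) (S : Finset (Fin n × Fin 2)) (a b : Fin n × Fin 2) :
    Integrable fun x => (quatSphericalWeight n α₁ α₂ x : ℂ) *
      ((rowSel S (quatMatrix n x)).det * quatMatrix n x a b) := by
  refine integrable_weight_mul n α₁ α₂ hα₁ hα₂ (F := fun G => (rowSel S G).det * G a b)
    ((continuous_rowSel S).matrix_det.mul (by fun_prop)) fun G => ?_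
  rw [norm_mul]
  nlinarith [norm_det_rowSel_sq_le S G, norm_apply_sq_le G a b, norm_nonneg (rowSel S G).det,
    norm_nonneg (G a b), sq_nonneg (‖(rowSel S G).det‖ - ‖G a b‖)]

lemma integral_quatSphericalWeight_pos (n : ℕ) (α₁ α₂ : ℝ) (hα₁ : 0 ≤ α₁)
    (hα₂ : α₁ + 3 * n + 1 < α₂) :
    0 < ∫ x : Fin n → Fin n → ℂ × ℂ, quatSphericalWeight n α₁ α₂ x := by
  have hint := (integrable_minor n α₁ α₂ hα₁ hα₂ ∅).re
  have hone : rowSel (∅ : Finset (Fin n × Fin 2)) = fun _ => 1 := by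
    ext G a b
    simp [rowSel_apply]
  simp only [hone, det_one, mul_one, RCLike.re_eq_complex_re, Complex.ofReal_re] at hint
  have hQ : quatMatrix n (fun i j => if i = j then (1, 0) else (0, 0)) = 1 := by
    ext ⟨i, s⟩ ⟨j, t⟩
    simp only [quatMatrix, of_apply, Matrix.one_apply, Prod.mk.injEq]
    fin_cases s <;> fin_cases t <;> by_cases h : i = j <;> simp [h]
  refine integral_pos_of_integrable_nonneg_nonzero
    (x := fun i j => if i = j then (1, 0) else (0, 0))
    (continuous_quatSphericalWeight n α₁ α₂ hα₁) hint (quatSphericalWeight_nonneg n α₁ α₂) ?_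
  have hpos := zero_lt_one.trans_le
    (one_le_det_re_one_add_quat n fun i j => if i = j then (1, 0) else (0, 0))
  refine mul_ne_zero ?_ (Real.rpow_pos_of_pos hpos _).ne'
  simp [hQ]

end Ensemble

section Invariance

/-- The matrix acting on the `i`-th block row by the `2 × 2` matrix `q` and fixing the other
block rows. -/
def rowBlock {n : ℕ} (i : Fin n) (q : Matrix (Fin 2) (Fin 2) ℂ) :
    Matrix (Fin n × Fin 2) (Fin n × Fin 2) ℂ :=
  (blockDiagonal fun j => if j = i then q else 1).submatrix Prod.swap Prod.swap

lemma rowBlock_apply {n : ℕ} (i : Fin n) (q : Matrix (Fin 2) (Fin 2) ℂ) (a b : Fin n × Fin 2) :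
    rowBlock i q a b =
      if a.1 = b.1 then (if a.1 = i then q a.2 b.2 else (1 : Matrix (Fin 2) (Fin 2) ℂ) a.2 b.2)
      else 0 := by
  simp only [rowBlock, submatrix_apply, blockDiagonal_apply, Prod.fst_swap, Prod.snd_swap]
  split_ifs <;> rfl

lemma rowBlock_mul_rowBlock {n : ℕ} (i : Fin n) (p q : Matrix (Fin 2) (Fin 2) ℂ) :
    rowBlock i p * rowBlock i q = rowBlock i (p * q) := by
  unfold rowBlock
  rw [show (Prod.swap : Fin n × Fin 2 → _) = Equiv.prodComm _ _ from rfl, submatrix_mul_equiv,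
    ← blockDiagonal_mul]
  congr 2
  ext1 j
  split_ifs <;> simp

lemma rowBlock_one {n : ℕ} (i : Fin n) : rowBlock i 1 = 1 := by
  ext a b
  simp only [rowBlock_apply, Matrix.one_apply, Prod.ext_iff]
  split_ifs <;> simp_all

lemma conjTranspose_rowBlock {n : ℕ} (i : Fin n) (q : Matrix (Fin 2) (Fin 2) ℂ) :
    (rowBlock i q)ᴴ = rowBlock i qᴴ := by
  unfold rowBlock
  rw [conjTranspose_submatrix, blockDiagonal_conjTranspose]
  congr 2
  ext1 j
  split_ifs <;> simp

lemma det_rowBlock {n : ℕ} (i : Fin n) (q : Matrix (Fin 2) (Fin 2) ℂ) :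
    (rowBlock i q).det = q.det := by
  unfold rowBlock
  rw [show (Prod.swap : Fin n × Fin 2 → _) = Equiv.prodComm _ _ from rfl,
    det_submatrix_equiv_self, det_blockDiagonal]
  simp [apply_ite det]

lemma rowBlock_mul_apply {n : ℕ} (i : Fin n) (q : Matrix (Fin 2) (Fin 2) ℂ)
    (G : Matrix (Fin n × Fin 2) (Fin n × Fin 2) ℂ) (a b : Fin n × Fin 2) :
    (rowBlock i q * G) a b = if a.1 = i then ∑ d, q a.2 d * G (i, d) b else G a b := by
  obtain ⟨j, s⟩ := a
  simp only [Matrix.mul_apply, rowBlock_apply, Fintype.sum_prod_type, ite_mul, zero_mul]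
  rw [Finset.sum_eq_single_of_mem j (Finset.mem_univ j) (fun k _ hk => by simp [hk.symm])]
  by_cases h : j = i
  · simp [h]
  · simp [h, Matrix.one_apply]

/-- The matrix exchanging the `i`-th and `j`-th block rows. -/
def rowSwap {n : ℕ} (i j : Fin n) : Matrix (Fin n × Fin 2) (Fin n × Fin 2) ℂ :=
  Equiv.Perm.permMatrix ℂ (Equiv.prodCongrLeft fun _ : Fin 2 => Equiv.swap i j)

lemma rowSwap_mul_apply {n : ℕ} (i j : Fin n) (G : Matrix (Fin n × Fin 2) (Fin n × Fin 2) ℂ)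
    (a b : Fin n × Fin 2) :
    (rowSwap i j * G) a b = G (Equiv.swap i j a.1, a.2) b := by
  unfold rowSwap Equiv.Perm.permMatrix
  rw [PEquiv.toMatrix_toPEquiv_mul]
  rfl

lemma det_rowSwap {n : ℕ} (i j : Fin n) : (rowSwap i j).det = 1 := by
  unfold rowSwap
  rw [det_permutation, Equiv.Perm.sign_prodCongrLeft]
  simp

lemma conjTranspose_rowSwap {n : ℕ} (i j : Fin n) : (rowSwap i j)ᴴ = rowSwap i j := by
  unfold rowSwap
  rw [conjTranspose_permMatrix]
  congr 1

lemma rowSwap_mul_self {n : ℕ} (i j : Fin n) : rowSwap i j * rowSwap i j = 1 := by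
  ext a b
  rw [rowSwap_mul_apply, ← Matrix.mul_one (rowSwap i j), rowSwap_mul_apply]
  change (1 : Matrix (Fin n × Fin 2) (Fin n × Fin 2) ℂ) (Equiv.swap i j (Equiv.swap i j a.1), a.2) b
    = _
  rw [Equiv.swap_apply_self]

/-- Left multiplication by `U` preserves the (unnormalized) quaternion spherical ensemble. -/
def LeftInvariant (n : ℕ) (α₁ α₂ : ℝ) (U : Matrix (Fin n × Fin 2) (Fin n × Fin 2) ℂ) : Prop :=
  ∀ F : Matrix (Fin n × Fin 2) (Fin n × Fin 2) ℂ → ℂ,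
    Integrable (fun x => (quatSphericalWeight n α₁ α₂ x : ℂ) * F (quatMatrix n x)) →
    Integrable (fun x => (quatSphericalWeight n α₁ α₂ x : ℂ) * F (U * quatMatrix n x)) ∧
    ∫ x, (quatSphericalWeight n α₁ α₂ x : ℂ) * F (U * quatMatrix n x) =
      ∫ x, (quatSphericalWeight n α₁ α₂ x : ℂ) * F (quatMatrix n x)

lemma LeftInvariant.of_measurePreserving {n : ℕ} (α₁ α₂ : ℝ)
    {U : Matrix (Fin n × Fin 2) (Fin n × Fin 2) ℂ} (hU : Uᴴ * U = 1)
    {Φ : (Fin n → Fin n → ℂ × ℂ) → Fin n → Fin n → ℂ × ℂ} (hΦ : MeasurePreserving Φ)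
    (h : ∀ x, quatMatrix n (Φ x) = U * quatMatrix n x) : LeftInvariant n α₁ α₂ U := by
  intro F hF
  have hw : ∀ x, quatSphericalWeight n α₁ α₂ (Φ x) = quatSphericalWeight n α₁ α₂ x := by
    intro x
    have : (U * quatMatrix n x)ᴴ * (U * quatMatrix n x) = (quatMatrix n x)ᴴ * quatMatrix n x := by
      rw [conjTranspose_mul, Matrix.mul_assoc, ← Matrix.mul_assoc Uᴴ, hU, Matrix.one_mul]
    simp only [quatSphericalWeight, h, this]
  have heq : (fun x => (quatSphericalWeight n α₁ α₂ x : ℂ) * F (U * quatMatrix n x)) =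
      (fun x => (quatSphericalWeight n α₁ α₂ x : ℂ) * F (quatMatrix n x)) ∘ Φ := by
    ext x
    simp [hw, h]
  rw [heq]
  refine ⟨hΦ.integrable_comp_of_integrable hF, ?_⟩
  conv_rhs => rw [← hΦ.map_eq]
  rw [integral_map hΦ.measurable.aemeasurable (by rw [hΦ.map_eq]; exact hF.aestronglyMeasurable)]
  rfl

lemma LeftInvariant.mul {n : ℕ} {α₁ α₂ : ℝ} {U V : Matrix (Fin n × Fin 2) (Fin n × Fin 2) ℂ}
    (hU : LeftInvariant n α₁ α₂ U) (hV : LeftInvariant n α₁ α₂ V) :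
    LeftInvariant n α₁ α₂ (U * V) := by
  intro F hF
  obtain ⟨h1, h2⟩ := hU F hF
  obtain ⟨h3, h4⟩ := hV (fun G => F (U * G)) h1
  simp only [Matrix.mul_assoc]
  exact ⟨h3, h4.trans h2⟩

lemma LeftInvariant.one (n : ℕ) (α₁ α₂ : ℝ) : LeftInvariant n α₁ α₂ 1 := by
  intro F hF
  simpa using hF

lemma leftInvariant_rowSwap {n : ℕ} (α₁ α₂ : ℝ) (i j : Fin n) :
    LeftInvariant n α₁ α₂ (rowSwap i j) := by
  refine .of_measurePreserving α₁ α₂ (by rw [conjTranspose_rowSwap, rowSwap_mul_self])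
    (volume_measurePreserving_piCongrLeft (fun _ : Fin n => Fin n → ℂ × ℂ) (Equiv.swap i j))
    fun x => ?_
  ext ⟨k, s⟩ b
  obtain ⟨l, rfl⟩ := (Equiv.swap i j).surjective k
  rw [rowSwap_mul_apply]
  simp only [quatMatrix, of_apply, Equiv.swap_apply_self, MeasurableEquiv.coe_piCongrLeft,
    Equiv.piCongrLeft_apply_apply]

/-- A measure-preserving map of `ℂ × ℂ` applied to all entries of the `i`-th row. -/
lemma measurePreserving_row {n : ℕ} (i : Fin n) {φ : ℂ × ℂ → ℂ × ℂ} (hφ : MeasurePreserving φ) :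
    MeasurePreserving fun (x : Fin n → Fin n → ℂ × ℂ) j k =>
      if j = i then φ (x j k) else x j k := by
  refine volume_preserving_pi (f := fun j (v : Fin n → ℂ × ℂ) k => if j = i then φ (v k) else v k)
    fun j => ?_
  by_cases h : j = i
  · simpa [h] using volume_preserving_pi fun _ : Fin n => hφ
  · simpa [h] using! MeasurePreserving.id volume

lemma leftInvariant_rowBlock_I {n : ℕ} (α₁ α₂ : ℝ) (i : Fin n) :
    LeftInvariant n α₁ α₂ (rowBlock i !![Complex.I, 0; 0, -Complex.I]) := by
  have hφ : MeasurePreserving fun p : ℂ × ℂ => (Complex.I * p.1, Complex.I * p.2) := by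
    have h : MeasurePreserving fun z : ℂ => Complex.I * z := by
      have := (rotation ⟨Complex.I, by simp [Submonoid.unitSphere]⟩).measurePreserving
      exact this
    exact h.prod h
  refine .of_measurePreserving α₁ α₂ ?_ (measurePreserving_row i hφ) fun x => ?_
  · rw [conjTranspose_rowBlock, rowBlock_mul_rowBlock, ← rowBlock_one i]
    congr 1
    ext s t
    fin_cases s <;> fin_cases t <;> simp [Matrix.mul_apply]
  · ext ⟨j, s⟩ ⟨k, t⟩
    rw [rowBlock_mul_apply]
    by_cases h : j = i <;> fin_cases s <;> fin_cases t <;> simp [quatMatrix, h]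

lemma leftInvariant_rowBlock_J {n : ℕ} (α₁ α₂ : ℝ) (i : Fin n) :
    LeftInvariant n α₁ α₂ (rowBlock i !![0, 1; -1, 0]) := by
  have hφ : MeasurePreserving fun p : ℂ × ℂ =>
      (-(starRingEnd ℂ) p.2, (starRingEnd ℂ) p.1) := by
    have h1 : MeasurePreserving fun z : ℂ => (starRingEnd ℂ) z :=
      Complex.conjLIE.measurePreserving
    have h2 : MeasurePreserving fun z : ℂ => -(starRingEnd ℂ) z :=
      (Measure.measurePreserving_neg volume).comp h1
    exact (h2.prod h1).comp Measure.measurePreserving_swap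
  refine .of_measurePreserving α₁ α₂ ?_ (measurePreserving_row i hφ) fun x => ?_
  · rw [conjTranspose_rowBlock, rowBlock_mul_rowBlock, ← rowBlock_one i]
    congr 1
    ext s t
    fin_cases s <;> fin_cases t <;> simp [Matrix.mul_apply]
  · ext ⟨j, s⟩ ⟨k, t⟩
    rw [rowBlock_mul_apply]
    by_cases h : j = i <;> fin_cases s <;> fin_cases t <;> simp [quatMatrix, h]

/-- The quaternion units `1, I, J, K` as `2 × 2` complex matrices. -/
def quatUnit : Fin 4 → Matrix (Fin 2) (Fin 2) ℂ :=
  ![1, !![Complex.I, 0; 0, -Complex.I], !![0, 1; -1, 0], !![0, Complex.I; Complex.I, 0]]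

lemma quatUnit_mul_conjTranspose (k : Fin 4) : quatUnit k * (quatUnit k)ᴴ = 1 := by
  ext s t
  fin_cases k <;> fin_cases s <;> fin_cases t <;> simp [quatUnit, Matrix.mul_apply]

lemma det_quatUnit (k : Fin 4) : (quatUnit k).det = 1 := by
  fin_cases k <;> simp [quatUnit, det_fin_two]

lemma leftInvariant_quatUnit {n : ℕ} (α₁ α₂ : ℝ) (i : Fin n) (k : Fin 4) :
    LeftInvariant n α₁ α₂ (rowBlock i (quatUnit k)) := by
  fin_cases k
  · simpa [quatUnit, rowBlock_one] using LeftInvariant.one n α₁ α₂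
  · exact leftInvariant_rowBlock_I α₁ α₂ i
  · exact leftInvariant_rowBlock_J α₁ α₂ i
  · have := (leftInvariant_rowBlock_I α₁ α₂ i).mul (leftInvariant_rowBlock_J α₁ α₂ i)
    rw [rowBlock_mul_rowBlock] at this
    simpa [quatUnit] using this

lemma leftInvariant_rowBlock_neg_one {n : ℕ} (α₁ α₂ : ℝ) (i : Fin n) :
    LeftInvariant n α₁ α₂ (rowBlock i (-1)) := by
  have := (leftInvariant_rowBlock_J α₁ α₂ i).mul (leftInvariant_rowBlock_J α₁ α₂ i)
  rw [rowBlock_mul_rowBlock] at this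
  convert this using 2
  ext s t
  fin_cases s <;> fin_cases t <;> simp [Matrix.mul_apply]

end Invariance

section MinorAlgebra

lemma rowSel_mul {ι : Type*} [DecidableEq ι] [Fintype ι] (S : Finset ι) {U : Matrix ι ι ℂ}
    (G : Matrix ι ι ℂ) (hU : ∀ a b, a ∉ S ∨ b ∉ S → U a b = (1 : Matrix ι ι ℂ) a b) :
    rowSel S (U * G) = U * rowSel S G := by
  ext a b
  rw [rowSel_apply]
  split_ifs with ha
  · simp only [Matrix.mul_apply]
    refine Finset.sum_congr rfl fun c _ => ?_
    rw [rowSel_apply]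
    split_ifs with hc
    · rfl
    · have hac : a ≠ c := fun h => hc (h ▸ ha)
      rw [hU a c (Or.inr hc), one_apply_ne hac, zero_mul, zero_mul]
  · have h : ∀ c, U a c * rowSel S G c b = (1 : Matrix ι ι ℂ) a c * rowSel S G c b := fun c => by
      rw [hU a c (Or.inl ha)]
    rw [Matrix.mul_apply, Finset.sum_congr rfl fun c _ => h c, ← Matrix.mul_apply, Matrix.one_mul,
      rowSel_apply, if_neg ha]

lemma adjugate_unitary_mul {ι : Type*} [DecidableEq ι] [Fintype ι] {U : Matrix ι ι ℂ}
    (A : Matrix ι ι ℂ) (hU : U * Uᴴ = 1) (hdet : U.det = 1) :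
    adjugate (U * A) = adjugate A * Uᴴ := by
  have h : adjugate U = Uᴴ := by
    rw [← Matrix.mul_one (adjugate U), ← hU, ← Matrix.mul_assoc, adjugate_mul, hdet, one_smul,
      Matrix.one_mul]
  rw [adjugate_mul_distrib, h]

lemma adjugate_rowSel_apply_self {ι : Type*} [DecidableEq ι] [Fintype ι] {S : Finset ι}
    (G : Matrix ι ι ℂ) {a : ι} (ha : a ∈ S) :
    adjugate (rowSel S G) a a = (rowSel (S.erase a) G).det := by
  rw [adjugate_apply]
  congr 1
  ext b c
  by_cases h : b = a
  · subst h
    simp [rowSel_apply, Matrix.one_apply, Pi.single_apply, eq_comm]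
  · simp [rowSel_apply, h]

variable {n : ℕ}

/-- The trace of the `i`-th diagonal `2 × 2` block. -/
def blockTrace (i : Fin n) (X : Matrix (Fin n × Fin 2) (Fin n × Fin 2) ℂ) : ℂ :=
  ∑ s, X (i, s) (i, s)

/-- The trace of the product of the block `(i, j)` of the adjugate of `A` with the block `(j, i)`
of `A`. -/
def cofactorPairing (i j : Fin n) (A : Matrix (Fin n × Fin 2) (Fin n × Fin 2) ℂ) : ℂ :=
  ∑ s, ∑ d, adjugate A (i, s) (j, d) * A (j, d) (i, s)

lemma mul_conjTranspose_rowBlock_apply (X : Matrix (Fin n × Fin 2) (Fin n × Fin 2) ℂ) (i : Fin n)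
    (q : Matrix (Fin 2) (Fin 2) ℂ) (a : Fin n × Fin 2) (s : Fin 2) :
    (X * (rowBlock i q)ᴴ) a (i, s) = ∑ d, X a (i, d) * star (q s d) := by
  have h : (X * (rowBlock i q)ᴴ) a (i, s) = star ((rowBlock i q * Xᴴ) (i, s) a) := by
    rw [← conjTranspose_apply, conjTranspose_mul, conjTranspose_conjTranspose]
  rw [h, rowBlock_mul_apply]
  simp [mul_comm]

lemma mul_conjTranspose_rowSwap_apply (X : Matrix (Fin n × Fin 2) (Fin n × Fin 2) ℂ)
    (i j : Fin n) (a b : Fin n × Fin 2) :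
    (X * (rowSwap i j)ᴴ) a b = X a (Equiv.swap i j b.1, b.2) := by
  have h : (X * (rowSwap i j)ᴴ) a b = star ((rowSwap i j * Xᴴ) b a) := by
    rw [← conjTranspose_apply, conjTranspose_mul, conjTranspose_conjTranspose]
  rw [h, rowSwap_mul_apply, conjTranspose_apply, star_star]

lemma sum_blockTrace_rowBlock_quatUnit (i : Fin n)
    (A : Matrix (Fin n × Fin 2) (Fin n × Fin 2) ℂ) :
    ∑ k, blockTrace i (adjugate (rowBlock i (quatUnit k) * A)) *
      blockTrace i (rowBlock i (quatUnit k) * A) = 2 * cofactorPairing i i A := by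
  have hadj : ∀ k, adjugate (rowBlock i (quatUnit k) * A) =
      adjugate A * (rowBlock i (quatUnit k))ᴴ := fun k =>
    adjugate_unitary_mul A
      (by rw [conjTranspose_rowBlock, rowBlock_mul_rowBlock, quatUnit_mul_conjTranspose,
        rowBlock_one])
      (by rw [det_rowBlock, det_quatUnit])
  simp only [blockTrace, cofactorPairing, hadj, mul_conjTranspose_rowBlock_apply,
    rowBlock_mul_apply, if_true, Fin.sum_univ_two, Fin.sum_univ_four]
  simp [quatUnit]
  ring_nf
  simp only [Complex.I_sq]
  ring

lemma cofactorPairing_rowSwap (i j : Fin n) (A : Matrix (Fin n × Fin 2) (Fin n × Fin 2) ℂ) :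
    cofactorPairing i i (rowSwap i j * A) = cofactorPairing i j A := by
  simp only [cofactorPairing, adjugate_unitary_mul A (U := rowSwap i j)
    (by rw [conjTranspose_rowSwap, rowSwap_mul_self]) (det_rowSwap i j),
    mul_conjTranspose_rowSwap_apply, rowSwap_mul_apply, Equiv.swap_apply_left]

lemma sum_cofactorPairing {T : Finset (Fin n)} {i : Fin n} (hi : i ∈ T)
    (G : Matrix (Fin n × Fin 2) (Fin n × Fin 2) ℂ) :
    ∑ j ∈ T, cofactorPairing i j (rowSel (T ×ˢ Finset.univ) G) =
      2 * (rowSel (T ×ˢ Finset.univ) G).det := by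
  set A := rowSel (T ×ˢ Finset.univ) G with hA
  have h : ∀ s : Fin 2, ∑ j ∈ T, ∑ d, adjugate A (i, s) (j, d) * A (j, d) (i, s) = A.det := by
    intro s
    have h1 := congrFun (congrFun (adjugate_mul A) (i, s)) (i, s)
    rw [Matrix.mul_apply, Fintype.sum_prod_type, Matrix.smul_apply, one_apply_eq, smul_eq_mul,
      mul_one] at h1
    rw [← h1]
    refine Finset.sum_subset (Finset.subset_univ T) fun j _ hj => ?_
    refine Finset.sum_eq_zero fun d _ => ?_
    have hji : (j, d) ≠ (i, s) := fun h => hj (by rwa [show j = i from congrArg Prod.fst h])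
    rw [hA, rowSel_apply, if_neg (by simp [hj]), one_apply_ne hji, mul_zero]
  simp only [cofactorPairing]
  rw [Finset.sum_comm, Fin.sum_univ_two, h, h, two_mul]

lemma rowBlock_apply_eq_one {T : Finset (Fin n)} {i : Fin n} (hi : i ∈ T)
    (q : Matrix (Fin 2) (Fin 2) ℂ) (a b : Fin n × Fin 2)
    (h : a ∉ T ×ˢ Finset.univ ∨ b ∉ T ×ˢ (Finset.univ : Finset (Fin 2))) :
    rowBlock i q a b = (1 : Matrix (Fin n × Fin 2) (Fin n × Fin 2) ℂ) a b := by
  rw [rowBlock_apply, Matrix.one_apply]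
  simp only [Finset.mem_product, Finset.mem_univ, and_true] at h
  by_cases hab : a.1 = b.1
  · have hai : a.1 ≠ i := by
      rintro rfl
      rcases h with h | h
      · exact h hi
      · exact h (hab ▸ hi)
    simp [hab, hab ▸ hai, Matrix.one_apply, Prod.ext_iff]
  · simp [hab, Prod.ext_iff]

lemma rowSwap_apply_eq_one {T : Finset (Fin n)} {i j : Fin n} (hi : i ∈ T) (hj : j ∈ T)
    (a b : Fin n × Fin 2)
    (h : a ∉ T ×ˢ Finset.univ ∨ b ∉ T ×ˢ (Finset.univ : Finset (Fin 2))) :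
    rowSwap i j a b = (1 : Matrix (Fin n × Fin 2) (Fin n × Fin 2) ℂ) a b := by
  rw [← Matrix.mul_one (rowSwap i j), rowSwap_mul_apply]
  simp only [Finset.mem_product, Finset.mem_univ, and_true] at h
  by_cases ha : a.1 ∈ T
  · have hb : b.1 ∉ T := h.resolve_left (not_not.2 ha)
    have hs : Equiv.swap i j a.1 ∈ T := by
      rw [Equiv.swap_apply_def]
      split_ifs <;> assumption
    rw [one_apply_ne (fun h => hb (by rwa [← h])), one_apply_ne (fun h => hb (by rwa [← h]))]
  · rw [Equiv.swap_apply_of_ne_of_ne (fun h => ha (by rwa [h])) (fun h => ha (by rwa [h]))]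

lemma blockTrace_rowSel {T : Finset (Fin n)} {i : Fin n} (hi : i ∈ T)
    (G : Matrix (Fin n × Fin 2) (Fin n × Fin 2) ℂ) :
    blockTrace i (rowSel (T ×ˢ Finset.univ) G) = blockTrace i G := by
  simp [blockTrace, rowSel_apply, hi]

lemma blockTrace_adjugate_rowSel {T : Finset (Fin n)} {i : Fin n} (hi : i ∈ T)
    (G : Matrix (Fin n × Fin 2) (Fin n × Fin 2) ℂ) :
    blockTrace i (adjugate (rowSel (T ×ˢ Finset.univ) G)) =
      ∑ s, (rowSel ((T ×ˢ Finset.univ).erase (i, s)) G).det := by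
  refine Finset.sum_congr rfl fun s _ => ?_
  exact adjugate_rowSel_apply_self G (by simp [hi])

end MinorAlgebra

section Assembly

lemma card_mul_integral_minor {n : ℕ} (α₁ α₂ : ℝ) (hα₁ : 0 ≤ α₁) (hα₂ : α₁ + 3 * n + 1 < α₂)
    {T : Finset (Fin n)} {i : Fin n} (hi : i ∈ T) :
    (T.card : ℂ) * ∫ x, (quatSphericalWeight n α₁ α₂ x : ℂ) *
      ((∑ s, (rowSel ((T ×ˢ Finset.univ).erase (i, s)) (quatMatrix n x)).det) *
        blockTrace i (quatMatrix n x)) =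
      ∫ x, (quatSphericalWeight n α₁ α₂ x : ℂ) *
        (rowSel (T ×ˢ Finset.univ) (quatMatrix n x)).det := by
  have hF : Integrable fun x => (quatSphericalWeight n α₁ α₂ x : ℂ) *
      ((∑ s, (rowSel ((T ×ˢ Finset.univ).erase (i, s)) (quatMatrix n x)).det) *
        blockTrace i (quatMatrix n x)) := by
    simp only [blockTrace, Finset.sum_mul_sum]
    simp only [Finset.mul_sum]
    exact integrable_finsetSum _ fun s _ => integrable_finsetSum _ fun t _ =>
      integrable_minor_mul_apply n α₁ α₂ hα₁ hα₂ _ _ _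
  simp only [← blockTrace_adjugate_rowSel hi, ← blockTrace_rowSel hi (quatMatrix n _)] at hF ⊢
  have hunit := fun k => leftInvariant_quatUnit α₁ α₂ i k
    (fun G => blockTrace i (adjugate (rowSel (T ×ˢ Finset.univ) G)) *
      blockTrace i (rowSel (T ×ˢ Finset.univ) G)) hF
  simp only [rowSel_mul _ _ (rowBlock_apply_eq_one hi _)] at hunit
  have hdiag : ∀ x, (quatSphericalWeight n α₁ α₂ x : ℂ) *
      cofactorPairing i i (rowSel (T ×ˢ Finset.univ) (quatMatrix n x)) =
      (1 / 2) * ∑ k, (quatSphericalWeight n α₁ α₂ x : ℂ) *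
        (blockTrace i (adjugate (rowBlock i (quatUnit k) *
          rowSel (T ×ˢ Finset.univ) (quatMatrix n x))) *
        blockTrace i (rowBlock i (quatUnit k) * rowSel (T ×ˢ Finset.univ) (quatMatrix n x))) := by
    intro x
    rw [← Finset.mul_sum, sum_blockTrace_rowBlock_quatUnit]
    ring
  have hH : Integrable fun x => (quatSphericalWeight n α₁ α₂ x : ℂ) *
      cofactorPairing i i (rowSel (T ×ˢ Finset.univ) (quatMatrix n x)) := by
    simp only [hdiag]
    exact (integrable_finsetSum _ fun k _ => (hunit k).1).const_mul _
  have hHint : ∫ x, (quatSphericalWeight n α₁ α₂ x : ℂ) *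
      cofactorPairing i i (rowSel (T ×ˢ Finset.univ) (quatMatrix n x)) =
      2 * ∫ x, (quatSphericalWeight n α₁ α₂ x : ℂ) *
        (blockTrace i (adjugate (rowSel (T ×ˢ Finset.univ) (quatMatrix n x))) *
          blockTrace i (rowSel (T ×ˢ Finset.univ) (quatMatrix n x))) := by
    simp only [hdiag]
    rw [integral_const_mul, integral_finsetSum _ fun k _ => (hunit k).1,
      Finset.sum_congr rfl fun k _ => (hunit k).2]
    simp only [Finset.sum_const, Finset.card_univ, Fintype.card_fin, nsmul_eq_mul]
    push_cast
    ring
  have hswap := fun j => leftInvariant_rowSwap α₁ α₂ i j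
    (fun G => cofactorPairing i i (rowSel (T ×ˢ Finset.univ) G)) hH
  have hswap' : ∀ j ∈ T,
      Integrable (fun x => (quatSphericalWeight n α₁ α₂ x : ℂ) *
        cofactorPairing i j (rowSel (T ×ˢ Finset.univ) (quatMatrix n x))) ∧
      ∫ x, (quatSphericalWeight n α₁ α₂ x : ℂ) *
        cofactorPairing i j (rowSel (T ×ˢ Finset.univ) (quatMatrix n x)) =
      ∫ x, (quatSphericalWeight n α₁ α₂ x : ℂ) *
        cofactorPairing i i (rowSel (T ×ˢ Finset.univ) (quatMatrix n x)) := by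
    intro j hj
    have := hswap j
    simpa only [rowSel_mul _ _ (rowSwap_apply_eq_one hi hj), cofactorPairing_rowSwap] using this
  have hsum : ∑ j ∈ T, ∫ x, (quatSphericalWeight n α₁ α₂ x : ℂ) *
      cofactorPairing i j (rowSel (T ×ˢ Finset.univ) (quatMatrix n x)) =
      2 * ∫ x, (quatSphericalWeight n α₁ α₂ x : ℂ) *
        (rowSel (T ×ˢ Finset.univ) (quatMatrix n x)).det := by
    rw [← integral_finsetSum _ fun j hj => (hswap' j hj).1, ← integral_const_mul]
    congr 1
    ext x
    rw [← Finset.mul_sum, sum_cofactorPairing hi]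
    ring
  rw [Finset.sum_congr rfl fun j hj => (hswap' j hj).2, hHint, Finset.sum_const,
    nsmul_eq_mul] at hsum
  linear_combination hsum / 2

lemma sum_integral_minor_mul_blockTrace {n : ℕ} (α₁ α₂ : ℝ) (hα₁ : 0 ≤ α₁)
    (hα₂ : α₁ + 3 * n + 1 < α₂) {T : Finset (Fin n)} (hT : T.Nonempty) :
    ∑ i ∈ T, ∫ x, (quatSphericalWeight n α₁ α₂ x : ℂ) *
      ((∑ s, (rowSel ((T ×ˢ Finset.univ).erase (i, s)) (quatMatrix n x)).det) *
        blockTrace i (quatMatrix n x)) =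
      ∫ x, (quatSphericalWeight n α₁ α₂ x : ℂ) *
        (rowSel (T ×ˢ Finset.univ) (quatMatrix n x)).det := by
  have hcard : (T.card : ℂ) ≠ 0 := Nat.cast_ne_zero.2 hT.card_ne_zero
  refine mul_left_cancel₀ hcard ?_
  rw [Finset.mul_sum,
    Finset.sum_congr rfl fun i hi => card_mul_integral_minor α₁ α₂ hα₁ hα₂ hi, Finset.sum_const,
    nsmul_eq_mul]

lemma LeftInvariant.integral_eq_zero {n : ℕ} {α₁ α₂ : ℝ}
    {U : Matrix (Fin n × Fin 2) (Fin n × Fin 2) ℂ} (hU : LeftInvariant n α₁ α₂ U)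
    {F : Matrix (Fin n × Fin 2) (Fin n × Fin 2) ℂ → ℂ}
    (hF : Integrable fun x => (quatSphericalWeight n α₁ α₂ x : ℂ) * F (quatMatrix n x))
    (hneg : ∀ G, F (U * G) = -F G) :
    ∫ x, (quatSphericalWeight n α₁ α₂ x : ℂ) * F (quatMatrix n x) = 0 := by
  have h := (hU F hF).2
  simp only [hneg, mul_neg, integral_neg] at h
  exact self_eq_neg.1 h.symm

lemma det_rowSel_diagonal_mul {ι : Type*} [DecidableEq ι] [Fintype ι] (S : Finset ι) (d : ι → ℂ)
    (G : Matrix ι ι ℂ) :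
    (rowSel S (diagonal d * G)).det = (∏ a ∈ S, d a) * (rowSel S G).det := by
  have h : rowSel S (diagonal d * G) =
      diagonal (fun a => if a ∈ S then d a else 1) * rowSel S G := by
    ext a b
    simp only [rowSel_apply, diagonal_mul]
    split_ifs <;> simp
  rw [h, det_mul, det_diagonal]
  simp

lemma rowBlock_neg_one_eq_diagonal {n : ℕ} (j : Fin n) :
    rowBlock j (-1) = diagonal fun a : Fin n × Fin 2 => if a.1 = j then -1 else 1 := by
  ext a b
  rw [rowBlock_apply, diagonal_apply]
  by_cases h1 : a.1 = b.1 <;> by_cases h2 : a.2 = b.2 <;>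
    simp [Prod.ext_iff, h1, h2, Matrix.one_apply]

lemma det_rowSel_rowBlock_neg_one {n : ℕ} (j : Fin n) (S : Finset (Fin n × Fin 2))
    (G : Matrix (Fin n × Fin 2) (Fin n × Fin 2) ℂ) :
    (rowSel S (rowBlock j (-1) * G)).det =
      (if (j, 0) ∈ S ↔ (j, 1) ∈ S then 1 else -1) * (rowSel S G).det := by
  rw [rowBlock_neg_one_eq_diagonal, det_rowSel_diagonal_mul]
  congr 1
  have h : ∏ a ∈ S, (if a.1 = j then (-1 : ℂ) else 1) =
      ∏ s : Fin 2, if (j, s) ∈ S then -1 else 1 := by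
    rw [← Fintype.prod_ite_mem, Fintype.prod_prod_type,
      Fintype.prod_eq_single j fun k hk => by simp [hk]]
    simp
  rw [h, Fin.prod_univ_two]
  by_cases h0 : (j, 0) ∈ S <;> by_cases h1 : (j, 1) ∈ S <;> simp [h0, h1]

lemma blockTrace_rowBlock_neg_one {n : ℕ} (i j : Fin n)
    (G : Matrix (Fin n × Fin 2) (Fin n × Fin 2) ℂ) :
    blockTrace i (rowBlock j (-1) * G) = (if i = j then -1 else 1) * blockTrace i G := by
  simp only [blockTrace, rowBlock_neg_one_eq_diagonal, diagonal_mul, Finset.mul_sum]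

lemma integral_minor_eq_zero {n : ℕ} (α₁ α₂ : ℝ) (hα₁ : 0 ≤ α₁) (hα₂ : α₁ + 3 * n + 1 < α₂)
    {S : Finset (Fin n × Fin 2)} {j : Fin n} (h : ¬((j, 0) ∈ S ↔ (j, 1) ∈ S)) :
    ∫ x, (quatSphericalWeight n α₁ α₂ x : ℂ) * (rowSel S (quatMatrix n x)).det = 0 :=
  (leftInvariant_rowBlock_neg_one α₁ α₂ j).integral_eq_zero (F := fun G => (rowSel S G).det)
    (integrable_minor n α₁ α₂ hα₁ hα₂ S) fun G => by simp [det_rowSel_rowBlock_neg_one, h]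

lemma integrable_minor_mul_blockTrace {n : ℕ} (α₁ α₂ : ℝ) (hα₁ : 0 ≤ α₁)
    (hα₂ : α₁ + 3 * n + 1 < α₂) (S : Finset (Fin n × Fin 2)) (i : Fin n) :
    Integrable fun x => (quatSphericalWeight n α₁ α₂ x : ℂ) *
      ((rowSel S (quatMatrix n x)).det * blockTrace i (quatMatrix n x)) := by
  simp only [blockTrace, Finset.mul_sum]
  exact integrable_finsetSum _ fun s _ => integrable_minor_mul_apply n α₁ α₂ hα₁ hα₂ S _ _

lemma integral_minor_mul_blockTrace_eq_zero {n : ℕ} (α₁ α₂ : ℝ) (hα₁ : 0 ≤ α₁)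
    (hα₂ : α₁ + 3 * n + 1 < α₂) {S : Finset (Fin n × Fin 2)} {i j : Fin n}
    (h : ((j, 0) ∈ S ↔ (j, 1) ∈ S) ↔ i = j) :
    ∫ x, (quatSphericalWeight n α₁ α₂ x : ℂ) *
      ((rowSel S (quatMatrix n x)).det * blockTrace i (quatMatrix n x)) = 0 := by
  refine (leftInvariant_rowBlock_neg_one α₁ α₂ j).integral_eq_zero
    (F := fun G => (rowSel S G).det * blockTrace i G)
    (integrable_minor_mul_blockTrace α₁ α₂ hα₁ hα₂ S i) fun G => ?_
  rw [det_rowSel_rowBlock_neg_one, blockTrace_rowBlock_neg_one]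
  simp only [h]
  split_ifs <;> ring

/-- The coefficient of the minor on `S` in the expansion of `det (z - G)`. -/
def minorCoeff {ι : Type*} [DecidableEq ι] [Fintype ι] (z : ℂ) (S : Finset ι) : ℂ :=
  ∏ a, if a ∈ S then -1 else z

lemma minorCoeff_erase {ι : Type*} [DecidableEq ι] [Fintype ι] (z : ℂ) {S : Finset ι} {a : ι}
    (ha : a ∈ S) : minorCoeff z (S.erase a) = -z * minorCoeff z S := by
  have h : ∀ b ∈ Finset.univ.erase a,
      (if b ∈ S.erase a then -1 else z) = if b ∈ S then -1 else z := fun b hb => by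
    simp [Finset.ne_of_mem_erase hb]
  unfold minorCoeff
  rw [← Finset.mul_prod_erase _ _ (Finset.mem_univ a), Finset.prod_congr rfl h,
    ← Finset.mul_prod_erase (a := a) _ (fun b => if b ∈ S then -1 else z) (Finset.mem_univ a)]
  simp [ha]

lemma det_smul_one_sub {ι : Type*} [DecidableEq ι] [Fintype ι] (z : ℂ) (G : Matrix ι ι ℂ) :
    (z • (1 : Matrix ι ι ℂ) - G).det = ∑ S, minorCoeff z S * (rowSel S G).det := by
  have h := (detRowAlternating (R := ℂ) (n := ι)).toMultilinearMap.map_add_univ (-G)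
    (z • (1 : Matrix ι ι ℂ))
  rw [sub_eq_neg_add]
  refine h.trans (Finset.sum_congr rfl fun S _ => ?_)
  have hS : (S.piecewise (-G) (z • (1 : Matrix ι ι ℂ)) : Matrix ι ι ℂ) =
      diagonal (fun a => if a ∈ S then -1 else z) * rowSel S G := by
    ext a b
    rw [diagonal_mul, rowSel_apply]
    by_cases ha : a ∈ S <;> simp [Finset.piecewise, ha]
  refine (congrArg det hS).trans ?_
  rw [det_mul, det_diagonal, minorCoeff]

lemma sum_eq_sum_product_univ {n : ℕ} {f : Finset (Fin n × Fin 2) → ℂ}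
    (hf : ∀ S j, ¬((j, 0) ∈ S ↔ (j, 1) ∈ S) → f S = 0) :
    ∑ S, f S = ∑ T : Finset (Fin n), f (T ×ˢ Finset.univ) := by
  refine (Finset.sum_of_injOn (fun T => T ×ˢ Finset.univ) ?_ (by simp) ?_ fun _ _ => rfl).symm
  · intro T _ T' _ h
    ext j
    simpa using Finset.ext_iff.1 h (j, 0)
  · intro S _ hS
    by_contra hne
    refine hS ⟨Finset.univ.filter fun j => (j, 0) ∈ S, by simp, ?_⟩
    ext ⟨j, s⟩
    have : (j, 0) ∈ S ↔ (j, 1) ∈ S := by_contra fun h => hne (hf S j h)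
    fin_cases s <;> simp [this]

lemma sum_eq_sum_product_univ_erase {n : ℕ} (i : Fin n) {f : Finset (Fin n × Fin 2) → ℂ}
    (hf : ∀ S j, (((j, 0) ∈ S ↔ (j, 1) ∈ S) ↔ i = j) → f S = 0) :
    ∑ S, f S = ∑ T : Finset (Fin n) with i ∈ T, ∑ s, f ((T ×ˢ Finset.univ).erase (i, s)) := by
  rw [← Finset.sum_product']
  refine (Finset.sum_of_injOn
    (fun p : Finset (Fin n) × Fin 2 => (p.1 ×ˢ Finset.univ).erase (i, p.2)) ?_ (by simp) ?_
    fun _ _ => rfl).symm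
  · rintro ⟨T, s⟩ hT ⟨T', s'⟩ hT' h
    simp only [Finset.coe_product, Set.mem_prod, Finset.mem_coe, Finset.mem_filter,
      Finset.mem_univ, true_and, and_true] at hT hT'
    have hmem := fun a => Finset.ext_iff.1 h a
    simp only [Finset.mem_erase, Finset.mem_product, Finset.mem_univ, and_true, ne_eq] at hmem
    have hs : s = s' := by
      have := hmem (i, s)
      simpa [hT'] using this
    refine Prod.ext (Finset.ext fun j => ?_) hs
    by_cases hj : j = i
    · simp [hj, hT, hT']
    · simpa [hj] using hmem (j, 0)
  · intro S _ hS
    by_contra hne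
    have hS' : ∀ j, ¬(((j, 0) ∈ S ↔ (j, 1) ∈ S) ↔ i = j) := fun j h => hne (hf S j h)
    refine hS ⟨(Finset.univ.filter fun j => (j, 0) ∈ S ∨ (j, 1) ∈ S,
      if (i, 0) ∈ S then 1 else 0), ?_, ?_⟩
    · have := hS' i
      simp only [Finset.coe_product, Finset.coe_filter, Finset.coe_univ, Set.mem_prod,
        Set.mem_ofPred_eq, Finset.mem_filter, Finset.mem_univ, Set.mem_univ, true_and, and_true]
      tauto
    · ext ⟨j, s⟩
      have hj := hS' j
      by_cases hij : j = i
      · subst hij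
        by_cases h0 : (j, 0) ∈ S <;> by_cases h1 : (j, 1) ∈ S <;> fin_cases s <;> simp_all
      · have : i ≠ j := fun h => hij h.symm
        by_cases h0 : (j, 0) ∈ S <;> by_cases h1 : (j, 1) ∈ S <;> fin_cases s <;> simp_all

lemma trace_eq_sum_blockTrace {n : ℕ} (G : Matrix (Fin n × Fin 2) (Fin n × Fin 2) ℂ) :
    G.trace = ∑ i, blockTrace i G := by
  simp only [Matrix.trace, Matrix.diag, Fintype.sum_prod_type, blockTrace]

lemma integral_det_smul_one_sub {n : ℕ} (α₁ α₂ : ℝ) (hα₁ : 0 ≤ α₁)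
    (hα₂ : α₁ + 3 * n + 1 < α₂) (z : ℂ) :
    ∫ x, (quatSphericalWeight n α₁ α₂ x : ℂ) *
        (z • (1 : Matrix (Fin n × Fin 2) (Fin n × Fin 2) ℂ) - quatMatrix n x).det =
      ∑ T : Finset (Fin n), minorCoeff z (T ×ˢ (Finset.univ : Finset (Fin 2))) *
        ∫ x, (quatSphericalWeight n α₁ α₂ x : ℂ) *
          (rowSel (T ×ˢ Finset.univ) (quatMatrix n x)).det := by
  simp only [det_smul_one_sub, Finset.mul_sum, mul_left_comm _ (minorCoeff z _)]
  rw [integral_finsetSum _ fun S _ => (integrable_minor n α₁ α₂ hα₁ hα₂ S).const_mul _]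
  simp only [integral_const_mul]
  refine sum_eq_sum_product_univ fun S j h => ?_
  rw [integral_minor_eq_zero α₁ α₂ hα₁ hα₂ h, mul_zero]

lemma integral_det_smul_one_sub_mul_trace {n : ℕ} (α₁ α₂ : ℝ) (hα₁ : 0 ≤ α₁)
    (hα₂ : α₁ + 3 * n + 1 < α₂) (z : ℂ) :
    ∫ x, (quatSphericalWeight n α₁ α₂ x : ℂ) *
        ((z • (1 : Matrix (Fin n × Fin 2) (Fin n × Fin 2) ℂ) - quatMatrix n x).det *
          (quatMatrix n x).trace) =
      -z * ∑ T : Finset (Fin n) with T.Nonempty,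
        minorCoeff z (T ×ˢ (Finset.univ : Finset (Fin 2))) *
          ∫ x, (quatSphericalWeight n α₁ α₂ x : ℂ) *
            (rowSel (T ×ˢ Finset.univ) (quatMatrix n x)).det := by
  have hexp : ∀ x, (quatSphericalWeight n α₁ α₂ x : ℂ) *
      ((z • (1 : Matrix (Fin n × Fin 2) (Fin n × Fin 2) ℂ) - quatMatrix n x).det *
        (quatMatrix n x).trace) =
      ∑ i, ∑ S, minorCoeff z S * ((quatSphericalWeight n α₁ α₂ x : ℂ) *
        ((rowSel S (quatMatrix n x)).det * blockTrace i (quatMatrix n x))) := by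
    intro x
    rw [det_smul_one_sub, trace_eq_sum_blockTrace, Finset.sum_mul_sum, Finset.sum_comm]
    simp only [Finset.mul_sum]
    exact Finset.sum_congr rfl fun i _ => Finset.sum_congr rfl fun S _ => by ring
  have hint := fun (i : Fin n) (S : Finset (Fin n × Fin 2)) =>
    integrable_minor_mul_blockTrace α₁ α₂ hα₁ hα₂ S i
  have hblock : ∀ i : Fin n, ∫ x, ∑ S, minorCoeff z S * ((quatSphericalWeight n α₁ α₂ x : ℂ) *
        ((rowSel S (quatMatrix n x)).det * blockTrace i (quatMatrix n x))) =
      ∑ T : Finset (Fin n) with i ∈ T, -z * minorCoeff z (T ×ˢ (Finset.univ : Finset (Fin 2))) *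
        ∫ x, (quatSphericalWeight n α₁ α₂ x : ℂ) *
          ((∑ s, (rowSel ((T ×ˢ Finset.univ).erase (i, s)) (quatMatrix n x)).det) *
            blockTrace i (quatMatrix n x)) := by
    intro i
    rw [integral_finsetSum _ fun S _ => (hint i S).const_mul _]
    simp only [integral_const_mul]
    rw [sum_eq_sum_product_univ_erase i fun S j h => by
      rw [integral_minor_mul_blockTrace_eq_zero α₁ α₂ hα₁ hα₂ h, mul_zero]]
    refine Finset.sum_congr rfl fun T hT => ?_
    simp only [Finset.sum_mul, Finset.mul_sum]
    rw [integral_finsetSum _ fun s _ => hint i _, Finset.mul_sum]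
    refine Finset.sum_congr rfl fun s _ => ?_
    rw [minorCoeff_erase z (by simpa using hT)]
  simp only [hexp]
  rw [integral_finsetSum _ fun i _ => integrable_finsetSum _ fun S _ => (hint i S).const_mul _,
    Finset.sum_congr rfl fun i _ => hblock i, Finset.mul_sum,
    Finset.sum_comm' (t' := Finset.univ.filter Finset.Nonempty) (s' := fun T => T)
      (fun i T => by simpa using fun h => ⟨i, h⟩)]
  refine Finset.sum_congr rfl fun T hT => ?_
  rw [← Finset.mul_sum, sum_integral_minor_mul_blockTrace α₁ α₂ hα₁ hα₂ (by simpa using hT),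
    mul_assoc]

end Assembly

/-- The odd-degree skew orthogonal polynomial for the quaternion real spherical ensemble
is a monomial: `z ⟨det (z I - G)⟩ + ⟨det (z I - G) Tr G⟩ = z^(2n+1)`. -/
theorem quatSpherical_odd_skew_orthogonal_poly (n : ℕ) (hn : 0 < n)
    (α₁ α₂ : ℝ) (hα₁ : 0 ≤ α₁) (hα₂ : α₁ + 3 * n + 1 < α₂) (z : ℂ) :
    z * ((∫ x : Fin n → Fin n → ℂ × ℂ,
          (quatSphericalWeight n α₁ α₂ x : ℂ) *
            (z • (1 : Matrix (Fin n × Fin 2) (Fin n × Fin 2) ℂ) - quatMatrix n x).det) /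
        ((∫ x : Fin n → Fin n → ℂ × ℂ, quatSphericalWeight n α₁ α₂ x : ℝ) : ℂ))
      + (∫ x : Fin n → Fin n → ℂ × ℂ,
          (quatSphericalWeight n α₁ α₂ x : ℂ) *
            ((z • (1 : Matrix (Fin n × Fin 2) (Fin n × Fin 2) ℂ) - quatMatrix n x).det
              * (quatMatrix n x).trace)) /
        ((∫ x : Fin n → Fin n → ℂ × ℂ, quatSphericalWeight n α₁ α₂ x : ℝ) : ℂ)
      = z ^ (2 * n + 1) := by
  have hw : ((∫ x : Fin n → Fin n → ℂ × ℂ, quatSphericalWeight n α₁ α₂ x : ℝ) : ℂ) ≠ 0 :=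
    Complex.ofReal_ne_zero.2 (integral_quatSphericalWeight_pos n α₁ α₂ hα₁ hα₂).ne'
  rw [mul_div_assoc', ← add_div, div_eq_iff hw, integral_det_smul_one_sub α₁ α₂ hα₁ hα₂ z,
    integral_det_smul_one_sub_mul_trace α₁ α₂ hα₁ hα₂ z]
  have hempty : (Finset.univ.filter fun T : Finset (Fin n) => ¬T.Nonempty) = {∅} := by
    ext T
    simp [Finset.not_nonempty_iff_eq_empty]
  have hone : ∀ G : Matrix (Fin n × Fin 2) (Fin n × Fin 2) ℂ, rowSel ∅ G = 1 := fun G => by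
    ext a b
    simp [rowSel_apply]
  rw [← Finset.sum_filter_add_sum_filter_not Finset.univ Finset.Nonempty, hempty,
    Finset.sum_singleton, Finset.empty_product]
  simp only [hone, det_one, mul_one, integral_complex_ofReal, minorCoeff, Finset.notMem_empty,
    if_false, Finset.prod_const, Finset.card_univ, Fintype.card_prod, Fintype.card_fin]
  ring
end
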